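/- arXiv:2201.12783 — 4 statements merged into one kernel-verified Lean document; each statement's English description precedes it below -/
import Mathlib

section
/- Let g ≥ 2 be a fixed integer. Then the number V_g(x) of integers n ≤ x representable as n = p + g^(m₁²) + g^(m₂²) with p prime and m₁, m₂ natural numbers satisfies V_g(x) ≥ c_g·x for some constant c_g > 0 (depending only on g) and all sufficiently large x. -/
open scoped Classical

/-! Let `T` be the set of values `g ^ (m₁ ^ 2) + g ^ (m₂ ^ 2)` with `m₁, m₂ ≤ M`, where `M` is of
order `√(log y)`, so that `#T` is of order `log y`. By Cauchy–Schwarz the sumset of `T` with the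
primes up to `y` has at least `(π(y) * #T) ^ 2 / E` elements, where `E` is the additive energy. The
diagonal contributes `π(y) * #T` to `E`, and Selberg's sieve bounds the number of prime pairs with
difference `h ≠ 0` by a constant times `y / (log y) ^ 2 * ∏_{p ∣ h} (1 + 1 / p) ^ 2`. So everything
reduces to showing that this product is bounded on average over the differences of elements of `T`.

By the distribution of primes, the product is at most a constant times `1 + ∑ p ^ (δ - 1)`, summed
over the prime divisors of `h` of size `O(log y)`, so one has to count the solutions of
`g ^ (m ^ 2) ≡ c [MOD p]`. They satisfy a quadratic congruence modulo the order of `g`, hence are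
few when the order is large. Primes modulo which `g` has small order are themselves rare, since they
divide some `g ^ e - 1` with `e` small. -/

namespace Romanoff

open Finset Real Filter

/-! ### Periodic functions -/

section Periodic

variable {R ι : Type*} [CommSemiring R]

/-- The Chinese remainder theorem says that functions with coprime periods are uncorrelated. -/
lemma sum_range_mul_of_coprime {a b : ℕ} (ha : 0 < a) (hb : 0 < b) (hab : a.Coprime b)
    {f k : ℕ → R} (hf : Function.Periodic f a) (hk : Function.Periodic k b) :
    ∑ n ∈ range (a * b), f n * k n = (∑ n ∈ range a, f n) * ∑ n ∈ range b, k n := by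
  rw [sum_mul_sum, ← sum_product']
  refine sum_nbij' (fun n ↦ (n % a, n % b)) (fun u ↦ Nat.chineseRemainder hab u.1 u.2)
    ?_ ?_ ?_ ?_ ?_
  · intro n _
    simp [Nat.mod_lt _ ha, Nat.mod_lt _ hb]
  · exact fun u _ ↦ mem_range.2 (Nat.chineseRemainder_lt_mul hab u.1 u.2 ha.ne' hb.ne')
  · intro n hn
    have hmod : Nat.chineseRemainder hab (n % a) (n % b) ≡ n [MOD a * b] :=
      (Nat.modEq_and_modEq_iff_modEq_mul hab).1
        ⟨(Nat.chineseRemainder hab _ _).2.1.trans (Nat.mod_modEq n a),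
          (Nat.chineseRemainder hab _ _).2.2.trans (Nat.mod_modEq n b)⟩
    exact hmod.eq_of_lt_of_lt (Nat.chineseRemainder_lt_mul hab _ _ ha.ne' hb.ne')
      (mem_range.1 hn)
  · rintro ⟨u, v⟩ huv
    simp only [mem_product, mem_range] at huv
    have hres := (Nat.chineseRemainder hab u v).2
    exact Prod.ext (Eq.trans hres.1 (Nat.mod_eq_of_lt huv.1))
      (Eq.trans hres.2 (Nat.mod_eq_of_lt huv.2))
  · intro n _
    rw [hf.map_mod_nat, hk.map_mod_nat]

lemma periodic_of_dvd {α : Type*} {f : ℕ → α} {a b : ℕ} (hf : Function.Periodic f a)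
    (hab : a ∣ b) : Function.Periodic f b := by
  obtain ⟨c, rfl⟩ := hab
  rw [mul_comm]
  exact hf.nat_mul c

lemma periodic_prod_of_dvd {s : Finset ι} {m : ι → ℕ} {q : ℕ} (hm : ∀ i ∈ s, m i ∣ q)
    {F : ι → ℕ → R} (hF : ∀ i ∈ s, Function.Periodic (F i) (m i)) :
    Function.Periodic (fun n ↦ ∏ i ∈ s, F i n) q := by
  simpa only [prod_fn] using
    Finset.periodic_prod s fun i hi ↦ periodic_of_dvd (hF i hi) (hm i hi)

lemma sum_range_prod_of_pairwise_coprime {s : Finset ι} {m : ι → ℕ} (hm : ∀ i ∈ s, 0 < m i)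
    (hcop : (s : Set ι).Pairwise (Function.onFun Nat.Coprime m)) {F : ι → ℕ → R}
    (hF : ∀ i ∈ s, Function.Periodic (F i) (m i)) :
    ∑ n ∈ range (∏ i ∈ s, m i), ∏ i ∈ s, F i n = ∏ i ∈ s, ∑ n ∈ range (m i), F i n := by
  induction s using Finset.induction_on with
  | empty => simp
  | insert j s hj ih =>
    simp only [forall_mem_insert] at hm hF
    have hcop_j : (m j).Coprime (∏ i ∈ s, m i) :=
      Nat.Coprime.prod_right fun i hi ↦ hcop (mem_insert_self _ _) (mem_insert_of_mem hi)
        (ne_of_mem_of_not_mem hi hj).symm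
    simp only [prod_insert hj]
    rw [sum_range_mul_of_coprime hm.1 (prod_pos hm.2) hcop_j hF.1
      (periodic_prod_of_dvd (fun _ ↦ dvd_prod_of_mem m) hF.2), ih hm.2 (hcop.mono (by simp)) hF.2]

lemma sum_range_le_of_periodic {q : ℕ} (hq : 0 < q) {f : ℕ → ℝ} (hf : Function.Periodic f q)
    {B S : ℝ} (hB : ∀ n, |f n| ≤ B) (hS : ∑ n ∈ range q, f n = q * S) (hS0 : 0 ≤ S) (N : ℕ) :
    ∑ n ∈ range N, f n ≤ N * S + q * B := by
  induction N using Nat.strong_induction_on with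
  | _ N ih =>
    obtain hN | hN := lt_or_ge N q
    · have hB0 : 0 ≤ B := (abs_nonneg _).trans (hB 0)
      calc ∑ n ∈ range N, f n ≤ ∑ _n ∈ range N, B :=
            sum_le_sum fun n _ ↦ (le_abs_self _).trans (hB n)
        _ = N * B := by simp
        _ ≤ q * B := by gcongr
        _ ≤ N * S + q * B := le_add_of_nonneg_left (by positivity)
    · obtain ⟨k, rfl⟩ := Nat.exists_eq_add_of_le hN
      have hshift : ∑ n ∈ range k, f (q + n) = ∑ n ∈ range k, f n :=
        sum_congr rfl fun n _ ↦ by rw [add_comm]; exact hf n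
      rw [sum_range_add, hS, hshift]
      push_cast
      linarith [ih k (by omega)]

end Periodic

/-! ### Selberg's sieve in dual form -/

section Sieve

/-- The number of residue classes modulo `p` removed by the predicate `A p`. -/
noncomputable def excludedCount (A : ℕ → ℕ → Prop) (p : ℕ) : ℕ := #{n ∈ range p | A p n}

/-- For each prime `p` of `P`, the predicate `A p` describes a union of residue classes modulo `p`,
not all of them, whose elements a sieve removes. -/
structure IsSieve (P : Finset ℕ) (A : ℕ → ℕ → Prop) : Prop where
  prime : ∀ p ∈ P, p.Prime
  periodic : ∀ p ∈ P, Function.Periodic (A p) p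
  excludedCount_lt : ∀ p ∈ P, excludedCount A p < p

/-- The density ratio `ω(p) / (p - ω(p))` of Selberg's sieve, where `ω(p) = excludedCount A p`. -/
noncomputable def sieveWeight (A : ℕ → ℕ → Prop) (p : ℕ) : ℝ :=
  excludedCount A p / (p - excludedCount A p)

/-- The local factor of the dual sieve: `-1` on the removed classes modulo `p`, and on the other
classes the constant that makes the mean over a period vanish. -/
noncomputable def sieveFactor (A : ℕ → ℕ → Prop) (p n : ℕ) : ℝ :=
  if A p n then -1 else sieveWeight A p

variable {A : ℕ → ℕ → Prop} {P T U : Finset ℕ} {D p : ℕ}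

lemma sieveWeight_nonneg (h : excludedCount A p < p) : 0 ≤ sieveWeight A p :=
  div_nonneg (Nat.cast_nonneg _) (sub_nonneg.2 (by exact_mod_cast h.le))

lemma periodic_sieveFactor (h : Function.Periodic (A p) p) :
    Function.Periodic (sieveFactor A p) p := by
  intro n
  simp only [sieveFactor, h n]

lemma abs_sieveFactor_le (h : excludedCount A p < p) (n : ℕ) : |sieveFactor A p n| ≤ p := by
  have hlt : (excludedCount A p : ℝ) + 1 ≤ p := by exact_mod_cast h
  have hcount : (0 : ℝ) ≤ excludedCount A p := Nat.cast_nonneg _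
  unfold sieveFactor
  split_ifs
  · rw [abs_neg, abs_one]
    linarith
  · rw [abs_of_nonneg (sieveWeight_nonneg h), sieveWeight, div_le_iff₀ (by linarith)]
    nlinarith [hcount]

lemma sum_range_ite_excluded (A : ℕ → ℕ → Prop) (p : ℕ) (a b : ℝ) :
    ∑ n ∈ range p, (if A p n then a else b)
      = excludedCount A p * a + (p - excludedCount A p) * b := by
  have hcard : (excludedCount A p : ℝ) + #{n ∈ range p | ¬ A p n} = p := by
    exact_mod_cast (card_filter_add_card_filter_not (A p)).trans (card_range p)
  rw [sum_ite, sum_const, sum_const, nsmul_eq_mul, nsmul_eq_mul, ← eq_sub_of_add_eq' hcard,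
    excludedCount]

lemma sum_sieveFactor (h : excludedCount A p < p) : ∑ n ∈ range p, sieveFactor A p n = 0 := by
  have hne : (p : ℝ) - excludedCount A p ≠ 0 := sub_ne_zero.2 (by exact_mod_cast h.ne')
  simp only [sieveFactor, sum_range_ite_excluded, sieveWeight]
  field_simp
  ring

lemma sum_sieveFactor_sq (h : excludedCount A p < p) :
    ∑ n ∈ range p, sieveFactor A p n ^ 2 = p * sieveWeight A p := by
  have hne : (p : ℝ) - excludedCount A p ≠ 0 := sub_ne_zero.2 (by exact_mod_cast h.ne')
  simp only [sieveFactor, ite_pow, sum_range_ite_excluded, sieveWeight]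
  field_simp
  ring

/-- The squarefree numbers at most `D` composed of primes from `P`, encoded as sets of primes. -/
noncomputable def levelSets (P : Finset ℕ) (D : ℕ) : Finset (Finset ℕ) :=
  {T ∈ P.powerset | ∏ p ∈ T, p ≤ D}

lemma mem_levelSets : T ∈ levelSets P D ↔ T ⊆ P ∧ ∏ p ∈ T, p ≤ D := by simp [levelSets]

lemma card_levelSets_le (hP : ∀ p ∈ P, p.Prime) (D : ℕ) : #(levelSets P D) ≤ D := by
  have hinj : #(levelSets P D) ≤ #(Icc 1 D) := by
    refine card_le_card_of_injOn (fun T ↦ ∏ p ∈ T, p) (fun T hT ↦ ?_) fun T hT U hU hTU ↦ ?_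
    · obtain ⟨hTP, hTD⟩ := mem_levelSets.1 hT
      exact mem_coe.2 (mem_Icc.2 ⟨prod_pos fun p hp ↦ (hP p (hTP hp)).pos, hTD⟩)
    · dsimp only at hTU
      rw [← Nat.primeFactors_prod fun p hp ↦ hP p ((mem_levelSets.1 hT).1 hp), hTU,
        Nat.primeFactors_prod fun p hp ↦ hP p ((mem_levelSets.1 hU).1 hp)]
  simpa using hinj

lemma prod_union_le_mul (hT : ∀ p ∈ T, 0 < p) (U : Finset ℕ) :
    ∏ p ∈ T ∪ U, p ≤ (∏ p ∈ T, p) * ∏ p ∈ U, p := by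
  rw [← prod_union_inter]
  exact Nat.le_mul_of_pos_right _ (prod_pos fun p hp ↦ hT p (mem_inter.1 hp).1)

namespace IsSieve

lemma mono (hA : IsSieve P A) (h : T ⊆ P) : IsSieve T A where
  prime p hp := hA.prime p (h hp)
  periodic p hp := hA.periodic p (h hp)
  excludedCount_lt p hp := hA.excludedCount_lt p (h hp)

lemma sum_prod_mul_prod (hA : IsSieve (T ∪ U) A) :
    ∑ n ∈ range (∏ p ∈ T ∪ U, p), (∏ p ∈ T, sieveFactor A p n) * ∏ p ∈ U, sieveFactor A p n
      = (∏ p ∈ T ∪ U, p : ℕ) * if T = U then ∏ p ∈ T, sieveWeight A p else 0 := by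
  let F : ℕ → ℕ → ℝ := fun p n ↦
    sieveFactor A p n * if p ∈ T ∩ U then sieveFactor A p n else 1
  have hF_sum : ∀ p ∈ T ∪ U,
      ∑ n ∈ range p, F p n = if p ∈ T ∩ U then p * sieveWeight A p else 0 := by
    intro p hp
    have hlt := hA.excludedCount_lt p hp
    by_cases h : p ∈ T ∩ U
    · simp only [F, if_pos h, ← sq, sum_sieveFactor_sq hlt]
    · simp only [F, if_neg h, mul_one, sum_sieveFactor hlt]
  have hF_prod : ∀ n, (∏ p ∈ T, sieveFactor A p n) * ∏ p ∈ U, sieveFactor A p n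
      = ∏ p ∈ T ∪ U, F p n := by
    intro n
    have hsub : T ∩ U ⊆ T ∪ U := inter_subset_left.trans subset_union_left
    rw [← prod_union_inter, prod_mul_distrib, prod_ite_mem, inter_eq_right.2 hsub]
  have hF_periodic : ∀ p ∈ T ∪ U, Function.Periodic (F p) p := by
    intro p hp n
    simp only [F, periodic_sieveFactor (hA.periodic p hp) n]
  simp only [hF_prod]
  rw [sum_range_prod_of_pairwise_coprime (fun p hp ↦ (hA.prime p hp).pos)
    (fun p hp q hq hpq ↦ (Nat.coprime_primes (hA.prime p hp) (hA.prime q hq)).2 hpq) hF_periodic,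
    prod_congr rfl hF_sum, prod_ite_zero]
  have hsup : (∀ p ∈ T ∪ U, p ∈ T ∩ U) ↔ T = U :=
    sup_le_inf (a := T) (b := U)
  simp only [hsup, mul_ite, mul_zero]
  split_ifs with hTU
  · rw [← hTU, union_self, prod_mul_distrib, Nat.cast_prod]
  · rfl

lemma abs_prod_sieveFactor_le (hA : IsSieve T A) (n : ℕ) :
    |∏ p ∈ T, sieveFactor A p n| ≤ (∏ p ∈ T, p : ℕ) := by
  rw [abs_prod, Nat.cast_prod]
  exact prod_le_prod (fun _ _ ↦ abs_nonneg _)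
    fun p hp ↦ abs_sieveFactor_le (hA.excludedCount_lt p hp) n

lemma prod_sieveWeight_nonneg (hA : IsSieve T A) : 0 ≤ ∏ p ∈ T, sieveWeight A p :=
  prod_nonneg fun p hp ↦ sieveWeight_nonneg (hA.excludedCount_lt p hp)

lemma sum_range_prod_mul_prod_le (hA : IsSieve P A) (hT : T ∈ levelSets P D)
    (hU : U ∈ levelSets P D) (N : ℕ) :
    ∑ n ∈ range N, (∏ p ∈ T, sieveFactor A p n) * ∏ p ∈ U, sieveFactor A p n
      ≤ N * (if T = U then ∏ p ∈ T, sieveWeight A p else 0) + (D : ℝ) ^ 4 := by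
  obtain ⟨hTP, hTD⟩ := mem_levelSets.1 hT
  obtain ⟨hUP, hUD⟩ := mem_levelSets.1 hU
  have hAT := hA.mono hTP
  have hAU := hA.mono hUP
  have hAW := hA.mono (union_subset hTP hUP)
  have hperiodic : Function.Periodic
      (fun n ↦ (∏ p ∈ T, sieveFactor A p n) * ∏ p ∈ U, sieveFactor A p n) (∏ p ∈ T ∪ U, p) := by
    have hdvd {V : Finset ℕ} (hV : V ⊆ T ∪ U) :
        Function.Periodic (fun n ↦ ∏ p ∈ V, sieveFactor A p n) (∏ p ∈ T ∪ U, p) :=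
      periodic_prod_of_dvd (fun _ hp ↦ dvd_prod_of_mem _ (hV hp))
        fun p hp ↦ periodic_sieveFactor (hAW.periodic p (hV hp))
    exact (hdvd subset_union_left).mul (hdvd subset_union_right)
  have hbound : ∀ n,
      |(∏ p ∈ T, sieveFactor A p n) * ∏ p ∈ U, sieveFactor A p n| ≤ (D : ℝ) * D := by
    intro n
    rw [abs_mul]
    exact mul_le_mul ((hAT.abs_prod_sieveFactor_le n).trans (by exact_mod_cast hTD))
      ((hAU.abs_prod_sieveFactor_le n).trans (by exact_mod_cast hUD)) (abs_nonneg _)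
      (Nat.cast_nonneg _)
  have hperiod : ((∏ p ∈ T ∪ U, p : ℕ) : ℝ) ≤ D * D := by
    exact_mod_cast (prod_union_le_mul (fun p hp ↦ (hAT.prime p hp).pos) U).trans
      (Nat.mul_le_mul hTD hUD)
  have hmean : 0 ≤ if T = U then ∏ p ∈ T, sieveWeight A p else 0 := by
    split_ifs
    exacts [hAT.prod_sieveWeight_nonneg, le_rfl]
  calc _ ≤ N * (if T = U then ∏ p ∈ T, sieveWeight A p else 0)
        + (∏ p ∈ T ∪ U, p : ℕ) * ((D : ℝ) * D) :=
        sum_range_le_of_periodic (prod_pos fun p hp ↦ (hAW.prime p hp).pos) hperiodic hbound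
          hAW.sum_prod_mul_prod hmean N
    _ ≤ N * (if T = U then ∏ p ∈ T, sieveWeight A p else 0) + D * D * ((D : ℝ) * D) := by gcongr
    _ = _ := by ring

/-- Expanding the square leaves the diagonal, by orthogonality. -/
lemma sum_range_sq_le (hA : IsSieve P A) (D N : ℕ) :
    ∑ n ∈ range N, (∑ T ∈ levelSets P D, ∏ p ∈ T, sieveFactor A p n) ^ 2
      ≤ N * (∑ T ∈ levelSets P D, ∏ p ∈ T, sieveWeight A p) + (D : ℝ) ^ 6 := by
  calc ∑ n ∈ range N, (∑ T ∈ levelSets P D, ∏ p ∈ T, sieveFactor A p n) ^ 2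
      = ∑ T ∈ levelSets P D, ∑ U ∈ levelSets P D, ∑ n ∈ range N,
          (∏ p ∈ T, sieveFactor A p n) * ∏ p ∈ U, sieveFactor A p n := by
        simp only [sq, sum_mul_sum]
        rw [sum_comm]
        exact sum_congr rfl fun T _ ↦ sum_comm
    _ ≤ ∑ T ∈ levelSets P D, ∑ U ∈ levelSets P D,
          (N * (if T = U then ∏ p ∈ T, sieveWeight A p else 0) + (D : ℝ) ^ 4) :=
        sum_le_sum fun T hT ↦ sum_le_sum fun U hU ↦ hA.sum_range_prod_mul_prod_le hT hU N
    _ = N * (∑ T ∈ levelSets P D, ∏ p ∈ T, sieveWeight A p)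
          + (#(levelSets P D) : ℝ) * #(levelSets P D) * (D : ℝ) ^ 4 := by
        simp only [sum_add_distrib, ← mul_sum, sum_const, nsmul_eq_mul, sum_ite_eq, ← mul_assoc]
        rw [sum_congr rfl fun T hT ↦ if_pos hT]
    _ ≤ N * (∑ T ∈ levelSets P D, ∏ p ∈ T, sieveWeight A p) + D * D * (D : ℝ) ^ 4 := by
        have hcard : (#(levelSets P D) : ℝ) ≤ D := by exact_mod_cast card_levelSets_le hA.prime D
        gcongr
    _ = _ := by ring

lemma one_le_sum_prod_sieveWeight (hA : IsSieve P A) (hD : 1 ≤ D) :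
    1 ≤ ∑ T ∈ levelSets P D, ∏ p ∈ T, sieveWeight A p := by
  have hempty : ∅ ∈ levelSets P D := mem_levelSets.2 ⟨empty_subset _, by simpa using hD⟩
  simpa only [prod_empty] using single_le_sum (f := fun T ↦ ∏ p ∈ T, sieveWeight A p)
    (fun T hT ↦ (hA.mono (mem_levelSets.1 hT).1).prod_sieveWeight_nonneg) hempty

/-- On the sifted set the sum of the products of sieve factors is constant, equal to the
denominator, so its mean square bounds the size of that set. -/
lemma card_sifted_le (hA : IsSieve P A) (hD : 1 ≤ D) (N : ℕ) :
    (#{n ∈ range N | ∀ p ∈ P, ¬ A p n} : ℝ)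
      ≤ N / (∑ T ∈ levelSets P D, ∏ p ∈ T, sieveWeight A p) + (D : ℝ) ^ 6 := by
  set G : ℝ := ∑ T ∈ levelSets P D, ∏ p ∈ T, sieveWeight A p
  have hG : 1 ≤ G := hA.one_le_sum_prod_sieveWeight hD
  have hconst : ∀ n ∈ {n ∈ range N | ∀ p ∈ P, ¬ A p n},
      ∑ T ∈ levelSets P D, ∏ p ∈ T, sieveFactor A p n = G := by
    intro n hn
    refine sum_congr rfl fun T hT ↦ prod_congr rfl fun p hp ↦ ?_
    exact if_neg ((mem_filter.1 hn).2 p ((mem_levelSets.1 hT).1 hp))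
  have hsq : (#{n ∈ range N | ∀ p ∈ P, ¬ A p n} : ℝ) * G ^ 2 ≤ N * G + (D : ℝ) ^ 6 := by
    calc (#{n ∈ range N | ∀ p ∈ P, ¬ A p n} : ℝ) * G ^ 2
        = ∑ n ∈ range N with ∀ p ∈ P, ¬ A p n,
            (∑ T ∈ levelSets P D, ∏ p ∈ T, sieveFactor A p n) ^ 2 := by
          rw [sum_congr rfl fun n hn ↦ by rw [hconst n hn], sum_const, nsmul_eq_mul]
      _ ≤ ∑ n ∈ range N, (∑ T ∈ levelSets P D, ∏ p ∈ T, sieveFactor A p n) ^ 2 :=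
          sum_le_sum_of_subset_of_nonneg (filter_subset _ _) fun _ _ _ ↦ sq_nonneg _
      _ ≤ N * G + (D : ℝ) ^ 6 := hA.sum_range_sq_le D N
  calc (#{n ∈ range N | ∀ p ∈ P, ¬ A p n} : ℝ) ≤ (N * G + (D : ℝ) ^ 6) / G ^ 2 := by
        rwa [le_div_iff₀ (by positivity)]
    _ = N / G + (D : ℝ) ^ 6 / G ^ 2 := by field_simp
    _ ≤ N / G + (D : ℝ) ^ 6 := by
        gcongr
        exact div_le_self (by positivity) (one_le_pow₀ hG)

end IsSieve

end Sieve

/-! ### Lower bounds for the sieve denominator -/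

section Denominator

lemma sum_le_sum_of_injOn {ι κ M : Type*} [AddCommMonoid M] [PartialOrder M]
    [IsOrderedAddMonoid M] {s : Finset ι} {t : Finset κ} {f : ι → M} {k : κ → M} (e : ι → κ)
    (he : ∀ i ∈ s, e i ∈ t) (hinj : Set.InjOn e s) (hfk : ∀ i ∈ s, f i ≤ k (e i))
    (hk : ∀ j ∈ t, 0 ≤ k j) : ∑ i ∈ s, f i ≤ ∑ j ∈ t, k j :=
  calc ∑ i ∈ s, f i ≤ ∑ i ∈ s, k (e i) := sum_le_sum hfk
    _ = ∑ j ∈ s.image e, k j := (sum_image hinj).symm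
    _ ≤ ∑ j ∈ t, k j :=
      sum_le_sum_of_subset_of_nonneg (image_subset_iff.2 he) fun j hj _ ↦ hk j hj

/-- A pair `(T, U)` with union `W` is encoded by `T` and `T ∩ U`. -/
lemma sum_prod_mul_prod_of_union_eq {ι R : Type*} [DecidableEq ι] [CommSemiring R] (f : ι → R)
    (W : Finset ι) :
    ∑ x ∈ W.powerset ×ˢ W.powerset with x.1 ∪ x.2 = W, (∏ i ∈ x.1, f i) * ∏ i ∈ x.2, f i
      = ∏ i ∈ W, (f i * (1 + f i) + f i) := by
  rw [prod_add]
  simp only [prod_mul_distrib, prod_one_add, mul_sum, sum_mul]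
  rw [sum_sigma']
  refine sum_nbij' (fun x ↦ ⟨x.1, x.1 ∩ x.2⟩) (fun y ↦ (y.1, y.2 ∪ (W \ y.1))) ?_ ?_ ?_ ?_ ?_
  · rintro ⟨T, U⟩ hx
    grind
  · rintro ⟨T, K⟩ hy
    grind
  · rintro ⟨T, U⟩ hx
    have hU : T ∩ U ∪ W \ T = U := by grind
    rw [hU]
  · rintro ⟨T, K⟩ hy
    have hK : T ∩ (K ∪ W \ T) = K := by grind
    rw [hK]
  · rintro ⟨T, U⟩ hx
    have hU : T ∩ U ∪ W \ T = U := by grind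
    have hdisj : Disjoint (T ∩ U) (W \ T) := disjoint_sdiff.mono_left inter_subset_left
    rw [mul_assoc, ← prod_union hdisj, hU]

variable {P : Finset ℕ} {f : ℕ → ℝ}

lemma sq_sum_levelSets_le (hP : ∀ p ∈ P, 0 < p) (hf : ∀ p ∈ P, 0 ≤ f p) (z : ℕ) :
    (∑ T ∈ levelSets P z, ∏ p ∈ T, f p) ^ 2
      ≤ ∑ W ∈ levelSets P (z ^ 2), ∏ p ∈ W, (f p * (1 + f p) + f p) := by
  have hunion : ∀ x ∈ levelSets P z ×ˢ levelSets P z, x.1 ∪ x.2 ∈ levelSets P (z ^ 2) := by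
    intro x hx
    obtain ⟨hT, hU⟩ := mem_product.1 hx
    obtain ⟨hTP, hTz⟩ := mem_levelSets.1 hT
    obtain ⟨hUP, hUz⟩ := mem_levelSets.1 hU
    refine mem_levelSets.2 ⟨union_subset hTP hUP, ?_⟩
    exact (prod_union_le_mul (fun p hp ↦ hP p (hTP hp)) _).trans
      ((Nat.mul_le_mul hTz hUz).trans_eq (sq z).symm)
  rw [sq, sum_mul_sum, ← sum_product', ← sum_fiberwise_of_maps_to hunion]
  refine sum_le_sum fun W hW ↦ ?_
  rw [← sum_prod_mul_prod_of_union_eq]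
  refine sum_le_sum_of_subset_of_nonneg ?_ ?_
  · intro x hx
    simp only [mem_filter, mem_product, mem_powerset] at hx ⊢
    exact ⟨⟨hx.2 ▸ subset_union_left, hx.2 ▸ subset_union_right⟩, hx.2⟩
  · intro x hx _
    simp only [mem_filter, mem_product, mem_powerset] at hx
    have hWP := (mem_levelSets.1 hW).1
    exact mul_nonneg (prod_nonneg fun p hp ↦ hf p (hWP (hx.1.1 hp)))
      (prod_nonneg fun p hp ↦ hf p (hWP (hx.1.2 hp)))

lemma sum_levelSets_le_mul_sum_sdiff (hP : ∀ p ∈ P, 0 < p) (hf : ∀ p, 0 ≤ f p) (Q : Finset ℕ)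
    (z : ℕ) :
    ∑ T ∈ levelSets P z, ∏ p ∈ T, f p
      ≤ (∏ p ∈ Q, (1 + f p)) * ∑ T ∈ levelSets (P \ Q) z, ∏ p ∈ T, f p := by
  rw [prod_one_add, sum_mul_sum, ← sum_product']
  refine sum_le_sum_of_injOn (fun T ↦ (T ∩ Q, T \ Q)) ?_ ?_ ?_ ?_
  · intro T hT
    obtain ⟨hTP, hTz⟩ := mem_levelSets.1 hT
    refine mem_product.2 ⟨mem_powerset.2 inter_subset_right,
      mem_levelSets.2 ⟨sdiff_subset_sdiff hTP subset_rfl, le_trans ?_ hTz⟩⟩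
    exact prod_le_prod_of_subset_of_one_le' sdiff_subset fun p hp _ ↦ hP p (hTP hp)
  · intro T _ T' _ h
    simp only [Prod.mk.injEq] at h
    rw [← sdiff_union_inter T Q, ← sdiff_union_inter T' Q, h.1, h.2]
  · exact fun T _ ↦ (prod_inter_mul_prod_sdiff T Q _).ge
  · exact fun x _ ↦ mul_nonneg (prod_nonneg fun p _ ↦ hf p) (prod_nonneg fun p _ ↦ hf p)

/-- Write each `n ≤ z` as `b ^ 2 * a` with `a` squarefree and use `∑ 1 / b ^ 2 ≤ 2`. -/
lemma log_add_one_le_two_mul_sum_levelSets (z : ℕ) :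
    log (z + 1) ≤ 2 * ∑ T ∈ levelSets (Nat.primesLE z) z, ∏ p ∈ T, (p : ℝ)⁻¹ := by
  have hharmonic : log (z + 1) ≤ ∑ n ∈ Icc 1 z, (n : ℝ)⁻¹ := by
    simpa [harmonic_eq_sum_Icc] using log_add_one_le_harmonic z
  have hsq : ∑ b ∈ Icc 1 z, ((b : ℝ) ^ 2)⁻¹ ≤ 2 := by
    have hIcc : Icc 1 z = Ioo 0 (z + 1) := by grind
    simpa [hIcc] using sum_Ioo_inv_sq_le (α := ℝ) 0 (z + 1)
  have hnonneg (T : Finset ℕ) : 0 ≤ ∏ p ∈ T, (p : ℝ)⁻¹ := prod_nonneg fun p _ ↦ by positivity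
  refine hharmonic.trans (le_trans ?_
    (mul_le_mul_of_nonneg_right hsq (sum_nonneg fun T _ ↦ hnonneg T)))
  rw [sum_mul_sum, ← sum_product']
  choose a b hab hsqfree using Nat.sq_mul_squarefree
  have hprod (n : ℕ) : ∏ p ∈ (a n).primeFactors, p = a n :=
    Nat.prod_primeFactors_of_squarefree (hsqfree n)
  refine sum_le_sum_of_injOn (fun n ↦ (b n, (a n).primeFactors)) ?_ ?_ ?_ ?_
  · intro n hn
    obtain ⟨hn0, hnz⟩ := mem_Icc.1 hn
    have hb0 : 0 < b n := Nat.pos_of_ne_zero fun h0 ↦ by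
      have := hab n
      simp only [h0, zero_pow two_ne_zero, zero_mul] at this
      omega
    have haz : a n ≤ z := (Nat.le_of_dvd hn0 ⟨_, (mul_comm _ _).trans (hab n) |>.symm⟩).trans hnz
    have hbz : b n ≤ z :=
      (Nat.le_of_dvd hn0 ((dvd_pow_self _ two_ne_zero).trans ⟨_, (hab n).symm⟩)).trans hnz
    refine mem_product.2 ⟨mem_Icc.2 ⟨hb0, hbz⟩, mem_levelSets.2 ⟨fun p hp ↦ ?_, ?_⟩⟩
    · exact Nat.mem_primesLE.2
        ⟨(Nat.le_of_mem_primeFactors hp).trans haz, Nat.prime_of_mem_primeFactors hp⟩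
    · rwa [hprod]
  · intro n _ m _ hnm
    simp only [Prod.mk.injEq] at hnm
    rw [← hab n, ← hab m, ← hprod n, ← hprod m, hnm.1, hnm.2]
  · intro n _
    refine le_of_eq ?_
    rw [prod_inv_distrib, ← Nat.cast_prod, hprod, ← mul_inv]
    exact_mod_cast congrArg (fun k : ℕ ↦ (k : ℝ)⁻¹) (hab n).symm
  · exact fun x _ ↦ mul_nonneg (by positivity) (hnonneg _)

end Denominator

/-! ### Prime pairs -/

section PrimePairs

/-- The arithmetic factor `∏ p ∣ h, (1 + 1 / p)` in the upper bound for prime pairs at distance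
`h`; up to constants, its square majorizes the singular series. -/
noncomputable def singularFactor (h : ℕ) : ℝ := ∏ p ∈ h.primeFactors, (1 + (p : ℝ)⁻¹)

/-- The odd primes up to `z` that do not divide `h`. -/
noncomputable def siftingPrimes (h z : ℕ) : Finset ℕ := (Nat.primesLE z \ {2}) \ h.primeFactors

/-- The classes that must be removed to leave only `n` with `n` and `n + h` both prime to `p`. -/
def PairExcluded (h p n : ℕ) : Prop := p ∣ n * (n + h)

variable {h z p : ℕ}

lemma one_le_singularFactor (h : ℕ) : 1 ≤ singularFactor h :=
  one_le_prod fun p ↦ by simp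

lemma mem_siftingPrimes (hh : h ≠ 0) :
    p ∈ siftingPrimes h z ↔ p.Prime ∧ p ≤ z ∧ p ≠ 2 ∧ ¬ p ∣ h := by
  simp only [siftingPrimes, Finset.mem_sdiff, Nat.mem_primesLE, mem_singleton, Nat.mem_primeFactors]
  tauto

lemma excludedCount_pairExcluded (hp : p.Prime) (hph : ¬ p ∣ h) :
    excludedCount (PairExcluded h) p = 2 := by
  have hlt : h % p < p := Nat.mod_lt _ hp.pos
  have hne : h % p ≠ 0 := fun h0 ↦ hph (Nat.dvd_of_mod_eq_zero h0)
  have hiff (n : ℕ) : p ∣ n + h ↔ p ∣ n + h % p := by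
    simp only [Nat.dvd_iff_mod_eq_zero, Nat.add_mod_mod]
  have hset : {n ∈ range p | PairExcluded h p n} = {0, p - h % p} := by
    ext n
    simp only [PairExcluded, mem_filter, mem_range, mem_insert, mem_singleton, hp.dvd_mul, hiff]
    constructor
    · rintro ⟨hn, hdvd | hdvd⟩
      · exact Or.inl (Nat.eq_zero_of_dvd_of_lt hdvd hn)
      · have := Nat.eq_of_dvd_of_lt_two_mul (by omega) hdvd (by omega)
        omega
    · rintro (rfl | rfl)
      · exact ⟨hp.pos, Or.inl (dvd_zero p)⟩
      · exact ⟨by omega, Or.inr (by rw [Nat.sub_add_cancel hlt.le])⟩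
  rw [excludedCount, hset, card_pair (by omega)]

lemma isSieve_siftingPrimes (hh : h ≠ 0) (z : ℕ) :
    IsSieve (siftingPrimes h z) (PairExcluded h) where
  prime p hp := ((mem_siftingPrimes hh).1 hp).1
  periodic p _ n := by
    have hmod : (n + p) * (n + p + h) ≡ n * (n + h) [MOD p] := by
      gcongr <;> exact Nat.add_modEq_right
    exact propext (hmod.dvd_iff dvd_rfl)
  excludedCount_lt p hp := by
    obtain ⟨hpp, -, hp2, hph⟩ := (mem_siftingPrimes hh).1 hp
    rw [excludedCount_pairExcluded hpp hph]
    exact hpp.two_le.lt_of_ne' hp2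

lemma le_sieveWeight_pairExcluded (hp : p.Prime) (hp2 : p ≠ 2) (hph : ¬ p ∣ h) :
    (p : ℝ)⁻¹ * (1 + (p : ℝ)⁻¹) + (p : ℝ)⁻¹
      ≤ sieveWeight (PairExcluded h) p := by
  have hp3 : (3 : ℝ) ≤ p := by exact_mod_cast hp.two_le.lt_of_ne' hp2
  have hsum : (p : ℝ)⁻¹ * (1 + (p : ℝ)⁻¹) + (p : ℝ)⁻¹ = (2 * p + 1) / p ^ 2 := by
    field_simp
    ring
  rw [hsum, sieveWeight, excludedCount_pairExcluded hp hph, Nat.cast_ofNat,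
    div_le_div_iff₀ (by positivity) (by linarith)]
  nlinarith

lemma log_le_mul_sum_levelSets_siftingPrimes (h : ℕ) (hz : 0 < z) :
    log z ≤ 3 * singularFactor h * ∑ T ∈ levelSets (siftingPrimes h z) z, ∏ p ∈ T, (p : ℝ)⁻¹ := by
  have hpos : ∀ p ∈ Nat.primesLE z, 0 < p := fun p hp ↦ (Nat.mem_primesLE.1 hp).2.pos
  have hinv (p : ℕ) : (0 : ℝ) ≤ (p : ℝ)⁻¹ := by positivity
  have htwo := sum_levelSets_le_mul_sum_sdiff hpos hinv {2} z
  have hfactor := sum_levelSets_le_mul_sum_sdiff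
    (fun p hp ↦ hpos p (mem_sdiff.1 hp).1) hinv h.primeFactors z (P := Nat.primesLE z \ {2})
  rw [prod_singleton, Nat.cast_ofNat] at htwo
  calc log z ≤ log (z + 1) := log_le_log (by positivity) (by linarith)
    _ ≤ 2 * ∑ T ∈ levelSets (Nat.primesLE z) z, ∏ p ∈ T, (p : ℝ)⁻¹ :=
      log_add_one_le_two_mul_sum_levelSets z
    _ ≤ 3 * ∑ T ∈ levelSets (Nat.primesLE z \ {2}) z, ∏ p ∈ T, (p : ℝ)⁻¹ := by linarith
    _ ≤ 3 * singularFactor h * ∑ T ∈ levelSets (siftingPrimes h z) z, ∏ p ∈ T, (p : ℝ)⁻¹ := by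
      rw [mul_assoc]
      gcongr
      exact hfactor

lemma log_sq_le_mul_sum_levelSets_sieveWeight (hh : h ≠ 0) (hz : 0 < z) :
    log z ^ 2 ≤ 9 * singularFactor h ^ 2 * ∑ T ∈ levelSets (siftingPrimes h z) (z ^ 2),
      ∏ p ∈ T, sieveWeight (PairExcluded h) p := by
  have hmem := fun p ↦ (mem_siftingPrimes (p := p) (z := z) hh).1
  have hlog : 0 ≤ log z := log_nonneg (by exact_mod_cast hz)
  have hsq := sq_sum_levelSets_le (P := siftingPrimes h z) (f := fun p ↦ (p : ℝ)⁻¹)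
    (fun p hp ↦ (hmem p hp).1.pos) (fun p _ ↦ by positivity) z
  calc log z ^ 2
      ≤ (3 * singularFactor h * ∑ T ∈ levelSets (siftingPrimes h z) z, ∏ p ∈ T, (p : ℝ)⁻¹) ^ 2 :=
        pow_le_pow_left₀ hlog (log_le_mul_sum_levelSets_siftingPrimes h hz) 2
    _ = 9 * singularFactor h ^ 2
          * (∑ T ∈ levelSets (siftingPrimes h z) z, ∏ p ∈ T, (p : ℝ)⁻¹) ^ 2 := by ring
    _ ≤ _ := by
      refine mul_le_mul_of_nonneg_left (hsq.trans ?_) (by positivity)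
      refine sum_le_sum fun T hT ↦ prod_le_prod (fun p _ ↦ by positivity) fun p hp ↦ ?_
      obtain ⟨hpp, -, hp2, hph⟩ := hmem p ((mem_levelSets.1 hT).1 hp)
      exact le_sieveWeight_pairExcluded hpp hp2 hph

/-- The terms `z ^ 12` and `z + 1` are the sieve error at level `z ^ 2` and the trivial count of
`n ≤ z`. -/
lemma card_prime_pairs_le (hh : h ≠ 0) (hz : 2 ≤ z) (N : ℕ) :
    (#{n ∈ range N | n.Prime ∧ (n + h).Prime} : ℝ)
      ≤ 9 * N * singularFactor h ^ 2 / log z ^ 2 + z ^ 12 + (z + 1) := by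
  set S := ∑ T ∈ levelSets (siftingPrimes h z) (z ^ 2),
    ∏ p ∈ T, sieveWeight (PairExcluded h) p
  have hlog : 0 < log z := log_pos (by exact_mod_cast hz)
  have hlogS : log z ^ 2 ≤ 9 * singularFactor h ^ 2 * S :=
    log_sq_le_mul_sum_levelSets_sieveWeight hh (by omega)
  have hS : 0 < S := pos_of_mul_pos_right ((pow_pos hlog 2).trans_le hlogS) (by positivity)
  have hmain : N / S ≤ 9 * N * singularFactor h ^ 2 / log z ^ 2 := by
    rw [div_le_div_iff₀ hS (by positivity)]
    calc (N : ℝ) * log z ^ 2 ≤ N * (9 * singularFactor h ^ 2 * S) := by gcongr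
      _ = 9 * N * singularFactor h ^ 2 * S := by ring
  have hsieve := (isSieve_siftingPrimes hh z).card_sifted_le (D := z ^ 2) (by nlinarith) N
  have hsplit : {n ∈ range N | n.Prime ∧ (n + h).Prime} ⊆
      {n ∈ range N | ∀ p ∈ siftingPrimes h z, ¬ PairExcluded h p n} ∪ range (z + 1) := by
    intro n hn
    simp only [mem_union, mem_filter, mem_range] at hn ⊢
    refine or_iff_not_imp_right.2 fun hnz ↦ ⟨hn.1, fun p hp hdvd ↦ ?_⟩
    obtain ⟨hpp, hpz, -⟩ := (mem_siftingPrimes hh).1 hp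
    rcases hpp.dvd_mul.1 hdvd with hd | hd
    · have := (Nat.prime_dvd_prime_iff_eq hpp hn.2.1).1 hd
      omega
    · have := (Nat.prime_dvd_prime_iff_eq hpp hn.2.2).1 hd
      omega
  have hcard : (#{n ∈ range N | n.Prime ∧ (n + h).Prime} : ℝ) ≤
      #{n ∈ range N | ∀ p ∈ siftingPrimes h z, ¬ PairExcluded h p n} + (z + 1) := by
    exact_mod_cast (card_le_card hsplit).trans
      ((card_union_le _ _).trans_eq (by rw [card_range]))
  have hpow : ((z ^ 2 : ℕ) : ℝ) ^ 6 = (z : ℝ) ^ 12 := by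
    push_cast
    ring
  rw [hpow] at hsieve
  linarith

lemma eventually_log_sq_le_rpow_half : ∀ᶠ x : ℝ in atTop, log x ^ 2 ≤ x ^ (1 / 2 : ℝ) := by
  have := (isLittleO_log_rpow_rpow_atTop (r := 2) (s := 1 / 2) (by norm_num)).bound one_pos
  filter_upwards [this, eventually_ge_atTop 1] with x hx hx1
  rwa [norm_of_nonneg (rpow_nonneg (log_nonneg hx1) _), norm_of_nonneg (by positivity),
    one_mul, rpow_two] at hx

/-- The sieving level is `z ≈ x ^ (1 / 24)`. -/
lemma exists_eventually_card_prime_pairs_le : ∃ C : ℝ, 0 < C ∧ ∀ᶠ x : ℕ in atTop, ∀ h ≠ 0,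
    (#{n ∈ range x | n.Prime ∧ (n + h).Prime} : ℝ)
      ≤ C * (x / log x ^ 2) * singularFactor h ^ 2 := by
  have hroot : ∀ᶠ x : ℝ in atTop, (4 : ℝ) ≤ x ^ (1 / 48 : ℝ) :=
    (tendsto_rpow_atTop (by norm_num)).eventually_ge_atTop 4
  refine ⟨9 * 48 ^ 2 + 3, by norm_num, ?_⟩
  filter_upwards [tendsto_natCast_atTop_atTop.eventually
    (eventually_log_sq_le_rpow_half.and hroot)] with x hx h hh
  obtain ⟨y, hy, hyx⟩ : ∃ y : ℝ, 4 ≤ y ∧ (x : ℝ) = y ^ 48 :=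
    ⟨_, hx.2, by rw [← rpow_natCast, ← rpow_mul x.cast_nonneg]; norm_num⟩
  have hlogx : log x = 48 * log y := by rw [hyx, log_pow]; norm_num
  have hlogy : 0 < log y := log_pos (by linarith)
  have hhalf : (x : ℝ) ^ (1 / 2 : ℝ) = y ^ 24 := by
    rw [hyx, ← rpow_natCast, ← rpow_natCast, ← rpow_mul (by linarith)]
    norm_num
  set z := ⌊y ^ 2⌋₊
  have hzy : (z : ℝ) ≤ y ^ 2 := Nat.floor_le (by positivity)
  have hyz : y ≤ z := by nlinarith [Nat.lt_floor_add_one (y ^ 2)]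
  have hz2 : 2 ≤ z := by exact_mod_cast (show (2 : ℝ) ≤ z by linarith)
  have hmain : 9 * x * singularFactor h ^ 2 / log z ^ 2
      ≤ 9 * 48 ^ 2 * (x / log x ^ 2) * singularFactor h ^ 2 := by
    calc 9 * x * singularFactor h ^ 2 / log z ^ 2
        ≤ 9 * x * singularFactor h ^ 2 / log y ^ 2 := by gcongr
      _ = 9 * 48 ^ 2 * (x / log x ^ 2) * singularFactor h ^ 2 := by
        rw [hlogx]
        field_simp
  have herror : (z : ℝ) ^ 12 + (z + 1) ≤ 3 * y ^ 24 := by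
    have hpow : (z : ℝ) ^ 12 ≤ y ^ 24 := by
      calc (z : ℝ) ^ 12 ≤ (y ^ 2) ^ 12 := by gcongr
        _ = y ^ 24 := by ring
    have hsq : y ^ 2 ≤ y ^ 24 := pow_le_pow_right₀ (by linarith) (by norm_num)
    have hone : 1 ≤ y ^ 24 := one_le_pow₀ (by linarith)
    linarith [hone]
  have hsmall : y ^ 24 ≤ x / log x ^ 2 * singularFactor h ^ 2 := by
    refine le_trans ?_ (le_mul_of_one_le_right (by positivity)
      (one_le_pow₀ (one_le_singularFactor h)))
    rw [le_div_iff₀ (by rw [hlogx]; positivity)]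
    calc y ^ 24 * log x ^ 2 ≤ y ^ 24 * y ^ 24 := by gcongr; exact hx.1.trans_eq hhalf
      _ = (x : ℝ) := by rw [hyx]; ring
  linarith [card_prime_pairs_le hh hz2 x]

end PrimePairs

/-! ### Sums of reciprocals of primes -/

section ReciprocalSums

lemma eventually_primeCounting_le_mul {ε : ℝ} (hε : 0 < ε) :
    ∀ᶠ x : ℝ in atTop, (Nat.primeCounting ⌊x⌋₊ : ℝ) ≤ ε * x := by
  filter_upwards [Chebyshev.eventually_primeCounting_le one_pos, eventually_gt_atTop 1,
    tendsto_log_atTop.eventually_ge_atTop ((log 4 + 1) / ε)] with x hx hx1 hlog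
  have hlog0 : 0 < log x := log_pos hx1
  refine hx.trans ?_
  rw [div_le_iff₀ hlog0, mul_right_comm]
  refine mul_le_mul_of_nonneg_right ?_ (by linarith)
  rwa [div_le_iff₀' hε] at hlog

lemma eventually_sum_inv_primes_dyadic_le {ε : ℝ} (hε : 0 < ε) : ∀ᶠ k : ℕ in atTop,
    ∑ p ∈ Nat.primesBelow (2 ^ (k + 1)) \ Nat.primesBelow (2 ^ k), (p : ℝ)⁻¹ ≤ ε := by
  have htendsto : Tendsto (fun k : ℕ ↦ (2 : ℝ) ^ (k + 1)) atTop atTop :=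
    (tendsto_pow_atTop_atTop_of_one_lt one_lt_two).comp (tendsto_add_atTop_nat 1)
  filter_upwards [htendsto.eventually (eventually_primeCounting_le_mul (half_pos hε))] with k hk
  set S := Nat.primesBelow (2 ^ (k + 1)) \ Nat.primesBelow (2 ^ k)
  have hfloor : ⌊(2 : ℝ) ^ (k + 1)⌋₊ = 2 ^ (k + 1) := by
    exact_mod_cast Nat.floor_natCast (R := ℝ) (2 ^ (k + 1))
  have hcard : (#S : ℝ) ≤ ε * 2 ^ k := by
    calc (#S : ℝ) ≤ Nat.primeCounting (2 ^ (k + 1)) := by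
          rw [← Nat.primesLE_card_eq_primeCounting]
          exact mod_cast card_le_card (sdiff_subset.trans (Nat.primesBelow_mono (Nat.le_succ _)))
      _ ≤ ε / 2 * 2 ^ (k + 1) := by rwa [hfloor] at hk
      _ = ε * 2 ^ k := by ring
  calc ∑ p ∈ S, (p : ℝ)⁻¹ ≤ #S • ((2 : ℝ) ^ k)⁻¹ := by
        refine sum_le_card_nsmul _ _ _ fun p hp ↦ ?_
        obtain ⟨hp, hpk⟩ := Finset.mem_sdiff.1 hp
        have hkp : 2 ^ k ≤ p := not_lt.1 fun hlt ↦
          hpk (Nat.mem_primesBelow.2 ⟨hlt, Nat.prime_of_mem_primesBelow hp⟩)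
        have hkp' : (2 : ℝ) ^ k ≤ p := by exact_mod_cast hkp
        gcongr
    _ ≤ ε * 2 ^ k * ((2 : ℝ) ^ k)⁻¹ := by
        rw [nsmul_eq_mul]
        gcongr
    _ = ε := mul_inv_cancel_right₀ (by positivity) ε

lemma exists_sum_inv_primesBelow_two_pow_le {ε : ℝ} (hε : 0 < ε) :
    ∃ C : ℝ, ∀ K : ℕ, ∑ p ∈ Nat.primesBelow (2 ^ K), (p : ℝ)⁻¹ ≤ ε * K + C := by
  obtain ⟨k₀, hk₀⟩ := eventually_atTop.1 (eventually_sum_inv_primes_dyadic_le hε)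
  have hmono {K L : ℕ} (hKL : K ≤ L) : Nat.primesBelow (2 ^ K) ⊆ Nat.primesBelow (2 ^ L) :=
    Nat.primesBelow_mono (Nat.pow_le_pow_right two_pos hKL)
  refine ⟨∑ p ∈ Nat.primesBelow (2 ^ k₀), (p : ℝ)⁻¹, fun K ↦ ?_⟩
  rcases le_total K k₀ with hK | hK
  · exact (sum_le_sum_of_subset_of_nonneg (hmono hK) fun p _ _ ↦ by positivity).trans
      (le_add_of_nonneg_left (by positivity))
  induction K, hK using Nat.le_induction with
  | base => exact le_add_of_nonneg_left (by positivity)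
  | succ k hk ih =>
    rw [← sum_sdiff (hmono k.le_succ)]
    push_cast
    linarith [hk₀ k hk]

lemma sum_inv_filter_not_lt_le_one {Q : Finset ℕ} {N : ℕ} {δ : ℝ} (hN : 0 < N) (hδ : 0 ≤ δ)
    (hQ : 1 + ∑ p ∈ Q, (p : ℝ) ^ (δ - 1) ≤ (N : ℝ) ^ δ) :
    ∑ p ∈ Q with ¬ p < N, (p : ℝ)⁻¹ ≤ 1 := by
  set T := ∑ p ∈ Q, (p : ℝ) ^ (δ - 1)
  have hT : 0 ≤ T := sum_nonneg fun p _ ↦ by positivity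
  calc ∑ p ∈ Q with ¬ p < N, (p : ℝ)⁻¹ ≤ ∑ p ∈ Q with ¬ p < N, (p : ℝ) ^ (δ - 1) / (1 + T) := by
        refine sum_le_sum fun p hp ↦ ?_
        have hNp : N ≤ p := not_lt.1 (mem_filter.1 hp).2
        have hp0 : (0 : ℝ) < p := by exact_mod_cast hN.trans_le hNp
        rw [le_div_iff₀ (by linarith), rpow_sub_one hp0.ne', inv_mul_eq_div]
        gcongr
        exact hQ.trans (by gcongr)
    _ ≤ ∑ p ∈ Q, (p : ℝ) ^ (δ - 1) / (1 + T) :=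
        sum_le_sum_of_subset_of_nonneg (filter_subset _ _) fun p _ _ ↦ by positivity
    _ = T / (1 + T) := (sum_div _ _ _).symm
    _ ≤ 1 := div_le_one_of_le₀ (by linarith) (by linarith)

/-- With `T = ∑ p ^ (δ - 1)`, the primes beyond `(1 + T) ^ (1 / δ)` contribute at most `1` to
`∑ 1 / p`, and those below it at most `log (1 + T) / r + O(1)`. -/
lemma exists_exp_mul_sum_inv_primes_le {r δ : ℝ} (hr : 0 < r) (hδ : 0 < δ) :
    ∃ C : ℝ, 0 < C ∧ ∀ Q : Finset ℕ, (∀ p ∈ Q, p.Prime) →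
      exp (r * ∑ p ∈ Q, (p : ℝ)⁻¹) ≤ C * (1 + ∑ p ∈ Q, (p : ℝ) ^ (δ - 1)) := by
  have hlog2 : 0 < log 2 := log_pos one_lt_two
  obtain ⟨C, hC⟩ := exists_sum_inv_primesBelow_two_pow_le (ε := δ * log 2 / r) (by positivity)
  refine ⟨exp (r * (δ * log 2 / r + C + 1)), exp_pos _, fun Q hQ ↦ ?_⟩
  set T := ∑ p ∈ Q, (p : ℝ) ^ (δ - 1)
  have hT : 0 ≤ T := sum_nonneg fun p _ ↦ by positivity
  set K := ⌈log (1 + T) / (δ * log 2)⌉₊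
  have hKlog : δ * log 2 / r * K ≤ log (1 + T) / r + δ * log 2 / r := by
    have hK : (K : ℝ) ≤ log (1 + T) / (δ * log 2) + 1 :=
      (Nat.ceil_lt_add_one (div_nonneg (log_nonneg (by linarith)) (by positivity))).le
    calc δ * log 2 / r * K ≤ δ * log 2 / r * (log (1 + T) / (δ * log 2) + 1) := by gcongr
      _ = log (1 + T) / r + δ * log 2 / r := by field_simp
  have hTK : 1 + T ≤ ((2 : ℝ) ^ K) ^ δ := by
    rw [← log_le_log_iff (by linarith) (by positivity), log_rpow (by positivity), log_pow]
    have := Nat.le_ceil (log (1 + T) / (δ * log 2))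
    rw [div_le_iff₀ (by positivity)] at this
    linarith
  have hsmall : ∑ p ∈ Q with p < 2 ^ K, (p : ℝ)⁻¹ ≤ log (1 + T) / r + δ * log 2 / r + C := by
    refine le_trans ?_ ((hC K).trans (by linarith))
    refine sum_le_sum_of_subset_of_nonneg (fun p hp ↦ ?_) fun p _ _ ↦ by positivity
    obtain ⟨hpQ, hpK⟩ := mem_filter.1 hp
    exact Nat.mem_primesBelow.2 ⟨hpK, hQ p hpQ⟩
  have hlarge : ∑ p ∈ Q with ¬ p < 2 ^ K, (p : ℝ)⁻¹ ≤ 1 :=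
    sum_inv_filter_not_lt_le_one (by positivity) hδ.le (by exact_mod_cast hTK)
  have hexp : r * ∑ p ∈ Q, (p : ℝ)⁻¹ ≤ r * (δ * log 2 / r + C + 1) + log (1 + T) := by
    calc r * ∑ p ∈ Q, (p : ℝ)⁻¹ ≤ r * (δ * log 2 / r + C + 1 + log (1 + T) / r) := by
          rw [← sum_filter_add_sum_filter_not Q (· < 2 ^ K)]
          exact mul_le_mul_of_nonneg_left (by linarith) hr.le
      _ = r * (δ * log 2 / r + C + 1) + log (1 + T) := by field_simp
  calc exp (r * ∑ p ∈ Q, (p : ℝ)⁻¹) ≤ exp (r * (δ * log 2 / r + C + 1) + log (1 + T)) :=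
        exp_le_exp.2 hexp
    _ = exp (r * (δ * log 2 / r + C + 1)) * (1 + T) := by rw [exp_add, exp_log (by linarith)]

lemma sum_inv_primeFactors_gt_le_one {h L : ℕ} (hh : h ≠ 0) (hL : h ≤ 2 ^ L) :
    ∑ p ∈ h.primeFactors with ¬ p ≤ L, (p : ℝ)⁻¹ ≤ 1 := by
  rcases L.eq_zero_or_pos with rfl | hL0
  · obtain rfl : h = 1 := by omega
    simp
  have hcard : #{p ∈ h.primeFactors | ¬ p ≤ L} ≤ L := by
    refine (card_filter_le _ _).trans ((Nat.pow_le_pow_iff_right one_lt_two).1 ?_)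
    calc 2 ^ #h.primeFactors ≤ ∏ p ∈ h.primeFactors, p :=
          pow_card_le_prod _ _ _ fun p hp ↦ (Nat.prime_of_mem_primeFactors hp).two_le
      _ ≤ 2 ^ L := (Nat.le_of_dvd (Nat.pos_of_ne_zero hh) (Nat.prod_primeFactors_dvd h)).trans hL
  calc ∑ p ∈ h.primeFactors with ¬ p ≤ L, (p : ℝ)⁻¹
      ≤ #{p ∈ h.primeFactors | ¬ p ≤ L} • (L : ℝ)⁻¹ := by
        refine sum_le_card_nsmul _ _ _ fun p hp ↦ inv_anti₀ (by exact_mod_cast hL0) ?_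
        exact_mod_cast (not_le.1 (mem_filter.1 hp).2).le
    _ ≤ L * (L : ℝ)⁻¹ := by
        rw [nsmul_eq_mul]
        gcongr
    _ ≤ 1 := mul_inv_le_one

lemma singularFactor_le_exp (h : ℕ) : singularFactor h ≤ exp (∑ p ∈ h.primeFactors, (p : ℝ)⁻¹) := by
  rw [singularFactor, exp_sum]
  refine prod_le_prod (fun p _ ↦ by positivity) fun p _ ↦ ?_
  rw [add_comm]
  exact add_one_le_exp _

lemma exists_singularFactor_sq_le {δ : ℝ} (hδ : 0 < δ) :
    ∃ C : ℝ, 0 < C ∧ ∀ h L : ℕ, h ≠ 0 → h ≤ 2 ^ L →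
      singularFactor h ^ 2 ≤ C * (1 + ∑ p ∈ h.primeFactors with p ≤ L, (p : ℝ) ^ (δ - 1)) := by
  obtain ⟨C, hC0, hC⟩ := exists_exp_mul_sum_inv_primes_le two_pos hδ
  refine ⟨exp 2 * C, by positivity, fun h L hh hL ↦ ?_⟩
  have hsum : ∑ p ∈ h.primeFactors, (p : ℝ)⁻¹
      ≤ 1 + ∑ p ∈ h.primeFactors with p ≤ L, (p : ℝ)⁻¹ := by
    rw [← sum_filter_add_sum_filter_not _ (· ≤ L)]
    linarith [sum_inv_primeFactors_gt_le_one hh hL]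
  calc singularFactor h ^ 2 ≤ exp (∑ p ∈ h.primeFactors, (p : ℝ)⁻¹) ^ 2 :=
        pow_le_pow_left₀ (zero_le_one.trans (one_le_singularFactor h)) (singularFactor_le_exp h) 2
    _ = exp (2 * ∑ p ∈ h.primeFactors, (p : ℝ)⁻¹) := by rw [← exp_nat_mul, Nat.cast_ofNat]
    _ ≤ exp (2 * (1 + ∑ p ∈ h.primeFactors with p ≤ L, (p : ℝ)⁻¹)) := by gcongr
    _ = exp 2 * exp (2 * ∑ p ∈ h.primeFactors with p ≤ L, (p : ℝ)⁻¹) := by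
        rw [mul_one_add, exp_add]
    _ ≤ exp 2 * (C * (1 + ∑ p ∈ h.primeFactors with p ≤ L, (p : ℝ) ^ (δ - 1))) := by
        gcongr
        exact hC _ fun p hp ↦ Nat.prime_of_mem_primeFactors (mem_filter.1 hp).1
    _ = _ := (mul_assoc _ _ _).symm

end ReciprocalSums

/-! ### The divisor bound -/

section DivisorBound

lemma nat_add_one_le_mul_two_rpow {ε : ℝ} (hε : 0 < ε) (a : ℕ) :
    (a : ℝ) + 1 ≤ (1 + (ε * log 2)⁻¹) * ((2 : ℝ) ^ ε) ^ a := by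
  have ht : 0 < ε * log 2 := mul_pos hε (log_pos one_lt_two)
  have hexp : 1 + ε * log 2 * a ≤ ((2 : ℝ) ^ ε) ^ a := by
    rw [← rpow_natCast, ← rpow_mul two_pos.le, rpow_def_of_pos two_pos, add_comm]
    convert add_one_le_exp (ε * log 2 * a) using 2
    ring
  calc (a : ℝ) + 1 ≤ a + 1 + ((ε * log 2)⁻¹ + ε * log 2 * a) := by
        have : 0 ≤ (ε * log 2)⁻¹ + ε * log 2 * a := by positivity
        linarith
    _ = (1 + (ε * log 2)⁻¹) * (1 + ε * log 2 * a) := by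
        field_simp
        ring
    _ ≤ _ := by gcongr

lemma exists_card_divisors_le_rpow {ε : ℝ} (hε : 0 < ε) :
    ∃ C : ℝ, 0 < C ∧ ∀ n : ℕ, n ≠ 0 → (#n.divisors : ℝ) ≤ C * (n : ℝ) ^ ε := by
  set K : ℝ := 1 + (ε * log 2)⁻¹
  have hK : 1 ≤ K := le_add_of_nonneg_right
    (inv_nonneg.2 (mul_nonneg hε.le (log_nonneg one_le_two)))
  set T := ⌈(2 : ℝ) ^ ε⁻¹⌉₊
  refine ⟨K ^ T, by positivity, fun n hn ↦ ?_⟩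
  have hlocal : ∀ p ∈ n.primeFactors, ((n.factorization p + 1 : ℕ) : ℝ)
      ≤ (if p < T then K else 1) * ((p : ℝ) ^ n.factorization p) ^ ε := by
    intro p hp
    have hp2 : (2 : ℝ) ≤ p := by exact_mod_cast (Nat.prime_of_mem_primeFactors hp).two_le
    rw [← rpow_natCast, ← rpow_mul (by linarith), mul_comm _ ε, rpow_mul (by linarith),
      rpow_natCast, Nat.cast_succ]
    split_ifs with hpT
    · refine (nat_add_one_le_mul_two_rpow hε _).trans ?_
      gcongr
    · have hpε : 2 ≤ (p : ℝ) ^ ε := by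
        rw [← rpow_inv_le_iff_of_pos two_pos.le (by linarith) hε]
        exact Nat.ceil_le.1 (not_lt.1 hpT)
      calc ((n.factorization p : ℕ) : ℝ) + 1 ≤ 2 ^ n.factorization p := by
            exact_mod_cast Nat.lt_two_pow_self
        _ ≤ 1 * ((p : ℝ) ^ ε) ^ n.factorization p := by
            rw [one_mul]
            gcongr
  have hsmall : ∏ p ∈ n.primeFactors, (if p < T then K else 1) ≤ K ^ T := by
    rw [← prod_filter, prod_const]
    refine pow_le_pow_right₀ hK ?_
    calc #{p ∈ n.primeFactors | p < T} ≤ #(range T) :=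
          card_le_card fun p hp ↦ mem_range.2 (mem_filter.1 hp).2
      _ = T := card_range T
  have hprod : ∏ p ∈ n.primeFactors, (p : ℝ) ^ n.factorization p = n := by
    exact_mod_cast Nat.prod_factorization_pow_eq_self hn
  calc (#n.divisors : ℝ) = ∏ p ∈ n.primeFactors, ((n.factorization p + 1 : ℕ) : ℝ) := by
        rw [Nat.card_divisors hn, Nat.cast_prod]
    _ ≤ ∏ p ∈ n.primeFactors,
          ((if p < T then K else 1) * ((p : ℝ) ^ n.factorization p) ^ ε) :=
        prod_le_prod (fun _ _ ↦ by positivity) hlocal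
    _ = (∏ p ∈ n.primeFactors, (if p < T then K else 1)) * (n : ℝ) ^ ε := by
        rw [prod_mul_distrib, finsetProd_rpow _ _ fun _ _ ↦ by positivity, hprod]
    _ ≤ K ^ T * (n : ℝ) ^ ε := by gcongr

end DivisorBound

/-! ### Solutions of `x ^ (m ^ 2) = c` -/

section SquareExponents

lemma exists_mem_divisors_dvd_or_dvd_of_dvd_mul {e : ℕ} (he : e ≠ 0) {x y : ℤ}
    (h : (e : ℤ) ∣ x * y) :
    ∃ a ∈ e.divisors, e ≤ a ^ 2 ∧ ((a : ℤ) ∣ x ∨ (a : ℤ) ∣ y) := by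
  rw [Int.natCast_dvd, Int.natAbs_mul] at h
  obtain ⟨a, b, hax, hby, rfl⟩ := exists_dvd_and_dvd_of_dvd_mul h
  simp only [Nat.mem_divisors, Int.natCast_dvd]
  rcases le_total a b with hab | hba
  · exact ⟨b, ⟨dvd_mul_left b a, he⟩, sq b ▸ Nat.mul_le_mul_right b hab, Or.inr hby⟩
  · exact ⟨a, ⟨dvd_mul_right a b, he⟩, sq a ▸ Nat.mul_le_mul_left a hba, Or.inl hax⟩

lemma card_filter_dvd_sub_le (M a : ℕ) (b : ℤ) :
    #{m ∈ Icc 1 M | (a : ℤ) ∣ (m : ℕ) - b} ≤ M / a + 1 := by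
  rw [← card_range (M / a + 1)]
  refine card_le_card_of_injOn (· / a) (fun m hm ↦ ?_) fun m hm n hn hmn ↦ ?_
  · exact mem_coe.2 (mem_range.2 (Nat.lt_succ_of_le
      (Nat.div_le_div_right (mem_Icc.1 (mem_filter.1 hm).1).2)))
  · have hmod : m ≡ n [MOD a] := by
      rw [Nat.modEq_iff_dvd, ← sub_sub_sub_cancel_right (n : ℤ) m b]
      exact dvd_sub (mem_filter.1 hn).2 (mem_filter.1 hm).2
    dsimp only at hmn
    rw [← Nat.div_add_mod m a, ← Nat.div_add_mod n a, hmn, hmod]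

/-- If `m₀` is a square root of `c` modulo `e`, then `e ∣ (m - m₀) (m + m₀)` for every other one
`m`, so that one of the two factors is divisible by a large divisor of `e`. -/
lemma card_filter_sq_modEq_le_sum_divisors {e : ℕ} (he : e ≠ 0) (M c : ℕ) :
    #{m ∈ Icc 1 M | m ^ 2 ≡ c [MOD e]} ≤ ∑ a ∈ e.divisors with e ≤ a ^ 2, 2 * (M / a + 1) := by
  rcases eq_empty_or_nonempty {m ∈ Icc 1 M | m ^ 2 ≡ c [MOD e]} with hempty | ⟨m₀, hm₀⟩
  · simp [hempty]
  have hsub : {m ∈ Icc 1 M | m ^ 2 ≡ c [MOD e]} ⊆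
      {a ∈ e.divisors | e ≤ a ^ 2}.biUnion fun a ↦
        {m ∈ Icc 1 M | (a : ℤ) ∣ (m : ℕ) - (m₀ : ℤ)} ∪
        {m ∈ Icc 1 M | (a : ℤ) ∣ (m : ℕ) - (-m₀ : ℤ)} := by
    intro m hm
    obtain ⟨hmM, hmc⟩ := mem_filter.1 hm
    have hmod : m₀ ^ 2 ≡ m ^ 2 [MOD e] := (mem_filter.1 hm₀).2.trans hmc.symm
    have hdvd : (e : ℤ) ∣ ((m : ℤ) - m₀) * (m - -m₀) := by
      convert Nat.modEq_iff_dvd.1 hmod using 1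
      push_cast
      ring
    obtain ⟨a, hae, hea, ha⟩ := exists_mem_divisors_dvd_or_dvd_of_dvd_mul he hdvd
    simp only [mem_biUnion, mem_union, mem_filter]
    exact ⟨a, ⟨hae, hea⟩, ha.imp (⟨hmM, ·⟩) (⟨hmM, ·⟩)⟩
  refine (card_le_card hsub).trans (card_biUnion_le.trans (sum_le_sum fun a _ ↦ ?_))
  rw [two_mul]
  exact (card_union_le _ _).trans
    (add_le_add (card_filter_dvd_sub_le _ _ _) (card_filter_dvd_sub_le _ _ _))

lemma exists_card_filter_sq_modEq_le_rpow {κ ε : ℝ} (hκ : 0 ≤ κ) (hε : 0 < ε) :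
    ∃ C : ℝ, 0 < C ∧ ∀ e M c : ℕ, e ≠ 0 → (e : ℝ) ≤ κ * M ^ 2 →
      (#{m ∈ Icc 1 M | m ^ 2 ≡ c [MOD e]} : ℝ) ≤ C * M * (e : ℝ) ^ (ε - 1 / 2) := by
  obtain ⟨D, hD0, hD⟩ := exists_card_divisors_le_rpow hε
  refine ⟨2 * (1 + √κ) * D, by positivity, fun e M c he heM ↦ ?_⟩
  have he0 : (0 : ℝ) < e := by exact_mod_cast Nat.pos_of_ne_zero he
  have hsqrt : 0 < √(e : ℝ) := sqrt_pos.2 he0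
  have heM' : √(e : ℝ) ≤ √κ * M := by
    rw [← sqrt_sq (Nat.cast_nonneg M), ← sqrt_mul hκ]
    exact sqrt_le_sqrt heM
  have hterm : ∀ a ∈ e.divisors.filter (e ≤ · ^ 2),
      2 * ((M : ℝ) / a + 1) ≤ 2 * ((1 + √κ) * M / √e) := by
    intro a ha
    have hea : √(e : ℝ) ≤ a :=
      sqrt_le_iff.2 ⟨by positivity, by exact_mod_cast (mem_filter.1 ha).2⟩
    calc 2 * ((M : ℝ) / a + 1) ≤ 2 * (M / √e + √κ * M / √e) := by
          gcongr
          exact (one_le_div hsqrt).2 heM'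
      _ = 2 * ((1 + √κ) * M / √e) := by ring
  have hpow : (e : ℝ) ^ (ε - 1 / 2) = (e : ℝ) ^ ε / √e := by rw [rpow_sub he0, sqrt_eq_rpow]
  calc (#{m ∈ Icc 1 M | m ^ 2 ≡ c [MOD e]} : ℝ)
      ≤ ∑ a ∈ e.divisors with e ≤ a ^ 2, 2 * ((M : ℝ) / a + 1) := by
        refine (Nat.cast_le.2 (card_filter_sq_modEq_le_sum_divisors he M c)).trans ?_
        push_cast
        gcongr
        exact Nat.cast_div_le
    _ ≤ ∑ a ∈ e.divisors with e ≤ a ^ 2, 2 * ((1 + √κ) * M / √e) := sum_le_sum hterm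
    _ ≤ ∑ a ∈ e.divisors, 2 * ((1 + √κ) * M / √e) :=
        sum_le_sum_of_subset_of_nonneg (filter_subset _ _) fun _ _ _ ↦ by positivity
    _ = #e.divisors * (2 * ((1 + √κ) * M / √e)) := by rw [sum_const, nsmul_eq_mul]
    _ ≤ D * (e : ℝ) ^ ε * (2 * ((1 + √κ) * M / √e)) := by
        gcongr
        exact hD e he
    _ = 2 * (1 + √κ) * D * M * (e : ℝ) ^ (ε - 1 / 2) := by rw [hpow]; ring

lemma card_filter_pow_sq_eq_le {G : Type*} [Monoid G] {x : G} (hx : IsOfFinOrder x) (M : ℕ)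
    (c : G) : ∃ d : ℕ,
      #{m ∈ Icc 1 M | x ^ (m ^ 2) = c} ≤ #{m ∈ Icc 1 M | m ^ 2 ≡ d [MOD orderOf x]} := by
  rcases eq_empty_or_nonempty {m ∈ Icc 1 M | x ^ (m ^ 2) = c} with hempty | ⟨m₀, hm₀⟩
  · exact ⟨0, by simp [hempty]⟩
  refine ⟨m₀ ^ 2, card_le_card (monotone_filter_right _ fun m _ hm ↦ ?_)⟩
  exact hx.pow_eq_pow_iff_modEq.1 (hm.trans (mem_filter.1 hm₀).2.symm)

/-- `g` has order at least `p ^ (1 / 3)` in `ZMod p`. If `p` is a prime dividing `g`, this fails, as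
`orderOf` takes the value `0` at non-units. -/
def HasLargeOrder (g p : ℕ) : Prop := p ≤ orderOf (g : ZMod p) ^ 3

lemma exists_card_filter_pow_sq_eq_le_rpow {κ : ℝ} (hκ : 0 ≤ κ) :
    ∃ C : ℝ, 0 < C ∧ ∀ g p M : ℕ, p.Prime → HasLargeOrder g p → (p : ℝ) ≤ κ * M ^ 2 →
      ∀ c : ZMod p, (#{m ∈ Icc 1 M | (g : ZMod p) ^ (m ^ 2) = c} : ℝ)
        ≤ C * M * (p : ℝ) ^ (-(1 / 10) : ℝ) := by
  obtain ⟨C, hC0, hC⟩ :=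
    exists_card_filter_sq_modEq_le_rpow hκ (show (0 : ℝ) < 1 / 5 by norm_num)
  refine ⟨C, hC0, fun g p M hp hgp hpM c ↦ ?_⟩
  have : Fact p.Prime := ⟨hp⟩
  set e := orderOf (g : ZMod p)
  have he : e ≠ 0 := by
    rintro he
    have := hp.pos.trans_le hgp
    simp [e, he] at this
  obtain ⟨d, hd⟩ := card_filter_pow_sq_eq_le (orderOf_pos_iff.1 (Nat.pos_of_ne_zero he)) M c
  have hep : e ≤ p := orderOf_le_card_univ.trans_eq (ZMod.card p)
  have hpe : (p : ℝ) ≤ (e : ℝ) ^ 3 := by exact_mod_cast hgp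
  calc (#{m ∈ Icc 1 M | (g : ZMod p) ^ (m ^ 2) = c} : ℝ)
      ≤ #{m ∈ Icc 1 M | m ^ 2 ≡ d [MOD e]} := by exact_mod_cast hd
    _ ≤ C * M * (e : ℝ) ^ (1 / 5 - 1 / 2 : ℝ) :=
        hC e M d he ((Nat.cast_le.2 hep).trans hpM)
    _ = C * M * ((e : ℝ) ^ 3) ^ (-(1 / 10) : ℝ) := by
        rw [← rpow_natCast, ← rpow_mul (Nat.cast_nonneg e)]
        norm_num
    _ ≤ C * M * (p : ℝ) ^ (-(1 / 10) : ℝ) := by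
        have hp0 : (0 : ℝ) < p := by exact_mod_cast hp.pos
        gcongr C * M * ?_
        exact rpow_le_rpow_of_nonpos hp0 hpe (by norm_num)

/-- The product of the primes in `R` divides `g ^ e - 1`. -/
lemma card_mul_log_two_le_of_orderOf_eq {g e : ℕ} (hg : 2 ≤ g) (he : e ≠ 0) {R : Finset ℕ}
    (hR : ∀ p ∈ R, p.Prime ∧ orderOf (g : ZMod p) = e) : #R * log 2 ≤ e * log g := by
  have hge : 1 < g ^ e := Nat.one_lt_pow he hg
  have hdvd : ∏ p ∈ R, p ∣ g ^ e - 1 := by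
    refine prod_primes_dvd _ (fun p hp ↦ (hR p hp).1.prime) fun p hp ↦ ?_
    rw [← ZMod.natCast_eq_zero_iff, Nat.cast_sub hge.le, Nat.cast_pow, Nat.cast_one,
      ← (hR p hp).2, pow_orderOf_eq_one, sub_self]
  have hpow : 2 ^ #R ≤ g ^ e :=
    calc 2 ^ #R ≤ ∏ p ∈ R, p := pow_card_le_prod _ _ _ fun p hp ↦ (hR p hp).1.two_le
      _ ≤ g ^ e - 1 := Nat.le_of_dvd (Nat.sub_pos_of_lt hge) hdvd
      _ ≤ g ^ e := Nat.sub_le _ _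
  rw [← log_pow, ← log_pow]
  exact log_le_log (by positivity) (by exact_mod_cast hpow)

lemma sum_rpow_neg_le_of_orderOf_eq {g e : ℕ} (hg : 2 ≤ g) (he : e ≠ 0) {s : ℝ} (hs : 0 ≤ s)
    {R : Finset ℕ} (hR : ∀ p ∈ R, p.Prime ∧ orderOf (g : ZMod p) = e ∧ e ^ 3 < p) :
    ∑ p ∈ R, (p : ℝ) ^ (-s) ≤ log g / log 2 * (e : ℝ) ^ (1 - 3 * s) := by
  have he0 : (0 : ℝ) < e := by exact_mod_cast Nat.pos_of_ne_zero he
  calc ∑ p ∈ R, (p : ℝ) ^ (-s) ≤ #R • ((e : ℝ) ^ 3) ^ (-s) := by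
        refine sum_le_card_nsmul _ _ _ fun p hp ↦ ?_
        exact rpow_le_rpow_of_nonpos (by positivity) (by exact_mod_cast (hR p hp).2.2.le)
          (neg_nonpos.2 hs)
    _ = #R * (e : ℝ) ^ (-(3 * s)) := by
        rw [nsmul_eq_mul, ← rpow_natCast, ← rpow_mul he0.le, mul_neg, Nat.cast_ofNat]
    _ ≤ e * log g / log 2 * (e : ℝ) ^ (-(3 * s)) := by
        gcongr
        rw [le_div_iff₀ (log_pos one_lt_two)]
        exact card_mul_log_two_le_of_orderOf_eq hg he fun p hp ↦ ⟨(hR p hp).1, (hR p hp).2.1⟩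
    _ = log g / log 2 * (e : ℝ) ^ (1 - 3 * s) := by
        rw [sub_eq_add_neg, rpow_add he0, rpow_one]
        ring

lemma orderOf_natCast_pos {g p : ℕ} (hp : p.Prime) (hgp : ¬ p ∣ g) :
    0 < orderOf (g : ZMod p) := by
  have : Fact p.Prime := ⟨hp⟩
  refine Nat.pos_of_dvd_of_pos (ZMod.orderOf_dvd_card_sub_one ?_) (Nat.sub_pos_of_lt hp.one_lt)
  rwa [Ne, ZMod.natCast_eq_zero_iff]

lemma exists_sum_rpow_neg_le_of_not_hasLargeOrder {g : ℕ} (hg : 2 ≤ g) {s : ℝ} (hs : 2 / 3 < s) :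
    ∃ C : ℝ, 0 ≤ C ∧ ∀ Q : Finset ℕ, (∀ p ∈ Q, p.Prime ∧ ¬ HasLargeOrder g p) →
      ∑ p ∈ Q, (p : ℝ) ^ (-s) ≤ C := by
  have hsummable : Summable fun e : ℕ ↦ log g / log 2 * (e : ℝ) ^ (1 - 3 * s) :=
    (summable_nat_rpow.2 (by linarith)).mul_left _
  have hnonneg : ∀ e : ℕ, 0 ≤ log g / log 2 * (e : ℝ) ^ (1 - 3 * s) := fun e ↦ by positivity
  refine ⟨#g.primeFactors + ∑' e : ℕ, log g / log 2 * (e : ℝ) ^ (1 - 3 * s),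
    add_nonneg (Nat.cast_nonneg _) (tsum_nonneg hnonneg), fun Q hQ ↦ ?_⟩
  rw [← sum_filter_add_sum_filter_not Q (· ∣ g)]
  refine add_le_add ?_ ?_
  · calc ∑ p ∈ Q with p ∣ g, (p : ℝ) ^ (-s) ≤ #{p ∈ Q | p ∣ g} • 1 := by
          refine sum_le_card_nsmul _ _ _ fun p hp ↦ rpow_le_one_of_one_le_of_nonpos ?_ (by linarith)
          exact_mod_cast (hQ p (mem_filter.1 hp).1).1.one_le
      _ ≤ #g.primeFactors := by
          rw [nsmul_one]
          refine Nat.cast_le.2 (card_le_card fun p hp ↦ ?_)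
          obtain ⟨hpQ, hpg⟩ := mem_filter.1 hp
          exact Nat.mem_primeFactors.2 ⟨(hQ p hpQ).1, hpg, by omega⟩
  · rw [← sum_fiberwise_of_maps_to fun p ↦ mem_image_of_mem fun p ↦ orderOf (g : ZMod p)]
    refine (sum_le_sum fun e he ↦ ?_).trans (hsummable.sum_le_tsum _ fun e _ ↦ hnonneg e)
    obtain ⟨q, hq, rfl⟩ := mem_image.1 he
    obtain ⟨hqQ, hqg⟩ := mem_filter.1 hq
    refine sum_rpow_neg_le_of_orderOf_eq hg (orderOf_natCast_pos (hQ q hqQ).1 hqg).ne'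
      (by linarith) fun p hp ↦ ?_
    obtain ⟨hpQ, hpe⟩ := mem_filter.1 hp
    obtain ⟨hprime, hlarge⟩ := hQ p (mem_filter.1 hpQ).1
    exact ⟨hprime, hpe, hpe ▸ not_le.1 hlarge⟩

end SquareExponents

/-! ### Averaging the singular factor over differences -/

section Averaging

lemma dvd_dist_iff_modEq {p a b : ℕ} : p ∣ Nat.dist a b ↔ a ≡ b [MOD p] := by
  rcases le_total a b with h | h
  · rw [Nat.dist_eq_sub_of_le h, Nat.modEq_iff_dvd' h]
  · rw [Nat.dist_eq_sub_of_le_right h, Nat.ModEq.comm, Nat.modEq_iff_dvd' h]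

lemma exists_sum_offDiag_singularFactor_sq_le {δ : ℝ} (hδ : 0 < δ) :
    ∃ C : ℝ, 0 < C ∧ ∀ (t : Finset ℕ) (L : ℕ), (∀ v ∈ t, v ≤ 2 ^ L) →
      ∑ u ∈ t.offDiag, singularFactor (Nat.dist u.1 u.2) ^ 2 ≤ C * (#t ^ 2 +
        ∑ p ∈ Nat.primesLE L, #{u ∈ t ×ˢ t | u.1 ≡ u.2 [MOD p]} * (p : ℝ) ^ (δ - 1)) := by
  obtain ⟨C, hC0, hC⟩ := exists_singularFactor_sq_le hδ
  refine ⟨C, hC0, fun t L ht ↦ ?_⟩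
  have hterm : ∀ u ∈ t.offDiag, singularFactor (Nat.dist u.1 u.2) ^ 2
      ≤ C * (1 + ∑ p ∈ Nat.primesLE L, if u.1 ≡ u.2 [MOD p] then (p : ℝ) ^ (δ - 1) else 0) := by
    intro u hu
    obtain ⟨hu1, hu2, hne⟩ := mem_offDiag.1 hu
    have hle : Nat.dist u.1 u.2 ≤ 2 ^ L := by
      have := ht _ hu1
      have := ht _ hu2
      rw [Nat.dist]
      omega
    refine (hC _ L (Nat.dist_pos_of_ne hne).ne' hle).trans ?_
    rw [← sum_filter]
    gcongr
    intro p hp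
    simp only [mem_filter, Nat.mem_primeFactors, Nat.mem_primesLE, dvd_dist_iff_modEq] at hp ⊢
    tauto
  have hcount : ∀ p : ℕ, ∑ u ∈ t.offDiag, (if u.1 ≡ u.2 [MOD p] then (p : ℝ) ^ (δ - 1) else 0)
      ≤ #{u ∈ t ×ˢ t | u.1 ≡ u.2 [MOD p]} * (p : ℝ) ^ (δ - 1) := by
    intro p
    rw [← sum_filter, sum_const, nsmul_eq_mul]
    gcongr
    exact fun u hu ↦ mem_product.2 ((mem_offDiag.1 hu).imp_right And.left)
  calc ∑ u ∈ t.offDiag, singularFactor (Nat.dist u.1 u.2) ^ 2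
      ≤ ∑ u ∈ t.offDiag, C * (1 + ∑ p ∈ Nat.primesLE L,
          if u.1 ≡ u.2 [MOD p] then (p : ℝ) ^ (δ - 1) else 0) := sum_le_sum hterm
    _ = C * (#t.offDiag + ∑ p ∈ Nat.primesLE L, ∑ u ∈ t.offDiag,
          if u.1 ≡ u.2 [MOD p] then (p : ℝ) ^ (δ - 1) else 0) := by
        rw [← mul_sum, sum_add_distrib, sum_const, nsmul_one, sum_comm]
    _ ≤ _ := by
        gcongr with p
        · rw [offDiag_card, sq]
          exact_mod_cast Nat.sub_le _ _
        · exact hcount p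

/-- The values `g ^ (m₁ ^ 2) + g ^ (m₂ ^ 2)` with `1 ≤ m₁ ≤ M / 2 < m₂ ≤ M`. Separating the two
exponents makes the value determine the pair. -/
def powSqSums (g M : ℕ) : Finset ℕ :=
  (Icc 1 (M / 2) ×ˢ Ioc (M / 2) M).image fun m ↦ g ^ (m.1 ^ 2) + g ^ (m.2 ^ 2)

variable {g M : ℕ}

lemma exists_of_mem_powSqSums {v : ℕ} (hv : v ∈ powSqSums g M) :
    ∃ m₁ m₂, m₁ ≤ M ∧ m₂ ≤ M ∧ v = g ^ (m₁ ^ 2) + g ^ (m₂ ^ 2) := by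
  obtain ⟨m, hm, rfl⟩ := mem_image.1 hv
  simp only [mem_product, mem_Icc, mem_Ioc] at hm
  exact ⟨m.1, m.2, by omega, by omega, rfl⟩

lemma le_of_mem_powSqSums (hg : 2 ≤ g) {v : ℕ} (hv : v ∈ powSqSums g M) :
    v ≤ 2 * g ^ (M ^ 2) := by
  obtain ⟨m₁, m₂, h₁, h₂, rfl⟩ := exists_of_mem_powSqSums hv
  rw [two_mul]
  gcongr <;> omega

lemma pow_sq_add_pow_sq_lt (hg : 2 ≤ g) {a b c d : ℕ} (hab : a < b) (hbd : b < d) :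
    g ^ (a ^ 2) + g ^ (b ^ 2) < g ^ (c ^ 2) + g ^ (d ^ 2) := by
  have hpow : g ^ (a ^ 2) < g ^ (b ^ 2) :=
    Nat.pow_lt_pow_right hg (Nat.pow_lt_pow_left hab two_ne_zero)
  have hc : 0 < g ^ (c ^ 2) := Nat.pow_pos (by omega)
  have hd : 2 * g ^ (b ^ 2) ≤ g ^ (d ^ 2) :=
    calc 2 * g ^ (b ^ 2) ≤ g ^ (b ^ 2 + 1) := by
          rw [pow_succ' g]
          exact Nat.mul_le_mul_right _ hg
      _ ≤ g ^ (d ^ 2) := Nat.pow_le_pow_right (by omega) (Nat.pow_lt_pow_left hbd two_ne_zero)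
  omega

lemma injOn_pow_sq_add_pow_sq (hg : 2 ≤ g) :
    Set.InjOn (fun m : ℕ × ℕ ↦ g ^ (m.1 ^ 2) + g ^ (m.2 ^ 2)) {m | m.1 < m.2} := by
  rintro ⟨a, b⟩ hab ⟨c, d⟩ hcd h
  dsimp only at h
  obtain rfl : b = d := by
    rcases lt_trichotomy b d with hbd | hbd | hbd
    · exact absurd h (pow_sq_add_pow_sq_lt hg hab hbd).ne
    · exact hbd
    · exact absurd h (pow_sq_add_pow_sq_lt hg hcd hbd).ne'
  have hac : a ^ 2 = c ^ 2 := Nat.pow_right_injective hg (Nat.add_right_cancel h)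
  rw [Nat.pow_left_injective two_ne_zero hac]

lemma card_powSqSums_le (g M : ℕ) : #(powSqSums g M) ≤ M ^ 2 := by
  refine card_image_le.trans ?_
  rw [card_product, Nat.card_Icc, Nat.card_Ioc, sq]
  exact Nat.mul_le_mul (by omega) (Nat.sub_le _ _)

lemma sq_le_card_powSqSums (hg : 2 ≤ g) (hM : 2 ≤ M) : M ^ 2 ≤ 8 * #(powSqSums g M) := by
  rw [powSqSums, card_image_of_injOn, card_product, Nat.card_Icc, Nat.card_Ioc]
  · calc M ^ 2 = M * M := sq M
      _ ≤ (4 * (M / 2 + 1 - 1)) * (2 * (M - M / 2)) := Nat.mul_le_mul (by omega) (by omega)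
      _ = 8 * ((M / 2 + 1 - 1) * (M - M / 2)) := by ring
  · refine (injOn_pow_sq_add_pow_sq hg).mono fun m hm ↦ ?_
    simp only [mem_coe, mem_product, mem_Icc, mem_Ioc] at hm
    exact hm.1.2.trans_lt hm.2.1

lemma card_filter_powSqSums_le {R : Type*} [Ring R] [DecidableEq R] {N : ℕ}
    (hN : ∀ c : R, #{m ∈ Icc 1 M | (g : R) ^ (m ^ 2) = c} ≤ N) (c : R) :
    #{v ∈ powSqSums g M | ((v : ℕ) : R) = c} ≤ M * N := by
  rw [powSqSums, filter_image]
  refine card_image_le.trans ?_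
  rw [card_filter, sum_product_right]
  have hfibre : ∀ n ∈ Ioc (M / 2) M, ∑ m ∈ Icc 1 (M / 2),
      (if ((g ^ (m ^ 2) + g ^ (n ^ 2) : ℕ) : R) = c then 1 else 0) ≤ N := by
    intro n _
    rw [← card_filter]
    refine (card_le_card ?_).trans (hN (c - g ^ (n ^ 2)))
    intro m hm
    simp only [mem_filter, mem_Icc, Nat.cast_add, Nat.cast_pow, eq_sub_iff_add_eq] at hm ⊢
    exact ⟨⟨hm.1.1, hm.1.2.trans (Nat.div_le_self _ _)⟩, hm.2⟩
  calc _ ≤ #(Ioc (M / 2) M) • N := sum_le_card_nsmul _ _ _ hfibre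
    _ ≤ M * N := by
        rw [Nat.card_Ioc, smul_eq_mul]
        gcongr
        exact Nat.sub_le _ _

lemma card_filter_modEq_le {t : Finset ℕ} {p B : ℕ}
    (hB : ∀ c : ZMod p, #{v ∈ t | ((v : ℕ) : ZMod p) = c} ≤ B) :
    #{u ∈ t ×ˢ t | u.1 ≡ u.2 [MOD p]} ≤ #t * B := by
  rw [card_filter, sum_product_right, ← smul_eq_mul]
  refine sum_le_card_nsmul _ _ _ fun w _ ↦ ?_
  rw [← card_filter]
  simpa only [ZMod.natCast_eq_natCast_iff] using hB w

lemma exists_card_filter_modEq_powSqSums_le {κ : ℝ} (hκ : 0 ≤ κ) :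
    ∃ C : ℝ, 0 < C ∧ ∀ g p M : ℕ, p.Prime → HasLargeOrder g p → (p : ℝ) ≤ κ * M ^ 2 →
      (#{u ∈ powSqSums g M ×ˢ powSqSums g M | u.1 ≡ u.2 [MOD p]} : ℝ)
        ≤ C * M ^ 4 * (p : ℝ) ^ (-(1 / 10) : ℝ) := by
  obtain ⟨C, hC0, hC⟩ := exists_card_filter_pow_sq_eq_le_rpow hκ
  refine ⟨C, hC0, fun g p M hp hgp hpM ↦ ?_⟩
  set N := ⌊C * M * (p : ℝ) ^ (-(1 / 10) : ℝ)⌋₊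
  have hN : (N : ℝ) ≤ C * M * (p : ℝ) ^ (-(1 / 10) : ℝ) := Nat.floor_le (by positivity)
  have hcount : #{u ∈ powSqSums g M ×ˢ powSqSums g M | u.1 ≡ u.2 [MOD p]}
      ≤ #(powSqSums g M) * (M * N) :=
    card_filter_modEq_le <| card_filter_powSqSums_le
      fun c ↦ Nat.le_floor (hC g p M hp hgp hpM c)
  calc (#{u ∈ powSqSums g M ×ˢ powSqSums g M | u.1 ≡ u.2 [MOD p]} : ℝ)
      ≤ #(powSqSums g M) * (M * N) := by exact_mod_cast hcount
    _ ≤ M ^ 2 * (M * (C * M * (p : ℝ) ^ (-(1 / 10) : ℝ))) := by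
        gcongr
        exact_mod_cast card_powSqSums_le g M
    _ = C * M ^ 4 * (p : ℝ) ^ (-(1 / 10) : ℝ) := by ring

lemma exists_sum_hasLargeOrder_card_filter_modEq_le {κ : ℝ} (hκ : 0 ≤ κ) :
    ∃ C : ℝ, 0 ≤ C ∧ ∀ g M L : ℕ, (L : ℝ) ≤ κ * M ^ 2 →
      ∑ p ∈ Nat.primesLE L with HasLargeOrder g p,
        #{u ∈ powSqSums g M ×ˢ powSqSums g M | u.1 ≡ u.2 [MOD p]} *
          (p : ℝ) ^ (1 / 20 - 1 : ℝ) ≤ C * M ^ 4 := by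
  obtain ⟨C, hC0, hC⟩ := exists_card_filter_modEq_powSqSums_le hκ
  have hsummable : Summable fun p : ℕ ↦ (p : ℝ) ^ (-(21 / 20) : ℝ) :=
    summable_nat_rpow.2 (by norm_num)
  have hnonneg : ∀ p : ℕ, 0 ≤ (p : ℝ) ^ (-(21 / 20) : ℝ) := fun p ↦ by positivity
  refine ⟨C * ∑' p : ℕ, (p : ℝ) ^ (-(21 / 20) : ℝ), mul_nonneg hC0.le (tsum_nonneg hnonneg),
    fun g M L hL ↦ ?_⟩
  calc _ ≤ ∑ p ∈ Nat.primesLE L with HasLargeOrder g p,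
          C * M ^ 4 * (p : ℝ) ^ (-(21 / 20) : ℝ) := by
        refine sum_le_sum fun p hp ↦ ?_
        obtain ⟨hpL, hgp⟩ := mem_filter.1 hp
        obtain ⟨hpL, hprime⟩ := Nat.mem_primesLE.1 hpL
        have hp0 : (0 : ℝ) < p := by exact_mod_cast hprime.pos
        rw [show (-(21 / 20) : ℝ) = -(1 / 10) + (1 / 20 - 1) by norm_num, rpow_add hp0,
          ← mul_assoc]
        gcongr
        exact hC g p M hprime hgp ((Nat.cast_le.2 hpL).trans hL)
    _ ≤ C * M ^ 4 * ∑' p : ℕ, (p : ℝ) ^ (-(21 / 20) : ℝ) := by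
        rw [← mul_sum]
        gcongr
        exact hsummable.sum_le_tsum _ fun p _ ↦ hnonneg p
    _ = _ := mul_right_comm _ _ _

lemma exists_sum_not_hasLargeOrder_card_filter_modEq_le (hg : 2 ≤ g) :
    ∃ C : ℝ, 0 ≤ C ∧ ∀ M L : ℕ,
      ∑ p ∈ Nat.primesLE L with ¬ HasLargeOrder g p,
        #{u ∈ powSqSums g M ×ˢ powSqSums g M | u.1 ≡ u.2 [MOD p]} *
          (p : ℝ) ^ (1 / 20 - 1 : ℝ) ≤ C * M ^ 4 := by
  obtain ⟨C, hC0, hC⟩ :=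
    exists_sum_rpow_neg_le_of_not_hasLargeOrder hg (show (2 / 3 : ℝ) < 19 / 20 by norm_num)
  refine ⟨C, hC0, fun M L ↦ ?_⟩
  have hcard : ∀ p : ℕ,
      #{u ∈ powSqSums g M ×ˢ powSqSums g M | u.1 ≡ u.2 [MOD p]} ≤ M ^ 4 := fun p ↦
    calc _ ≤ #(powSqSums g M ×ˢ powSqSums g M) := card_filter_le _ _
      _ ≤ M ^ 2 * M ^ 2 := by
          rw [card_product]
          exact Nat.mul_le_mul (card_powSqSums_le g M) (card_powSqSums_le g M)
      _ = M ^ 4 := by ring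
  calc _ ≤ ∑ p ∈ Nat.primesLE L with ¬ HasLargeOrder g p,
          M ^ 4 * (p : ℝ) ^ (-(19 / 20) : ℝ) := by
        refine sum_le_sum fun p _ ↦ ?_
        rw [show (1 / 20 - 1 : ℝ) = -(19 / 20) by norm_num]
        gcongr
        exact_mod_cast hcard p
    _ ≤ C * M ^ 4 := by
        rw [← mul_sum, mul_comm]
        gcongr
        refine hC _ fun p hp ↦ ?_
        obtain ⟨hpL, hgp⟩ := mem_filter.1 hp
        exact ⟨(Nat.mem_primesLE.1 hpL).2, hgp⟩

lemma le_two_pow_of_mem_powSqSums (hg : 2 ≤ g) {v : ℕ} (hv : v ∈ powSqSums g M) :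
    v ≤ 2 ^ (g * M ^ 2 + 1) := by
  rw [pow_succ', pow_mul]
  exact (le_of_mem_powSqSums hg hv).trans
    (Nat.mul_le_mul_left 2 (Nat.pow_le_pow_left Nat.lt_two_pow_self.le _))

lemma exists_sum_offDiag_powSqSums_singularFactor_sq_le (hg : 2 ≤ g) :
    ∃ C : ℝ, 0 < C ∧ ∀ M : ℕ, 2 ≤ M →
      ∑ u ∈ (powSqSums g M).offDiag, singularFactor (Nat.dist u.1 u.2) ^ 2
        ≤ C * #(powSqSums g M) ^ 2 := by
  obtain ⟨C₁, hC₁, hsum⟩ :=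
    exists_sum_offDiag_singularFactor_sq_le (show (0 : ℝ) < 1 / 20 by norm_num)
  obtain ⟨C₂, hC₂, hlarge⟩ :=
    exists_sum_hasLargeOrder_card_filter_modEq_le (show (0 : ℝ) ≤ g + 1 by positivity)
  obtain ⟨C₃, hC₃, hsmall⟩ := exists_sum_not_hasLargeOrder_card_filter_modEq_le hg
  refine ⟨C₁ * (1 + 64 * (C₂ + C₃)), by positivity, fun M hM ↦ ?_⟩
  have hL : ((g * M ^ 2 + 1 : ℕ) : ℝ) ≤ (g + 1) * M ^ 2 := by
    have : 1 ≤ M ^ 2 := Nat.one_le_pow _ _ (by omega)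
    push_cast
    rw [add_one_mul]
    gcongr
    exact_mod_cast this
  have hM4 : (M : ℝ) ^ 4 ≤ 64 * #(powSqSums g M) ^ 2 :=
    calc (M : ℝ) ^ 4 = ((M : ℝ) ^ 2) ^ 2 := by ring
      _ ≤ (8 * (#(powSqSums g M) : ℝ)) ^ 2 := by
          gcongr
          exact_mod_cast sq_le_card_powSqSums hg hM
      _ = 64 * (#(powSqSums g M) : ℝ) ^ 2 := by ring
  calc ∑ u ∈ (powSqSums g M).offDiag, singularFactor (Nat.dist u.1 u.2) ^ 2
      ≤ C₁ * (#(powSqSums g M) ^ 2 + (C₂ + C₃) * M ^ 4) := by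
        refine (hsum _ _ fun v hv ↦ le_two_pow_of_mem_powSqSums hg hv).trans ?_
        gcongr
        rw [← sum_filter_add_sum_filter_not _ (HasLargeOrder g), add_mul]
        exact add_le_add (hlarge g M _ hL) (hsmall M _)
    _ ≤ C₁ * (#(powSqSums g M) ^ 2 + (C₂ + C₃) * (64 * #(powSqSums g M) ^ 2)) := by gcongr
    _ = C₁ * (1 + 64 * (C₂ + C₃)) * #(powSqSums g M) ^ 2 := by ring

end Averaging

/-! ### The second moment -/

section SecondMoment

open scoped Pointwise

lemma addEnergy_eq_sum_product {α : Type*} [DecidableEq α] [Add α] (s t : Finset α) :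
    addEnergy s t = ∑ u ∈ t ×ˢ t, #{v ∈ s ×ˢ s | v.1 + u.1 = v.2 + u.2} := by
  simp only [addEnergy, card_filter]
  exact sum_product_right _ _ _

lemma addEnergy_eq_card_mul_card_add {α : Type*} [DecidableEq α] [Add α] [IsRightCancelAdd α]
    (s t : Finset α) :
    addEnergy s t = #s * #t + ∑ u ∈ t.offDiag, #{v ∈ s ×ˢ s | v.1 + u.1 = v.2 + u.2} := by
  rw [addEnergy_eq_sum_product, ← diag_union_offDiag, sum_union (disjoint_diag_offDiag t), sum_diag]
  congr 1
  simp only [add_left_inj]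
  have hdiag : {v ∈ s ×ˢ s | v.1 = v.2} = s.diag := by
    ext v
    simp only [mem_filter, mem_product, mem_diag]
    grind
  rw [sum_const, hdiag, diag_card, smul_eq_mul, mul_comm]

lemma card_filter_primesLE_add_eq_add_le {a b : ℕ} (hab : a ≠ b) (y : ℕ) :
    #{v ∈ Nat.primesLE y ×ˢ Nat.primesLE y | v.1 + a = v.2 + b}
      ≤ #{n ∈ range y | n.Prime ∧ (n + Nat.dist a b).Prime} := by
  refine card_le_card_of_injOn (fun v ↦ min v.1 v.2) ?_ ?_
  · rintro ⟨p, q⟩ hpq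
    simp only [coe_filter, Set.mem_ofPred_eq, mem_product, Nat.mem_primesLE, mem_range] at hpq ⊢
    obtain ⟨⟨⟨hpy, hp⟩, hqy, hq⟩, hsum⟩ := hpq
    rcases le_total p q with h | h
    · obtain rfl : p + Nat.dist a b = q := by rw [Nat.dist]; omega
      rw [min_eq_left h]
      exact ⟨by rw [Nat.dist] at *; omega, hp, hq⟩
    · obtain rfl : q + Nat.dist a b = p := by rw [Nat.dist]; omega
      rw [min_eq_right h]
      exact ⟨by rw [Nat.dist] at *; omega, hq, hp⟩
  · rintro ⟨p, q⟩ hpq ⟨p', q'⟩ hpq' h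
    have hsum : p + a = q + b := (mem_filter.1 hpq).2
    have hsum' : p' + a = q' + b := (mem_filter.1 hpq').2
    simp only [Prod.mk.injEq] at h ⊢
    omega

lemma eventually_primeCounting_le_two_mul :
    ∀ᶠ y : ℕ in atTop, (Nat.primeCounting y : ℝ) ≤ 2 * (y / log y) := by
  have hlog4 : log 4 + 1 / 2 ≤ 2 := by
    rw [show (4 : ℝ) = 2 ^ 2 by norm_num, log_pow, Nat.cast_ofNat]
    linarith [log_two_lt_d9]
  filter_upwards [tendsto_natCast_atTop_atTop.eventually
    (Chebyshev.eventually_primeCounting_le (show (0 : ℝ) < 1 / 2 by norm_num))] with y hy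
  rw [Nat.floor_natCast, mul_div_assoc] at hy
  have := log_natCast_nonneg y
  exact hy.trans (by gcongr)

lemma eventually_le_primeCounting :
    ∀ᶠ y : ℕ in atTop, y / (2 * log y) ≤ (Nat.primeCounting y : ℝ) := by
  have hlog : ∀ᶠ y : ℝ in atTop, log y ≤ 1 / 8 * y := by
    filter_upwards [isLittleO_log_id_atTop.bound (show (0 : ℝ) < 1 / 8 by norm_num),
      eventually_ge_atTop 0] with y hy hy0
    rw [id, norm_of_nonneg hy0] at hy
    exact (le_abs_self _).trans hy
  have htendsto : Tendsto (fun y : ℕ ↦ (y : ℝ) + 1) atTop atTop :=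
    tendsto_atTop_add_const_right atTop 1 tendsto_natCast_atTop_atTop
  filter_upwards [htendsto.eventually hlog, eventually_ge_atTop 2] with y hy hy2
  have hy2' : (2 : ℝ) ≤ y := by exact_mod_cast hy2
  have hlog0 : 0 < log (y : ℝ) := log_pos (by linarith)
  calc y / (2 * log y) = (y / 2) / log y := by rw [div_div]
    _ ≤ (y * log 2 - log (y + 1)) / log y := by
        gcongr
        nlinarith [log_two_gt_d9]
    _ ≤ Nat.primeCounting y := Chebyshev.pi_ge y

lemma exists_eventually_addEnergy_primesLE_le : ∃ C : ℝ, 0 < C ∧ ∀ᶠ y : ℕ in atTop, ∀ t : Finset ℕ,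
    (addEnergy (Nat.primesLE y) t : ℝ) ≤ 2 * (y / log y) * #t +
      C * (y / log y ^ 2) * ∑ u ∈ t.offDiag, singularFactor (Nat.dist u.1 u.2) ^ 2 := by
  obtain ⟨C, hC0, hC⟩ := exists_eventually_card_prime_pairs_le
  refine ⟨C, hC0, ?_⟩
  filter_upwards [hC, eventually_primeCounting_le_two_mul] with y hpairs hcount t
  rw [addEnergy_eq_card_mul_card_add, Nat.primesLE_card_eq_primeCounting, mul_sum]
  push_cast
  gcongr with u hu
  obtain ⟨-, -, hne⟩ := mem_offDiag.1 hu
  exact (Nat.cast_le.2 (card_filter_primesLE_add_eq_add_le hne y)).trans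
    (hpairs _ (Nat.dist_pos_of_ne hne).ne')

lemma exists_mul_le_card_primesLE_add {B D : ℝ} (hB : 0 < B) (hD : 0 ≤ D) :
    ∃ c : ℝ, 0 < c ∧ ∀ᶠ y : ℕ in atTop, ∀ t : Finset ℕ, log y ≤ B * #t →
      ∑ u ∈ t.offDiag, singularFactor (Nat.dist u.1 u.2) ^ 2 ≤ D * #t ^ 2 →
        c * y ≤ #(Nat.primesLE y + t) := by
  obtain ⟨C, hC0, hC⟩ := exists_eventually_addEnergy_primesLE_le
  set K := 2 * B + C * D
  have hK : 0 < K := by positivity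
  refine ⟨(4 * K)⁻¹, by positivity, ?_⟩
  filter_upwards [hC, eventually_le_primeCounting, eventually_ge_atTop 2]
    with y henergy hcount hy t htB htD
  have hy0 : (0 : ℝ) < y := by positivity
  have hlog : 0 < log (y : ℝ) := log_pos (by exact_mod_cast hy)
  have ht : (0 : ℝ) < #t := pos_of_mul_pos_right (hlog.trans_le htB) hB.le
  have hE : (addEnergy (Nat.primesLE y) t : ℝ) ≤ K * (y / log y ^ 2 * #t ^ 2) :=
    calc (addEnergy (Nat.primesLE y) t : ℝ)
        ≤ 2 * (y / log y) * #t + C * (y / log y ^ 2) * (D * #t ^ 2) := by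
          refine (henergy t).trans ?_
          gcongr
      _ = y / log y ^ 2 * (2 * log y * #t + C * D * #t ^ 2) := by
          field_simp
      _ ≤ y / log y ^ 2 * (2 * (B * #t) * #t + C * D * #t ^ 2) := by gcongr
      _ = K * (y / log y ^ 2 * #t ^ 2) := by ring
  have hCS : y / 4 * (y / log y ^ 2 * (#t : ℝ) ^ 2)
      ≤ #(Nat.primesLE y + t) * K * (y / log y ^ 2 * (#t : ℝ) ^ 2) :=
    calc y / 4 * (y / log y ^ 2 * (#t : ℝ) ^ 2)
        = (y / (2 * log y)) ^ 2 * (#t : ℝ) ^ 2 := by ring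
      _ ≤ (#(Nat.primesLE y) : ℝ) ^ 2 * (#t : ℝ) ^ 2 := by
          rw [Nat.primesLE_card_eq_primeCounting]
          gcongr
      _ ≤ (#(Nat.primesLE y + t) : ℝ) * addEnergy (Nat.primesLE y) t := by
          exact_mod_cast le_card_add_mul_addEnergy _ _
      _ ≤ #(Nat.primesLE y + t) * (K * (y / log y ^ 2 * #t ^ 2)) := by gcongr
      _ = _ := (mul_assoc _ _ _).symm
  rw [inv_mul_le_iff₀ (by positivity)]
  linarith [le_of_mul_le_mul_right hCS (by positivity)]

lemma eventually_exists_two_mul_pow_sq_le {g : ℕ} (hg : 2 ≤ g) :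
    ∀ᶠ y : ℕ in atTop, ∃ M : ℕ, 2 ≤ M ∧ 2 * g ^ (M ^ 2) ≤ y ∧ log y ≤ 4 * log g * M ^ 2 := by
  filter_upwards [eventually_ge_atTop (2 * g ^ 4)] with y hy
  have hg4 : 0 < g ^ 4 := by positivity
  set k := Nat.log g (y / 2)
  have hk : 2 * 2 ≤ k := Nat.le_log_of_pow_le hg (show g ^ 4 ≤ y / 2 by omega)
  set M := Nat.sqrt k
  have hM : 2 ≤ M := Nat.le_sqrt.2 hk
  have hlower : g ^ (M ^ 2) ≤ y / 2 :=
    (Nat.pow_le_pow_right (by omega) (Nat.sqrt_le' k)).trans (Nat.pow_log_le_self g (by omega))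
  have hupper : y ≤ g ^ (4 * M ^ 2) :=
    calc y ≤ 2 * g ^ (k + 1) := by
          have : y / 2 < g ^ (k + 1) := Nat.lt_pow_succ_log_self hg (y / 2)
          omega
      _ ≤ g * g ^ (k + 1) := by gcongr
      _ = g ^ (k + 2) := (pow_succ' g (k + 1)).symm
      _ ≤ g ^ (4 * M ^ 2) := by
          have : k < (M + 1) ^ 2 := Nat.lt_succ_sqrt' k
          exact Nat.pow_le_pow_right (by omega) (by nlinarith)
  refine ⟨M, hM, by omega, ?_⟩
  have hy0 : (0 : ℝ) < y := by exact_mod_cast (by omega : 0 < y)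
  calc log y ≤ log (g ^ (4 * M ^ 2)) := log_le_log hy0 (by exact_mod_cast hupper)
    _ = 4 * log g * M ^ 2 := by
        rw [log_pow]
        push_cast
        ring

lemma exists_mul_le_card_primesLE_add_powSqSums {g : ℕ} (hg : 2 ≤ g) :
    ∃ c : ℝ, 0 < c ∧ ∀ᶠ y : ℕ in atTop, ∃ M : ℕ, 2 * g ^ (M ^ 2) ≤ y ∧
      c * y ≤ #(Nat.primesLE y + powSqSums g M) := by
  have hlog : 0 < log (g : ℝ) := log_pos (by exact_mod_cast hg)
  obtain ⟨D, hD0, hD⟩ := exists_sum_offDiag_powSqSums_singularFactor_sq_le hg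
  obtain ⟨c, hc0, hc⟩ := exists_mul_le_card_primesLE_add
    (show (0 : ℝ) < 32 * log g by positivity) hD0.le
  refine ⟨c, hc0, ?_⟩
  filter_upwards [hc, eventually_exists_two_mul_pow_sq_le hg] with y hy ⟨M, hM, hMy, hyM⟩
  refine ⟨M, hMy, hy _ ?_ (hD M hM)⟩
  calc log y ≤ 4 * log g * M ^ 2 := hyM
    _ ≤ 4 * log g * (8 * #(powSqSums g M)) := by
        gcongr
        exact_mod_cast sq_le_card_powSqSums hg hM
    _ = 32 * log g * #(powSqSums g M) := by ring

lemma exists_of_mem_primesLE_add_powSqSums {g M y n : ℕ} (hg : 2 ≤ g)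
    (hMy : 2 * g ^ (M ^ 2) ≤ y) (hn : n ∈ Nat.primesLE y + powSqSums g M) :
    n ∈ Icc 1 (2 * y) ∧
      ∃ p m₁ m₂ : ℕ, p.Prime ∧ n = p + g ^ (m₁ ^ 2) + g ^ (m₂ ^ 2) := by
  obtain ⟨p, hp, v, hv, rfl⟩ := mem_add.1 hn
  obtain ⟨hpy, hprime⟩ := Nat.mem_primesLE.1 hp
  have hvy := (le_of_mem_powSqSums hg hv).trans hMy
  obtain ⟨m₁, m₂, -, -, rfl⟩ := exists_of_mem_powSqSums hv
  exact ⟨mem_Icc.2 ⟨hprime.pos.trans_le (Nat.le_add_right _ _), by omega⟩,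
    p, m₁, m₂, hprime, (add_assoc _ _ _).symm⟩

end SecondMoment

end Romanoff

/-- For each fixed integer `g ≥ 2`, the set of natural numbers representable as
`p + g^(m₁²) + g^(m₂²)` with `p` prime and `m₁, m₂` natural numbers has positive lower
asymptotic density. -/
theorem romanoff_type_positive_lower_density_general (g : ℕ) (hg : 2 ≤ g) :
    ∃ c : ℝ, 0 < c ∧ ∃ x₀ : ℕ, ∀ x : ℕ, x₀ ≤ x →
      c * x ≤ ((Finset.Icc 1 x).filter
        (fun n => ∃ p m₁ m₂ : ℕ, p.Prime ∧ n = p + g ^ (m₁ ^ 2) + g ^ (m₂ ^ 2))).card := by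
  obtain ⟨c, hc0, hc⟩ := Romanoff.exists_mul_le_card_primesLE_add_powSqSums hg
  obtain ⟨y₀, hy₀⟩ := Filter.eventually_atTop.1 hc
  refine ⟨c / 3, by positivity, 2 * y₀ + 2, fun x hx ↦ ?_⟩
  obtain ⟨M, hM, hcard⟩ := hy₀ (x / 2) (by omega)
  have hx3 : (x : ℝ) ≤ 3 * (x / 2 : ℕ) := by exact_mod_cast (by omega : x ≤ 3 * (x / 2))
  calc c / 3 * x ≤ c / 3 * (3 * (x / 2 : ℕ)) := by gcongr
    _ = c * (x / 2 : ℕ) := by ring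
    _ ≤ _ := hcard
    _ ≤ _ := by
        refine Nat.cast_le.2 (Finset.card_le_card fun n hn ↦ ?_)
        obtain ⟨hnx, hrep⟩ := Romanoff.exists_of_mem_primesLE_add_powSqSums hg hM hn
        exact Finset.mem_filter.2
          ⟨Finset.Icc_subset_Icc_right (Nat.mul_div_le x 2) hnx, hrep⟩
end

section
/- There exists a positive integer s such that every sufficiently large integer n can be represented in the form n = p₁ + ⋯ + p_s + 2^(m₁²) + ⋯ + 2^(m_{2s}²), where p₁, …, p_s are primes and m₁, …, m_{2s} are natural numbers. -/
/-!
All powers of two can be taken equal to `2 ^ (1 ^ 2) = 2`, which leaves Shnirel'man's theorem: for a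
suitable `s`, every large integer is a sum of exactly `s` primes.

**From density to a basis.** By Shnirel'man's inequality `1 - σ(A + B) ≤ (1 - σ A) (1 - σ B)`, a set
containing `0` with positive Schnirelmann density is a basis of `ℕ`. Applied to the sums of two
primes together with `0` and `1`, this writes every integer as a sum of a bounded number of primes
and ones; a reserved constant, together with the ones, is traded for primes `2` and `3` so that the
number of primes comes out right.

**Positive density of the sums of two primes.** Let `r(N)` be the number of representations of `N`
as a sum of two primes. Chebyshev's bound gives `∑_{N ≤ x} r(N) ≥ π(x / 2) ^ 2 ≫ x ^ 2 / log ^ 2 x`,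
and the sieve gives `r(N) ≪ (x / log ^ 2 x) (N / φ(N)) ^ 2` for `N ≤ x`. Since `N / φ(N)` has a
bounded fourth moment, the Cauchy-Schwarz inequality shows that `r(N) > 0` for `≫ x` of the `N ≤ x`.

**The sieve.** Selberg's upper bound sieve is used in its dual form. For a prime `p` with `ρ(p) < p`
excluded residue classes put `h(p) = ρ(p) / (p - ρ(p))`, and let `χ_p(n)` be `-1` if `n` lies in an
excluded class modulo `p` and `h(p)` otherwise. Then `χ_p` has mean `0` and mean square `h(p)`, so
by the Chinese remainder theorem the products `χ_d = ∏_{p ∣ d} χ_p` over squarefree `d` are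
orthogonal on long intervals. The sum of `χ_d` over `d ≤ D` equals `G = ∑_{d ≤ D} h(d)` at each
unsifted `n`, so summing its square over `n < X` bounds the number of unsifted `n` by
`X / G + O(D ^ 6)`. For sums of two primes, `G` is bounded from below by a sum of `2 ^ Ω(n) / n`,
and therefore by the square of a harmonic sum over integers coprime to `2 N`.
-/

open Finset
open scoped Pointwise

/-! ### Shnirel'man's inequality -/

section Density

variable {A B : Set ℕ}

theorem card_filter_Ioc_succ (p : ℕ → Prop) [DecidablePred p] (n : ℕ) :
    #{x ∈ Ioc 0 (n + 1) | p x} = #{x ∈ Ioc 0 n | p x} + if p (n + 1) then 1 else 0 := by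
  simp only [card_filter, sum_Ioc_succ_top n.zero_le]

open scoped Classical in
/-- In the induction on `n`, the witness `a` is the largest element of `A` up to `n`: the gap of `A`
that follows it contains the translates `a + b` with `b ∈ B`. -/
theorem exists_card_filter_add_le_card_filter_add (hA : 0 ∈ A) (hB : 0 ∈ B) (n : ℕ) :
    ∃ a ∈ A, a ≤ n ∧
      (#{x ∈ Ioc 0 n | x ∈ A} : ℝ) + schnirelmannDensity B * (a - #{x ∈ Ioc 0 n | x ∈ A}) +
        #{x ∈ Ioc 0 (n - a) | x ∈ B} ≤ #{x ∈ Ioc 0 n | x ∈ A + B} := by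
  induction n with
  | zero => exact ⟨0, hA, le_rfl, by simp⟩
  | succ n ih =>
    obtain ⟨a, haA, han, ih⟩ := ih
    by_cases hn : n + 1 ∈ A
    · have hnB : n + 1 ∈ A + B := by simpa using Set.add_mem_add hn hB
      have hgap := schnirelmannDensity_mul_le_card_filter (A := B) (n := n - a)
      rw [Nat.cast_sub han] at hgap
      refine ⟨n + 1, hn, le_rfl, ?_⟩
      simp only [card_filter_Ioc_succ, hn, hnB, if_true, Nat.sub_self, Ioc_self, filter_empty,
        card_empty]
      push_cast
      linarith
    · have hstep : (if n - a + 1 ∈ B then 1 else 0) ≤ if n + 1 ∈ A + B then 1 else 0 := by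
        split_ifs with hb hab
        · exact le_rfl
        · refine absurd ?_ hab
          simpa [show a + (n - a + 1) = n + 1 by lia] using Set.add_mem_add haA hb
        all_goals exact Nat.zero_le _
      refine ⟨a, haA, by lia, ?_⟩
      rw [Nat.succ_sub han]
      simp only [card_filter_Ioc_succ, hn, if_false, add_zero]
      have := (Nat.cast_le (α := ℝ)).2 hstep
      push_cast at this ⊢
      linarith

open scoped Classical in
theorem schnirelmannDensity_add_sub_mul_le (hA : 0 ∈ A) (hB : 0 ∈ B) :
    schnirelmannDensity A + schnirelmannDensity B - schnirelmannDensity A * schnirelmannDensity B ≤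
      schnirelmannDensity (A + B) := by
  refine le_schnirelmannDensity_iff.2 fun n hn => ?_
  rw [le_div_iff₀ (by exact_mod_cast hn)]
  obtain ⟨a, -, han, ha⟩ := exists_card_filter_add_le_card_filter_add hA hB n
  have hgap := schnirelmannDensity_mul_le_card_filter (A := B) (n := n - a)
  rw [Nat.cast_sub han] at hgap
  have hAn := schnirelmannDensity_mul_le_card_filter (A := A) (n := n)
  have hle := mul_le_mul_of_nonneg_left hAn (sub_nonneg.2 (schnirelmannDensity_le_one (A := B)))
  linarith

open scoped Classical in
theorem one_sub_schnirelmannDensity_nsmul_le (hA : 0 ∈ A) (k : ℕ) :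
    1 - schnirelmannDensity (k • A) ≤ (1 - schnirelmannDensity A) ^ k := by
  induction k with
  | zero => simpa using schnirelmannDensity_nonneg
  | succ k ih =>
    have hadd := schnirelmannDensity_add_sub_mul_le (Set.zero_mem_nsmul hA (n := k)) hA
    have hmul := mul_le_mul_of_nonneg_right ih
      (sub_nonneg.2 (schnirelmannDensity_le_one (A := A)))
    simp only [succ_nsmul, pow_succ]
    linarith

open scoped Classical in
theorem exists_nsmul_eq_univ (hA : 0 ∈ A) (hpos : 0 < schnirelmannDensity A) :
    ∃ k : ℕ, k • A = Set.univ := by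
  obtain ⟨k, hk⟩ := exists_pow_lt_of_lt_one (one_half_pos (α := ℝ)) (sub_lt_self 1 hpos)
  refine ⟨k + k, ?_⟩
  rw [add_nsmul]
  refine add_eq_univ_of_one_le_schirelmannDensity_add_schnirelmannDensity
    (Set.zero_mem_nsmul hA) (Set.zero_mem_nsmul hA) ?_
  linarith [one_sub_schnirelmannDensity_nsmul_le hA k]

open scoped Classical in
theorem schnirelmannDensity_pos_of_eventually {c : ℝ} (hc : 0 < c)
    (h1 : 1 ∈ A) (hA : ∀ᶠ x : ℕ in Filter.atTop, c * x ≤ #{a ∈ Ioc 0 x | a ∈ A}) :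
    0 < schnirelmannDensity A := by
  obtain ⟨N, hN⟩ := Filter.eventually_atTop.1 hA
  suffices h : min c ((N : ℝ) + 1)⁻¹ ≤ schnirelmannDensity A from lt_of_lt_of_le (by positivity) h
  refine le_schnirelmannDensity_iff.2 fun n hn => ?_
  have hn' : (0 : ℝ) < n := by exact_mod_cast hn
  rw [le_div_iff₀ hn']
  rcases le_total N n with h | h
  · exact (mul_le_mul_of_nonneg_right (min_le_left _ _) hn'.le).trans (hN n h)
  · have hone : 1 ≤ #{a ∈ Ioc 0 n | a ∈ A} :=
      card_pos.2 ⟨1, mem_filter.2 ⟨mem_Ioc.2 ⟨one_pos, hn⟩, h1⟩⟩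
    calc min c ((N : ℝ) + 1)⁻¹ * n ≤ ((N : ℝ) + 1)⁻¹ * n := by gcongr; exact min_le_right _ _
      _ ≤ 1 := by
        rw [inv_mul_le_one₀ (by positivity)]
        exact (Nat.cast_le.2 h).trans (lt_add_one _).le
      _ ≤ #{a ∈ Ioc 0 n | a ∈ A} := by exact_mod_cast hone

end Density

/-! ### Sums of periodic functions -/

section Periodic

open Function

variable {ι R : Type*} [CommSemiring R]

theorem periodic_of_dvd {α : Type*} {f : ℕ → α} {a b : ℕ} (hf : Periodic f a) (h : a ∣ b) :
    Periodic f b := by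
  obtain ⟨k, rfl⟩ := h
  simpa [mul_comm] using hf.nsmul k

theorem sum_range_mul_of_periodic {a b : ℕ} (hab : a.Coprime b) {f g : ℕ → R}
    (hf : Periodic f a) (hg : Periodic g b) :
    ∑ n ∈ range (a * b), f n * g n = (∑ n ∈ range a, f n) * ∑ n ∈ range b, g n := by
  rcases a.eq_zero_or_pos with rfl | ha
  · simp
  rcases b.eq_zero_or_pos with rfl | hb
  · simp
  rw [sum_mul_sum, ← sum_product']
  refine sum_nbij' (fun n => (n % a, n % b)) (fun x => (Nat.chineseRemainder hab x.1 x.2 : ℕ))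
    ?_ ?_ ?_ ?_ ?_
  · intro n _
    simp [Nat.mod_lt _ ha, Nat.mod_lt _ hb]
  · intro x _
    simpa using Nat.chineseRemainder_lt_mul hab x.1 x.2 ha.ne' hb.ne'
  · intro n hn
    have hmod := Nat.chineseRemainder_modEq_unique hab (Nat.mod_modEq n a).symm
      (Nat.mod_modEq n b).symm
    exact (hmod.eq_of_lt_of_lt (mem_range.1 hn)
      (Nat.chineseRemainder_lt_mul hab _ _ ha.ne' hb.ne')).symm
  · intro x hx
    obtain ⟨h1, h2⟩ := mem_product.1 hx
    obtain ⟨e1, e2⟩ := (Nat.chineseRemainder hab x.1 x.2).2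
    exact Prod.ext (Nat.mod_eq_of_modEq e1 (mem_range.1 h1))
      (Nat.mod_eq_of_modEq e2 (mem_range.1 h2))
  · intro n _
    simp only [hf.map_mod_nat, hg.map_mod_nat]

theorem periodic_prod_of_periodic {s : Finset ι} {m : ι → ℕ} {f : ι → ℕ → R}
    (hf : ∀ i ∈ s, Periodic (f i) (m i)) :
    Periodic (fun n => ∏ i ∈ s, f i n) (∏ i ∈ s, m i) := fun n =>
  prod_congr rfl fun i hi => periodic_of_dvd (hf i hi) (dvd_prod_of_mem m hi) n

theorem sum_range_prod_of_periodic {s : Finset ι} {m : ι → ℕ}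
    (hm : (s : Set ι).Pairwise (Nat.Coprime on m)) {f : ι → ℕ → R}
    (hf : ∀ i ∈ s, Periodic (f i) (m i)) :
    ∑ n ∈ range (∏ i ∈ s, m i), ∏ i ∈ s, f i n = ∏ i ∈ s, ∑ n ∈ range (m i), f i n := by
  classical
  induction s using Finset.induction_on with
  | empty => simp
  | insert j s hj ih =>
    have hcop : ∀ i ∈ s, (m j).Coprime (m i) := fun i hi =>
      hm (mem_insert_self j s) (mem_insert_of_mem hi) (ne_of_mem_of_not_mem hi hj).symm
    simp only [mem_insert, forall_eq_or_imp] at hf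
    simp only [prod_insert hj]
    rw [← ih (hm.mono (coe_subset.2 (subset_insert j s))) hf.2]
    exact sum_range_mul_of_periodic (Nat.Coprime.prod_right hcop) hf.1
      (periodic_prod_of_periodic hf.2)

theorem norm_sum_range_sub_le_of_periodic {E : Type*} [NormedAddCommGroup E] [NormedSpace ℝ E]
    {q : ℕ} (hq : 0 < q) {F : ℕ → E} (hF : Periodic F q) {B : ℝ} (hB : ∀ n, ‖F n‖ ≤ B) (X : ℕ) :
    ‖∑ n ∈ range X, F n - ((X : ℝ) / q) • ∑ n ∈ range q, F n‖ ≤ 2 * q * B := by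
  have hq' : (0 : ℝ) < q := by exact_mod_cast hq
  have hB0 : 0 ≤ B := (norm_nonneg _).trans (hB 0)
  have hsum (Y : ℕ) : ‖∑ n ∈ range Y, F n‖ ≤ Y * B := by
    simpa using norm_sum_le_of_le (range Y) fun n _ => hB n
  induction X using Nat.strong_induction_on with
  | _ X ih =>
    rcases lt_or_ge X q with h | h
    · have hX : (X : ℝ) ≤ q := by exact_mod_cast h.le
      calc _ ≤ ‖∑ n ∈ range X, F n‖ + ‖((X : ℝ) / q) • ∑ n ∈ range q, F n‖ := norm_sub_le _ _
        _ ≤ q * B + 1 * (q * B) := by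
          rw [norm_smul, Real.norm_of_nonneg (by positivity)]
          gcongr
          · exact (hsum X).trans (by gcongr)
          · exact (div_le_one hq').2 hX
          · exact hsum q
        _ = 2 * q * B := by ring
    · obtain ⟨Y, rfl⟩ := Nat.exists_eq_add_of_le h
      have hshift (n : ℕ) : F (q + n) = F n := by rw [add_comm]; exact hF n
      have hsplit : ((q + Y : ℕ) : ℝ) / q = 1 + Y / q := by
        push_cast
        rw [add_div, div_self hq'.ne']
      rw [sum_range_add, hsplit, add_smul, one_smul, add_sub_add_left_eq_sub]
      simpa only [hshift] using ih Y (by lia)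

end Periodic

/-! ### Selberg's sieve -/

section LocalSieve

variable {p : ℕ}

theorem sum_range_natCast_zmod {M : Type*} [AddCommMonoid M] [NeZero p] (f : ZMod p → M) :
    ∑ n ∈ range p, f n = ∑ a, f a :=
  sum_nbij' (fun n => (n : ZMod p)) ZMod.val (by simp) (fun a _ => mem_range.2 a.val_lt)
    (fun _ hn => ZMod.val_cast_of_lt (mem_range.1 hn)) (fun a _ => ZMod.natCast_zmod_val a)
    fun _ _ => rfl

theorem sum_range_ite_mem_zmod [NeZero p] (s : Finset (ZMod p)) (u v : ℝ) :
    ∑ n ∈ range p, (if (n : ZMod p) ∈ s then u else v) = #s * u + (p - #s) * v := by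
  have hite (a : ZMod p) : (if a ∈ s then u else v) = v + if a ∈ s then u - v else 0 := by
    split_ifs <;> ring
  rw [sum_range_natCast_zmod fun a => if a ∈ s then u else v]
  simp only [hite, sum_add_distrib, sum_const, card_univ, ZMod.card, sum_ite_mem, univ_inter,
    nsmul_eq_mul]
  ring

/-- Selberg's `h(p) = ρ(p) / (p - ρ(p))`, where `ρ(p)` is the number of excluded residue classes. -/
noncomputable def sieveWeight (s : Finset (ZMod p)) : ℝ := #s / (p - #s)

/-- The function `χ_p` of the dual sieve: it depends on `n` modulo `p` only, and it has
mean `0` and mean square `h(p)`. -/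
noncomputable def sieveChar (s : Finset (ZMod p)) (n : ℕ) : ℝ :=
  if (n : ZMod p) ∈ s then -1 else sieveWeight s

variable {s : Finset (ZMod p)}

theorem periodic_sieveChar (s : Finset (ZMod p)) : Function.Periodic (sieveChar s) p := fun n => by
  simp [sieveChar]

theorem sieveWeight_nonneg (hs : #s < p) : 0 ≤ sieveWeight s :=
  div_nonneg (Nat.cast_nonneg _) (sub_nonneg.2 (Nat.cast_le.2 hs.le))

theorem sieveWeight_le (hs : #s < p) : sieveWeight s ≤ #s := by
  have hs' : (#s : ℝ) + 1 ≤ p := by exact_mod_cast hs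
  exact div_le_self (Nat.cast_nonneg _) (by linarith)

theorem abs_sieveChar_le (hs : #s < p) (n : ℕ) : |sieveChar s n| ≤ p := by
  unfold sieveChar
  split_ifs
  · simpa using Nat.one_le_of_lt hs
  · rw [abs_of_nonneg (sieveWeight_nonneg hs)]
    exact (sieveWeight_le hs).trans (Nat.cast_le.2 hs.le)

theorem sum_range_sieveChar (hs : #s < p) : ∑ n ∈ range p, sieveChar s n = 0 := by
  have : NeZero p := ⟨by lia⟩
  have hs' : (p : ℝ) - #s ≠ 0 := (sub_pos.2 (Nat.cast_lt.2 hs)).ne'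
  simp only [sieveChar, sum_range_ite_mem_zmod, sieveWeight]
  field_simp
  ring

theorem sum_range_sieveChar_mul_self (hs : #s < p) :
    ∑ n ∈ range p, sieveChar s n * sieveChar s n = p * sieveWeight s := by
  have : NeZero p := ⟨by lia⟩
  have hs' : (p : ℝ) - #s ≠ 0 := (sub_pos.2 (Nat.cast_lt.2 hs)).ne'
  simp only [sieveChar, ite_mul_ite, sum_range_ite_mem_zmod, sieveWeight]
  field_simp
  ring

end LocalSieve

theorem prod_mul_prod_eq_prod_union {ι M : Type*} [DecidableEq ι] [CommMonoid M] (s t : Finset ι)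
    (f : ι → M) : (∏ i ∈ s, f i) * ∏ i ∈ t, f i =
      ∏ i ∈ s ∪ t, (if i ∈ s then f i else 1) * if i ∈ t then f i else 1 := by
  simp only [prod_mul_distrib, prod_ite_mem, inter_eq_right.2 subset_union_left,
    inter_eq_right.2 subset_union_right]

theorem pairwise_coprime_of_prime {T : Finset ℕ} (hT : ∀ p ∈ T, p.Prime) :
    (T : Set ℕ).Pairwise (Function.onFun Nat.Coprime fun p => p) := fun p hp q hq hpq =>
  (Nat.coprime_primes (hT p hp) (hT q hq)).2 hpq

section Selberg

variable {E : ∀ p : ℕ, Finset (ZMod p)} {T U : Finset ℕ}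

theorem abs_prod_sieveChar_le (hT : ∀ p ∈ T, #(E p) < p) (n : ℕ) :
    |∏ p ∈ T, sieveChar (E p) n| ≤ (∏ p ∈ T, p : ℕ) := by
  rw [abs_prod, Nat.cast_prod]
  exact prod_le_prod (fun _ _ => abs_nonneg _) fun p hp => abs_sieveChar_le (hT p hp) n

theorem periodic_prod_sieveChar_mul_prod_sieveChar (E : ∀ p : ℕ, Finset (ZMod p))
    (T U : Finset ℕ) : Function.Periodic
      (fun n => (∏ p ∈ T, sieveChar (E p) n) * ∏ p ∈ U, sieveChar (E p) n) (∏ p ∈ T ∪ U, p) :=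
  .mul (periodic_of_dvd (periodic_prod_of_periodic fun p _ => periodic_sieveChar (E p))
      (prod_dvd_prod_of_subset _ _ _ subset_union_left))
    (periodic_of_dvd (periodic_prod_of_periodic fun p _ => periodic_sieveChar (E p))
      (prod_dvd_prod_of_subset _ _ _ subset_union_right))

theorem sum_range_prod_sieveChar_mul_self (hE : ∀ p, p.Prime → #(E p) < p)
    (hT : ∀ p ∈ T, p.Prime) :
    ∑ n ∈ range (∏ p ∈ T, p), (∏ p ∈ T, sieveChar (E p) n) * ∏ p ∈ T, sieveChar (E p) n =
      (∏ p ∈ T, p : ℕ) * ∏ p ∈ T, sieveWeight (E p) := by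
  have hper : ∀ p ∈ T, Function.Periodic (fun n => sieveChar (E p) n * sieveChar (E p) n) p :=
    fun p _ => (periodic_sieveChar (E p)).mul (periodic_sieveChar (E p))
  simp only [Nat.cast_prod, ← prod_mul_distrib]
  rw [sum_range_prod_of_periodic (pairwise_coprime_of_prime hT) hper]
  exact prod_congr rfl fun p hp => sum_range_sieveChar_mul_self (hE p (hT p hp))

theorem sum_range_prod_sieveChar_mul_of_ne (hE : ∀ p, p.Prime → #(E p) < p)
    (hT : ∀ p ∈ T, p.Prime) (hU : ∀ p ∈ U, p.Prime) (hTU : T ≠ U) :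
    ∑ n ∈ range (∏ p ∈ T ∪ U, p),
      (∏ p ∈ T, sieveChar (E p) n) * ∏ p ∈ U, sieveChar (E p) n = 0 := by
  have hprime : ∀ p ∈ T ∪ U, p.Prime := fun p hp => (mem_union.1 hp).elim (hT p) (hU p)
  simp only [prod_mul_prod_eq_prod_union]
  rw [sum_range_prod_of_periodic (pairwise_coprime_of_prime hprime)]
  · obtain ⟨p, hp⟩ : ∃ p, ¬(p ∈ T ↔ p ∈ U) := by
      by_contra! h
      exact hTU (Finset.ext h)
    have hpTU : p ∈ T ∪ U := by
      rw [mem_union]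
      tauto
    refine prod_eq_zero hpTU ?_
    have hzero := sum_range_sieveChar (hE p (hprime p hpTU))
    by_cases hpT : p ∈ T <;> by_cases hpU : p ∈ U <;> simp_all
  · intro p _ n
    simp only [periodic_sieveChar (E p) n]

/-- The product `χ_T χ_U` is periodic, and over a full period the functions `χ_T` are orthogonal. -/
theorem sum_range_prod_sieveChar_mul_le (hE : ∀ p, p.Prime → #(E p) < p)
    (hT : ∀ p ∈ T, p.Prime) (hU : ∀ p ∈ U, p.Prime) {D : ℕ} (hTD : ∏ p ∈ T, p ≤ D)
    (hUD : ∏ p ∈ U, p ≤ D) (X : ℕ) :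
    ∑ n ∈ range X, (∏ p ∈ T, sieveChar (E p) n) * ∏ p ∈ U, sieveChar (E p) n ≤
      (if T = U then X * ∏ p ∈ T, sieveWeight (E p) else 0) + 2 * (D : ℝ) ^ 4 := by
  have hT0 : 0 < ∏ p ∈ T, p := prod_pos fun p hp => (hT p hp).pos
  have hU0 : 0 < ∏ p ∈ U, p := prod_pos fun p hp => (hU p hp).pos
  have hdvd : ∏ p ∈ T ∪ U, p ∣ (∏ p ∈ T, p) * ∏ p ∈ U, p := by
    rw [← prod_union_inter]
    exact dvd_mul_right _ _
  have hq : ∏ p ∈ T ∪ U, p ≤ D ^ 2 :=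
    (Nat.le_of_dvd (mul_pos hT0 hU0) hdvd).trans (by rw [sq]; exact mul_le_mul' hTD hUD)
  have hq0 : 0 < ∏ p ∈ T ∪ U, p := Nat.pos_of_dvd_of_pos hdvd (mul_pos hT0 hU0)
  have hbound (n : ℕ) :
      ‖(∏ p ∈ T, sieveChar (E p) n) * ∏ p ∈ U, sieveChar (E p) n‖ ≤ (D : ℝ) ^ 2 := by
    rw [norm_mul, sq]
    gcongr
    · exact (abs_prod_sieveChar_le (fun p hp => hE p (hT p hp)) n).trans (Nat.cast_le.2 hTD)
    · exact (abs_prod_sieveChar_le (fun p hp => hE p (hU p hp)) n).trans (Nat.cast_le.2 hUD)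
  have hmean : ((X : ℝ) / (∏ p ∈ T ∪ U, p : ℕ)) • ∑ n ∈ range (∏ p ∈ T ∪ U, p),
      (∏ p ∈ T, sieveChar (E p) n) * ∏ p ∈ U, sieveChar (E p) n =
        if T = U then X * ∏ p ∈ T, sieveWeight (E p) else 0 := by
    split_ifs with h
    · subst h
      have : ((∏ p ∈ T, p : ℕ) : ℝ) ≠ 0 := Nat.cast_ne_zero.2 hT0.ne'
      rw [union_self, sum_range_prod_sieveChar_mul_self hE hT, smul_eq_mul]
      field_simp
    · rw [sum_range_prod_sieveChar_mul_of_ne hE hT hU h, smul_zero]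
  have herror := norm_sum_range_sub_le_of_periodic hq0
    (periodic_prod_sieveChar_mul_prod_sieveChar E T U) hbound X
  rw [hmean] at herror
  have hqD : 2 * ((∏ p ∈ T ∪ U, p : ℕ) : ℝ) * (D : ℝ) ^ 2 ≤ 2 * (D : ℝ) ^ 4 := by
    calc _ ≤ 2 * ((D ^ 2 : ℕ) : ℝ) * (D : ℝ) ^ 2 := by gcongr
      _ = 2 * (D : ℝ) ^ 4 := by push_cast; ring
  linarith [(abs_le.1 herror).2]

/-- The quantity `G = ∑ h(d)` of Selberg's sieve, where `d` runs over the squarefree integers up to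
`D` and `h(d) = ∏_{p ∣ d} h(p)`; the sieve bound for `X` consecutive integers is `X / G`. -/
noncomputable def sieveMass (h : ℕ → ℝ) (D : ℕ) : ℝ :=
  ∑ d ∈ Icc 1 D with Squarefree d, ∏ p ∈ d.primeFactors, h p

theorem one_le_sieveMass {h : ℕ → ℝ} (hh : ∀ p, p.Prime → 0 ≤ h p) {D : ℕ} (hD : 1 ≤ D) :
    1 ≤ sieveMass h D := by
  have hmem : 1 ∈ {d ∈ Icc 1 D | Squarefree d} := by simp [hD]
  simpa [sieveMass] using single_le_sum (f := fun d : ℕ => ∏ p ∈ d.primeFactors, h p)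
    (fun d _ => prod_nonneg fun p hp => hh p (Nat.prime_of_mem_primeFactors hp)) hmem

theorem sum_range_sq_sum_prod_sieveChar_le (hE : ∀ p, p.Prime → #(E p) < p) (D X : ℕ) :
    ∑ n ∈ range X, (∑ d ∈ Icc 1 D with Squarefree d, ∏ p ∈ d.primeFactors, sieveChar (E p) n) ^ 2 ≤
      X * sieveMass (fun p => sieveWeight (E p)) D + 2 * (D : ℝ) ^ 6 := by
  set Q := {d ∈ Icc 1 D | Squarefree d} with hQ
  have hprime (d : ℕ) : ∀ p ∈ d.primeFactors, p.Prime := fun p => Nat.prime_of_mem_primeFactors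
  have hprod : ∀ d ∈ Q, ∏ p ∈ d.primeFactors, p = d := fun d hd =>
    Nat.prod_primeFactors_of_squarefree (mem_filter.1 hd).2
  have hle : ∀ d ∈ Q, ∏ p ∈ d.primeFactors, p ≤ D := fun d hd =>
    (hprod d hd).trans_le (mem_Icc.1 (mem_filter.1 hd).1).2
  have hinj : ∀ d ∈ Q, ∀ e ∈ Q, (d.primeFactors = e.primeFactors ↔ d = e) := fun d hd e he =>
    ⟨fun h => by rw [← hprod d hd, h, hprod e he], fun h => h ▸ rfl⟩
  have hcard : (#Q : ℝ) ≤ D := by simpa using card_filter_le (Icc 1 D) Squarefree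
  calc _ = ∑ d ∈ Q, ∑ e ∈ Q, ∑ n ∈ range X,
        (∏ p ∈ d.primeFactors, sieveChar (E p) n) * ∏ p ∈ e.primeFactors, sieveChar (E p) n := by
        simp only [sq, sum_mul_sum]
        rw [sum_comm]
        exact sum_congr rfl fun d _ => sum_comm
    _ ≤ ∑ d ∈ Q, ∑ e ∈ Q,
        ((if d = e then X * ∏ p ∈ d.primeFactors, sieveWeight (E p) else 0) + 2 * (D : ℝ) ^ 4) :=
        sum_le_sum fun d hd => sum_le_sum fun e he => by
          simpa only [hinj d hd e he] using sum_range_prod_sieveChar_mul_le hE (hprime d) (hprime e)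
            (hle d hd) (hle e he) X
    _ = X * sieveMass (fun p => sieveWeight (E p)) D + #Q * (#Q * (2 * (D : ℝ) ^ 4)) := by
        simp only [sum_add_distrib, sum_ite_eq, sum_const, nsmul_eq_mul, ← sum_filter,
          filter_mem_eq_inter, inter_self, ← mul_sum, sieveMass, ← hQ]
    _ ≤ X * sieveMass (fun p => sieveWeight (E p)) D + D * (D * (2 * (D : ℝ) ^ 4)) := by gcongr
    _ = _ := by ring

theorem selberg_sieve (hE : ∀ p, p.Prime → #(E p) < p) {D : ℕ} (hD : 1 ≤ D) (X : ℕ) :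
    (#{n ∈ range X | ∀ p ∈ Nat.primesLE D, (n : ZMod p) ∉ E p} : ℝ) ≤
      X / sieveMass (fun p => sieveWeight (E p)) D + 2 * (D : ℝ) ^ 6 := by
  set S := {n ∈ range X | ∀ p ∈ Nat.primesLE D, (n : ZMod p) ∉ E p}
  set G := sieveMass (fun p => sieveWeight (E p)) D
  have hG1 : 1 ≤ G := one_le_sieveMass (fun p hp => sieveWeight_nonneg (hE p hp)) hD
  have hunsifted : ∀ n ∈ S,
      ∑ d ∈ Icc 1 D with Squarefree d, ∏ p ∈ d.primeFactors, sieveChar (E p) n = G := by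
    refine fun n hn => sum_congr rfl fun d hd => prod_congr rfl fun p hp => ?_
    have hdD := (mem_Icc.1 (mem_filter.1 hd).1).2
    refine if_neg ((mem_filter.1 hn).2 p (Nat.mem_primesLE.2 ⟨?_, ?_⟩))
    · exact (Nat.le_of_mem_primeFactors hp).trans hdD
    · exact Nat.prime_of_mem_primeFactors hp
  have hsq : #S * G ^ 2 ≤ X * G + 2 * (D : ℝ) ^ 6 := by
    calc #S * G ^ 2 = ∑ n ∈ S,
          (∑ d ∈ Icc 1 D with Squarefree d, ∏ p ∈ d.primeFactors, sieveChar (E p) n) ^ 2 := by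
          rw [sum_congr rfl fun n hn => by rw [hunsifted n hn], sum_const, nsmul_eq_mul]
      _ ≤ _ := sum_le_sum_of_subset_of_nonneg (filter_subset _ _) fun _ _ _ => sq_nonneg _
      _ ≤ _ := sum_range_sq_sum_prod_sieveChar_le hE D X
  calc (#S : ℝ) ≤ (X * G + 2 * (D : ℝ) ^ 6) / G ^ 2 := (le_div_iff₀ (by positivity)).2 hsq
    _ = X / G + 2 * (D : ℝ) ^ 6 / G ^ 2 := by field_simp
    _ ≤ X / G + 2 * (D : ℝ) ^ 6 := by
      gcongr
      exact div_le_self (by positivity) (one_le_pow₀ hG1)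

end Selberg

/-! ### A lower bound for the sieve mass -/

section CompletelyMultiplicative

variable {g : ℕ →*₀ ℝ}

theorem sum_filter_primeFactors_eq_le (hg : ∀ n, 0 ≤ g n) (hg1 : ∀ p, p.Prime → g p < 1)
    {T : Finset ℕ} (hT : ∀ p ∈ T, p.Prime) (z : ℕ) :
    ∑ n ∈ Icc 1 z with n.primeFactors = T, g n ≤ ∏ p ∈ T, g p / (1 - g p) := by
  set F := {n ∈ Icc 1 z | n.primeFactors = T}
  set R := ∏ p ∈ T, p
  have hfactor : ∀ n ∈ F, R * (n / R) = n := fun n hn => Nat.mul_div_cancel' <| by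
    simpa only [R, ← (mem_filter.1 hn).2] using Nat.prod_primeFactors_dvd n
  have hinj : Set.InjOn (fun n => n / R) F := fun m hm n hn h => by
    rw [← hfactor m hm, ← hfactor n hn]
    exact congrArg (R * ·) h
  have hfactored : ∀ m ∈ F.image fun n => n / R, m ∈ Nat.factoredNumbers T := fun m hm => by
    obtain ⟨n, hn, rfl⟩ := mem_image.1 hm
    have hn0 : n ≠ 0 := Nat.one_le_iff_ne_zero.1 (mem_Icc.1 (mem_filter.1 hn).1).1
    have hdvd : n / R ∣ n := Dvd.intro_left R (hfactor n hn)
    rw [Nat.mem_factoredNumbers_iff_primeFactors_subset]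
    exact ⟨ne_zero_of_dvd_ne_zero hn0 hdvd,
      (Nat.primeFactors_mono hdvd hn0).trans (mem_filter.1 hn).2.subset⟩
  have heuler : HasSum ((Nat.factoredNumbers T : Set ℕ).indicator g) (∏ p ∈ T, (1 - g p)⁻¹) := by
    have h := (EulerProduct.summable_and_hasSum_factoredNumbers_prod_filter_prime_geometric
      (f := (g : ℕ →* ℝ)) (fun {p} hp => by simpa [abs_of_nonneg (hg p)] using hg1 p hp) T).2
    rw [filter_true_of_mem hT] at h
    exact hasSum_subtype_iff_indicator.1 h
  calc ∑ n ∈ F, g n = g R * ∑ m ∈ F.image fun n => n / R, g m := by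
        rw [sum_image hinj, mul_sum]
        exact sum_congr rfl fun n hn => by rw [← map_mul, hfactor n hn]
    _ = g R * ∑ m ∈ F.image fun n => n / R, (Nat.factoredNumbers T : Set ℕ).indicator g m := by
        congr 1
        exact sum_congr rfl fun m hm => (Set.indicator_of_mem (hfactored m hm) g).symm
    _ ≤ g R * ∏ p ∈ T, (1 - g p)⁻¹ :=
        mul_le_mul_of_nonneg_left
          (sum_le_hasSum _ (fun m _ => Set.indicator_nonneg (fun n _ => hg n) m) heuler) (hg R)
    _ = _ := by simp only [R, map_prod, ← prod_mul_distrib, div_eq_mul_inv]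

open UniqueFactorizationMonoid in
/-- Since `g p / (1 - g p) = g p + g (p ^ 2) + ⋯`, the summand of `sieveMass` at a squarefree `d` is
the sum of `g n` over all `n` with radical `d`. -/
theorem sum_le_sieveMass (hg : ∀ n, 0 ≤ g n) (hg1 : ∀ p, p.Prime → g p < 1) (z : ℕ) :
    ∑ n ∈ Icc 1 z, g n ≤ sieveMass (fun p => g p / (1 - g p)) z := by
  have hmaps : ∀ n ∈ Icc 1 z, radical n ∈ {d ∈ Icc 1 z | Squarefree d} := fun n hn => by
    obtain ⟨hn1, hnz⟩ := mem_Icc.1 hn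
    have hle : radical n ≤ n := Nat.le_of_dvd hn1 radical_dvd_self
    exact mem_filter.2 ⟨mem_Icc.2 ⟨Nat.radical_pos n, hle.trans hnz⟩, squarefree_radical⟩
  rw [← sum_fiberwise_of_maps_to hmaps]
  refine sum_le_sum fun d hd => ?_
  have hrad (n : ℕ) : radical n = d ↔ n.primeFactors = d.primeFactors := by
    rw [Nat.radical_eq_prod_primeFactors]
    constructor
    · rintro rfl
      exact (Nat.primeFactors_prod_primeFactors n).symm
    · intro h
      rw [h, Nat.prod_primeFactors_of_squarefree (mem_filter.1 hd).2]
  simp only [hrad]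
  exact sum_filter_primeFactors_eq_le hg hg1 (fun p => Nat.prime_of_mem_primeFactors) z

theorem sq_sum_le_sum_card_divisors_mul (hg : ∀ n, 0 ≤ g n) (A : ℕ) :
    (∑ n ∈ Icc 1 A, g n) ^ 2 ≤ ∑ n ∈ Icc 1 (A ^ 2), #n.divisors * g n := by
  have hmaps : ∀ x ∈ Icc 1 A ×ˢ Icc 1 A, x.1 * x.2 ∈ Icc 1 (A ^ 2) := fun x hx => by
    simp only [mem_product, mem_Icc] at hx ⊢
    exact ⟨Nat.mul_pos hx.1.1 hx.2.1, by rw [sq]; exact Nat.mul_le_mul hx.1.2 hx.2.2⟩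
  calc (∑ n ∈ Icc 1 A, g n) ^ 2 = ∑ x ∈ Icc 1 A ×ˢ Icc 1 A, g (x.1 * x.2) := by
        simp only [sq, sum_mul_sum, sum_product, map_mul]
    _ = ∑ n ∈ Icc 1 (A ^ 2), ∑ x ∈ Icc 1 A ×ˢ Icc 1 A with x.1 * x.2 = n, g (x.1 * x.2) :=
        (sum_fiberwise_of_maps_to hmaps _).symm
    _ = ∑ n ∈ Icc 1 (A ^ 2), #{x ∈ Icc 1 A ×ˢ Icc 1 A | x.1 * x.2 = n} * g n := by
        refine sum_congr rfl fun n _ => ?_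
        rw [sum_congr rfl fun x hx => by rw [(mem_filter.1 hx).2], sum_const, nsmul_eq_mul]
    _ ≤ _ := by
        refine sum_le_sum fun n hn => mul_le_mul_of_nonneg_right (Nat.cast_le.2 ?_) (hg n)
        rw [← card_map ⟨fun d => (d, n / d), fun _ _ => congrArg Prod.fst⟩,
          Nat.map_div_right_divisors]
        refine card_le_card fun x hx => Nat.mem_divisorsAntidiagonal.2 ⟨(mem_filter.1 hx).2, ?_⟩
        exact Nat.one_le_iff_ne_zero.1 (mem_Icc.1 hn).1

theorem sum_filter_dvd_le (hg : ∀ n, 0 ≤ g n) {S : Finset ℕ} {q : ℕ}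
    (hS : ∀ n ∈ S, q ∣ n → n / q ∈ S) : ∑ n ∈ S with q ∣ n, g n ≤ g q * ∑ n ∈ S, g n := by
  have hfactor : ∀ n ∈ {n ∈ S | q ∣ n}, q * (n / q) = n := fun n hn =>
    Nat.mul_div_cancel' (mem_filter.1 hn).2
  have hinj : Set.InjOn (fun n => n / q) ({n ∈ S | q ∣ n} : Finset ℕ) := fun m hm n hn h => by
    rw [← hfactor m hm, ← hfactor n hn]
    exact congrArg (q * ·) h
  have himage : {n ∈ S | q ∣ n}.image (fun n => n / q) ⊆ S := image_subset_iff.2 fun n hn =>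
    hS n (mem_filter.1 hn).1 (mem_filter.1 hn).2
  calc ∑ n ∈ S with q ∣ n, g n = g q * ∑ n ∈ {n ∈ S | q ∣ n}.image fun n => n / q, g n := by
        rw [sum_image hinj, mul_sum]
        exact sum_congr rfl fun n hn => by rw [← map_mul, hfactor n hn]
    _ ≤ _ := mul_le_mul_of_nonneg_left
        (sum_le_sum_of_subset_of_nonneg himage fun n _ _ => hg n) (hg q)

theorem prod_one_sub_mul_sum_le (hg : ∀ n, 0 ≤ g n) {Q : Finset ℕ}
    (hQ : ∀ q ∈ Q, 0 < q ∧ g q ≤ 1) (z : ℕ) :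
    (∏ q ∈ Q, (1 - g q)) * ∑ n ∈ Icc 1 z, g n ≤ ∑ n ∈ Icc 1 z with ∀ q ∈ Q, ¬q ∣ n, g n := by
  induction Q using Finset.induction_on with
  | empty => simp
  | insert q Q hqQ ih =>
    obtain ⟨⟨hq0, hq1⟩, hQ⟩ := (forall_mem_insert _ _ _).1 hQ
    set S := {n ∈ Icc 1 z | ∀ p ∈ Q, ¬p ∣ n} with hS
    have hclosed : ∀ n ∈ S, q ∣ n → n / q ∈ S := fun n hn hqn => by
      obtain ⟨hn, hnQ⟩ := mem_filter.1 hn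
      obtain ⟨hn1, hnz⟩ := mem_Icc.1 hn
      refine mem_filter.2 ⟨mem_Icc.2 ⟨?_, (Nat.div_le_self n q).trans hnz⟩, fun p hp hpn => ?_⟩
      · exact Nat.div_pos (Nat.le_of_dvd hn1 hqn) hq0
      · exact hnQ p hp (hpn.trans (Nat.div_dvd_of_dvd hqn))
    have hsplit := sum_filter_add_sum_filter_not S (q ∣ ·) g
    have hinsert : {n ∈ Icc 1 z | ∀ p ∈ insert q Q, ¬p ∣ n} = {n ∈ S | ¬q ∣ n} := by
      simp only [hS, filter_filter, forall_mem_insert, and_comm]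
    rw [prod_insert hqQ, hinsert, mul_assoc]
    calc _ ≤ (1 - g q) * ∑ n ∈ S, g n :=
          mul_le_mul_of_nonneg_left (ih hQ) (sub_nonneg.2 hq1)
      _ ≤ _ := by linarith [sum_filter_dvd_le hg hclosed]

end CompletelyMultiplicative

theorem card_divisors_le_two_pow_cardFactors {n : ℕ} (hn : n ≠ 0) :
    #n.divisors ≤ 2 ^ ArithmeticFunction.cardFactors n := by
  rw [Nat.card_divisors hn, ArithmeticFunction.cardFactors_eq_sum_factorization, Finsupp.sum,
    ← prod_pow_eq_pow_sum, Nat.support_factorization]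
  exact prod_le_prod' fun p _ => Nat.lt_two_pow_self

/-- The completely multiplicative function with value `1 / n` at the integers coprime to `M` and `0`
elsewhere. -/
noncomputable def coprimeInv (M : ℕ) : ℕ →*₀ ℝ where
  toFun n := if n.Coprime M then (n : ℝ)⁻¹ else 0
  map_zero' := by simp
  map_one' := by simp
  map_mul' m n := by
    simp only [Nat.coprime_mul_iff_left, Nat.cast_mul, mul_inv, ite_zero_mul_ite_zero]

theorem coprimeInv_apply (M n : ℕ) : coprimeInv M n = if n.Coprime M then (n : ℝ)⁻¹ else 0 := rfl

theorem coprimeInv_nonneg (M n : ℕ) : 0 ≤ coprimeInv M n := by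
  rw [coprimeInv_apply]
  positivity

/-- The completely multiplicative function `2 ^ Ω(n) * f n`, where `Ω` counts prime factors with
multiplicity; it majorizes the product of `f` and the divisor function. -/
noncomputable def twoPowOmegaMul (f : ℕ →*₀ ℝ) : ℕ →*₀ ℝ where
  toFun n := 2 ^ ArithmeticFunction.cardFactors n * f n
  map_zero' := by simp
  map_one' := by simp
  map_mul' m n := by
    obtain rfl | hm := eq_or_ne m 0
    · simp
    obtain rfl | hn := eq_or_ne n 0
    · simp
    rw [ArithmeticFunction.cardFactors_mul hm hn, pow_add, map_mul, mul_mul_mul_comm]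

theorem twoPowOmegaMul_apply (f : ℕ →*₀ ℝ) (n : ℕ) :
    twoPowOmegaMul f n = 2 ^ ArithmeticFunction.cardFactors n * f n := rfl

theorem twoPowOmegaMul_coprimeInv_nonneg (M n : ℕ) : 0 ≤ twoPowOmegaMul (coprimeInv M) n :=
  mul_nonneg (by positivity) (coprimeInv_nonneg M n)

theorem twoPowOmegaMul_coprimeInv_of_prime (M : ℕ) {p : ℕ} (hp : p.Prime) :
    twoPowOmegaMul (coprimeInv M) p = if p ∣ M then 0 else 2 / (p : ℝ) := by
  simp only [twoPowOmegaMul_apply, coprimeInv_apply, ArithmeticFunction.cardFactors_apply_prime hp,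
    pow_one, hp.coprime_iff_not_dvd, ite_not, mul_ite, mul_zero, div_eq_mul_inv]

theorem twoPowOmegaMul_coprimeInv_lt_one {M p : ℕ} (hM : Even M) (hp : p.Prime) :
    twoPowOmegaMul (coprimeInv M) p < 1 := by
  rw [twoPowOmegaMul_coprimeInv_of_prime M hp]
  split_ifs with hpM
  · exact one_pos
  · have hp2 : 2 < p := hp.two_le.lt_of_ne fun h => hpM (h ▸ hM.two_dvd)
    exact (div_lt_one (Nat.cast_pos.2 hp.pos)).2 (Nat.cast_lt.2 hp2)

theorem cast_totient_eq_mul_prod (M : ℕ) :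
    (M.totient : ℝ) = M * ∏ p ∈ M.primeFactors, (1 - (p : ℝ)⁻¹) := by
  simpa using congrArg (Rat.cast : ℚ → ℝ) (Nat.totient_eq_mul_prod_factors M)

theorem log_le_sum_inv (A : ℕ) : Real.log A ≤ ∑ n ∈ Icc 1 A, (n : ℝ)⁻¹ := by
  obtain rfl | hA := A.eq_zero_or_pos
  · simp
  calc Real.log A ≤ Real.log (A + 1 : ℕ) :=
        Real.log_le_log (Nat.cast_pos.2 hA) (Nat.cast_le.2 A.le_succ)
    _ ≤ harmonic A := log_add_one_le_harmonic A
    _ = _ := by simp [harmonic_eq_sum_Icc]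

theorem log_le_mul_sum_coprimeInv {M : ℕ} (hM : M ≠ 0) (A : ℕ) :
    Real.log A ≤ M / M.totient * ∑ n ∈ Icc 1 A, coprimeInv M n := by
  have hφ : (0 : ℝ) < M.totient := Nat.cast_pos.2 (Nat.totient_pos.2 (Nat.pos_of_ne_zero hM))
  have hsieve := prod_one_sub_mul_sum_le (coprimeInv_nonneg 1) (Q := M.primeFactors)
    (fun q hq => ⟨Nat.pos_of_mem_primeFactors hq, by
      simpa [coprimeInv_apply] using Nat.cast_inv_le_one q⟩) A
  have hcoprime (n : ℕ) : (∀ q ∈ M.primeFactors, ¬q ∣ n) ↔ n.Coprime M := by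
    rw [← not_iff_not, Nat.Prime.not_coprime_iff_dvd]
    simp only [Nat.mem_primeFactors_of_ne_zero hM, not_forall, not_not, exists_prop]
    tauto
  simp only [coprimeInv_apply, Nat.coprime_one_right_eq_true, if_true, hcoprime] at hsieve
  simp only [coprimeInv_apply, ← sum_filter]
  rw [div_mul_eq_mul_div, le_div_iff₀ hφ, cast_totient_eq_mul_prod]
  calc _ ≤ (∑ n ∈ Icc 1 A, (n : ℝ)⁻¹) * (M * ∏ p ∈ M.primeFactors, (1 - (p : ℝ)⁻¹)) := by
        rw [← cast_totient_eq_mul_prod]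
        gcongr
        exact log_le_sum_inv A
    _ = M * ((∏ p ∈ M.primeFactors, (1 - (p : ℝ)⁻¹)) * ∑ n ∈ Icc 1 A, (n : ℝ)⁻¹) := by ring
    _ ≤ _ := by gcongr

theorem log_sq_le_mul_sieveMass {M : ℕ} (hM : M ≠ 0) (hM2 : Even M) (A : ℕ) :
    Real.log A ^ 2 ≤ (M / M.totient : ℝ) ^ 2 * sieveMass (fun p =>
      twoPowOmegaMul (coprimeInv M) p / (1 - twoPowOmegaMul (coprimeInv M) p)) (A ^ 2) := by
  calc Real.log A ^ 2 ≤ (M / M.totient * ∑ n ∈ Icc 1 A, coprimeInv M n) ^ 2 :=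
        pow_le_pow_left₀ (Real.log_natCast_nonneg A) (log_le_mul_sum_coprimeInv hM A) 2
    _ = (M / M.totient : ℝ) ^ 2 * (∑ n ∈ Icc 1 A, coprimeInv M n) ^ 2 := mul_pow _ _ _
    _ ≤ (M / M.totient : ℝ) ^ 2 * ∑ n ∈ Icc 1 (A ^ 2), twoPowOmegaMul (coprimeInv M) n := by
        gcongr
        refine (sq_sum_le_sum_card_divisors_mul (coprimeInv_nonneg M) A).trans ?_
        refine sum_le_sum fun n hn => mul_le_mul_of_nonneg_right ?_ (coprimeInv_nonneg M n)
        exact_mod_cast card_divisors_le_two_pow_cardFactors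
          (Nat.one_le_iff_ne_zero.1 (mem_Icc.1 hn).1)
    _ ≤ _ := by
        gcongr
        exact sum_le_sieveMass (twoPowOmegaMul_coprimeInv_nonneg M)
          (fun p => twoPowOmegaMul_coprimeInv_lt_one hM2) (A ^ 2)

/-! ### Moments of `M / φ(M)` -/

theorem sum_prod_primeFactors_one_add_le {f : ℕ → ℝ} (hf : ∀ p, p.Prime → 0 ≤ f p) (y : ℕ) :
    ∑ M ∈ Ioc 0 y, ∏ p ∈ M.primeFactors, (1 + f p) ≤
      y * ∏ p ∈ Nat.primesLE y, (1 + f p / p) := by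
  have hprime : ∀ T ∈ (Nat.primesLE y).powerset, ∀ p ∈ T, p.Prime := fun T hT p hp =>
    (Nat.mem_primesLE.1 (mem_powerset.1 hT hp)).2
  have hpowerset : ∀ M ∈ Ioc 0 y,
      M.primeFactors.powerset = {T ∈ (Nat.primesLE y).powerset | T ⊆ M.primeFactors} := by
    intro M hM
    have hsub : M.primeFactors ⊆ Nat.primesLE y := fun p hp => Nat.mem_primesLE.2
      ⟨(Nat.le_of_mem_primeFactors hp).trans (mem_Ioc.1 hM).2, Nat.prime_of_mem_primeFactors hp⟩
    ext T
    simp only [mem_powerset, mem_filter]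
    exact ⟨fun h => ⟨h.trans hsub, h⟩, And.right⟩
  have hcount : ∀ T ∈ (Nat.primesLE y).powerset,
      (#{M ∈ Ioc 0 y | T ⊆ M.primeFactors} : ℝ) ≤ y / ∏ p ∈ T, (p : ℝ) := by
    intro T hT
    have hcard : #{M ∈ Ioc 0 y | T ⊆ M.primeFactors} ≤ y / ∏ p ∈ T, p := by
      rw [← Nat.Ioc_filter_dvd_card_eq_div]
      exact card_le_card <| monotone_filter_right _ fun M _ hM => prod_primes_dvd M
        (fun p hp => (hprime T hT p hp).prime) fun p hp => Nat.dvd_of_mem_primeFactors (hM hp)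
    rw [← Nat.cast_prod]
    exact (Nat.cast_le.2 hcard).trans Nat.cast_div_le
  calc _ = ∑ M ∈ Ioc 0 y, ∑ T ∈ (Nat.primesLE y).powerset,
          if T ⊆ M.primeFactors then ∏ p ∈ T, f p else 0 :=
        sum_congr rfl fun M hM => by rw [prod_one_add, hpowerset M hM, sum_filter]
    _ = ∑ T ∈ (Nat.primesLE y).powerset, #{M ∈ Ioc 0 y | T ⊆ M.primeFactors} * ∏ p ∈ T, f p := by
        rw [sum_comm]
        simp only [← sum_filter, sum_const, nsmul_eq_mul]
    _ ≤ ∑ T ∈ (Nat.primesLE y).powerset, (y / ∏ p ∈ T, (p : ℝ)) * ∏ p ∈ T, f p :=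
        sum_le_sum fun T hT => mul_le_mul_of_nonneg_right (hcount T hT)
          (prod_nonneg fun p hp => hf p (hprime T hT p hp))
    _ = _ := by
        rw [prod_one_add, mul_sum]
        exact sum_congr rfl fun T _ => by rw [prod_div_distrib, div_mul_eq_mul_div, mul_div_assoc]

theorem one_add_pow_le_one_add_mul {u : ℝ} (hu0 : 0 ≤ u) (hu1 : u ≤ 1) (k : ℕ) :
    (1 + u) ^ k ≤ 1 + (2 ^ k - 1) * u := by
  induction k with
  | zero => simp
  | succ k ih =>
    have hk : (0 : ℝ) ≤ 2 ^ k - 1 := sub_nonneg.2 (one_le_pow₀ one_le_two)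
    calc (1 + u) ^ (k + 1) ≤ (1 + (2 ^ k - 1) * u) * (1 + u) := by
          rw [pow_succ]
          gcongr
      _ = 1 + 2 ^ k * u + (2 ^ k - 1) * u * u := by ring
      _ ≤ 1 + 2 ^ k * u + (2 ^ k - 1) * u * 1 := by gcongr
      _ = _ := by ring

theorem inv_one_sub_le_one_add_two_mul {t : ℝ} (ht0 : 0 ≤ t) (ht : t ≤ 1 / 2) :
    (1 - t)⁻¹ ≤ 1 + 2 * t := by
  rw [inv_le_iff_one_le_mul₀ (by linarith)]
  nlinarith

theorem div_totient_eq_prod {M : ℕ} (hM : M ≠ 0) :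
    (M / M.totient : ℝ) = ∏ p ∈ M.primeFactors, (1 - (p : ℝ)⁻¹)⁻¹ := by
  rw [cast_totient_eq_mul_prod, prod_inv_distrib, div_mul_cancel_left₀ (Nat.cast_ne_zero.2 hM)]

theorem div_totient_pow_le {M : ℕ} (hM : M ≠ 0) (k : ℕ) :
    (M / M.totient : ℝ) ^ k ≤ ∏ p ∈ M.primeFactors, (1 + (2 ^ k - 1) * (2 * (p : ℝ)⁻¹)) := by
  have hinv : ∀ p ∈ M.primeFactors, (p : ℝ)⁻¹ ≤ 1 / 2 := fun p hp => by
    rw [one_div]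
    exact inv_anti₀ two_pos (Nat.ofNat_le_cast.2 (Nat.prime_of_mem_primeFactors hp).two_le)
  have hnonneg : ∀ p ∈ M.primeFactors, 0 ≤ (1 - (p : ℝ)⁻¹)⁻¹ := fun p hp =>
    inv_nonneg.2 (by linarith [hinv p hp])
  rw [div_totient_eq_prod hM, ← prod_pow]
  refine prod_le_prod (fun p hp => pow_nonneg (hnonneg p hp) k) fun p hp => ?_
  calc (1 - (p : ℝ)⁻¹)⁻¹ ^ k ≤ (1 + 2 * (p : ℝ)⁻¹) ^ k :=
        pow_le_pow_left₀ (hnonneg p hp)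
          (inv_one_sub_le_one_add_two_mul (by positivity) (hinv p hp)) k
    _ ≤ _ := one_add_pow_le_one_add_mul (by positivity) (by linarith [hinv p hp]) k

theorem exists_prod_primesLE_one_add_div_sq_le {c : ℝ} (hc : 0 ≤ c) :
    ∃ C > 0, ∀ y : ℕ, ∏ p ∈ Nat.primesLE y, (1 + c / (p : ℝ) ^ 2) ≤ C := by
  have hsummable : Summable fun n : ℕ => c / (n : ℝ) ^ 2 := by
    simpa only [mul_one_div] using (Real.summable_one_div_nat_pow.2 one_lt_two).mul_left c
  refine ⟨Real.exp (∑' n : ℕ, c / (n : ℝ) ^ 2), Real.exp_pos _, fun y => ?_⟩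
  calc _ ≤ ∏ p ∈ Nat.primesLE y, Real.exp (c / (p : ℝ) ^ 2) :=
        prod_le_prod (fun p _ => by positivity) fun p _ => by
          rw [add_comm]
          exact Real.add_one_le_exp _
    _ = Real.exp (∑ p ∈ Nat.primesLE y, c / (p : ℝ) ^ 2) := (Real.exp_sum _ _).symm
    _ ≤ _ := Real.exp_le_exp.2 (hsummable.sum_le_tsum _ fun _ _ => by positivity)

theorem exists_sum_div_totient_pow_le (k : ℕ) :
    ∃ C > 0, ∀ y : ℕ, ∑ M ∈ Ioc 0 y, (M / M.totient : ℝ) ^ k ≤ C * y := by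
  have hk : (0 : ℝ) ≤ 2 ^ k - 1 := sub_nonneg.2 (one_le_pow₀ one_le_two)
  obtain ⟨C, hC, hprod⟩ := exists_prod_primesLE_one_add_div_sq_le (mul_nonneg hk two_pos.le)
  refine ⟨C, hC, fun y => ?_⟩
  calc _ ≤ ∑ M ∈ Ioc 0 y, ∏ p ∈ M.primeFactors, (1 + (2 ^ k - 1) * (2 * (p : ℝ)⁻¹)) :=
        sum_le_sum fun M hM => div_totient_pow_le (mem_Ioc.1 hM).1.ne' k
    _ ≤ y * ∏ p ∈ Nat.primesLE y, (1 + (2 ^ k - 1) * (2 * (p : ℝ)⁻¹) / p) :=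
        sum_prod_primeFactors_one_add_le (fun p _ => mul_nonneg hk (by positivity)) y
    _ = (∏ p ∈ Nat.primesLE y, (1 + (2 ^ k - 1) * 2 / (p : ℝ) ^ 2)) * y := by
        rw [mul_comm]
        congr 1
        exact prod_congr rfl fun p _ => by ring
    _ ≤ C * y := by
        gcongr
        exact hprod y

/-! ### Sums of two primes -/

/-- The ordered representations of `N` as a sum of two primes. -/
def goldbachPairs (N : ℕ) : Finset (ℕ × ℕ) := {x ∈ antidiagonal N | x.1.Prime ∧ x.2.Prime}

theorem mem_goldbachPairs {N : ℕ} {x : ℕ × ℕ} :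
    x ∈ goldbachPairs N ↔ x.1 + x.2 = N ∧ x.1.Prime ∧ x.2.Prime := by
  simp [goldbachPairs]

/-- The residue classes modulo `p` that are excluded for `a` when `a` and `N - a` are primes larger
than `p`; primes dividing `2 * N` are not used for sieving. -/
def goldbachResidues (N p : ℕ) : Finset (ZMod p) := if p ∣ 2 * N then ∅ else {0, (N : ZMod p)}

theorem card_goldbachResidues (N : ℕ) {p : ℕ} :
    #(goldbachResidues N p) = if p ∣ 2 * N then 0 else 2 := by
  unfold goldbachResidues
  split_ifs with h
  · rfl
  · refine card_pair fun h0 => h (((ZMod.natCast_eq_zero_iff N p).1 h0.symm).mul_left 2)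

theorem card_goldbachResidues_lt (N : ℕ) {p : ℕ} (hp : p.Prime) : #(goldbachResidues N p) < p := by
  rw [card_goldbachResidues]
  split_ifs with h
  · exact hp.pos
  · exact hp.two_le.lt_of_ne fun h2 => h (h2 ▸ dvd_mul_right 2 N)

theorem sieveWeight_goldbachResidues (N : ℕ) {p : ℕ} (hp : p.Prime) :
    sieveWeight (goldbachResidues N p) = twoPowOmegaMul (coprimeInv (2 * N)) p /
      (1 - twoPowOmegaMul (coprimeInv (2 * N)) p) := by
  have hp0 : (p : ℝ) ≠ 0 := Nat.cast_ne_zero.2 hp.ne_zero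
  rw [sieveWeight, card_goldbachResidues, twoPowOmegaMul_coprimeInv_of_prime _ hp]
  split_ifs with h
  · simp
  · rw [one_sub_div hp0, div_div_div_cancel_right₀ hp0, Nat.cast_ofNat]

theorem natCast_notMem_goldbachResidues {p a b : ℕ} (hp : p.Prime) (ha : a.Prime) (hb : b.Prime)
    (hpa : p ≠ a) (hpb : p ≠ b) : (a : ZMod p) ∉ goldbachResidues (a + b) p := by
  have hne {q : ℕ} (hq : q.Prime) (hpq : p ≠ q) : (q : ZMod p) ≠ 0 := fun h0 =>
    hpq ((Nat.prime_dvd_prime_iff_eq hp hq).1 ((ZMod.natCast_eq_zero_iff q p).1 h0))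
  unfold goldbachResidues
  split_ifs
  · exact notMem_empty _
  · rw [mem_insert, mem_singleton, Nat.cast_add, left_eq_add, not_or]
    exact ⟨hne ha hpa, hne hb hpb⟩

theorem card_goldbachPairs_le_card_sifted (N D : ℕ) :
    #(goldbachPairs N) ≤
      #{n ∈ range (N + 1) | ∀ p ∈ Nat.primesLE D, (n : ZMod p) ∉ goldbachResidues N p} +
        2 * (D + 1) := by
  set S := {n ∈ range (N + 1) | ∀ p ∈ Nat.primesLE D, (n : ZMod p) ∉ goldbachResidues N p}
  have hinj : Set.InjOn Prod.fst (goldbachPairs N : Set (ℕ × ℕ)) := fun x hx y hy hxy => by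
    have hxN := (mem_goldbachPairs.1 hx).1
    have hyN := (mem_goldbachPairs.1 hy).1
    exact Prod.ext hxy (by lia)
  have hcover : (goldbachPairs N).image Prod.fst ⊆
      S ∪ (range (D + 1) ∪ (range (D + 1)).image (N - ·)) := by
    refine image_subset_iff.2 fun ⟨a, b⟩ hab => ?_
    obtain ⟨habN, ha, hb⟩ := mem_goldbachPairs.1 hab
    simp only at habN ha hb
    simp only [mem_union, mem_image, mem_range]
    by_cases haD : a ≤ D
    · exact .inr (.inl (by lia))
    by_cases hbD : b ≤ D
    · exact .inr (.inr ⟨b, by lia, by lia⟩)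
    refine .inl (mem_filter.2 ⟨mem_range.2 (by lia), fun p hp hmem => ?_⟩)
    obtain ⟨hpD, hp⟩ := Nat.mem_primesLE.1 hp
    rw [← habN] at hmem
    exact natCast_notMem_goldbachResidues hp ha hb (by lia) (by lia) hmem
  calc #(goldbachPairs N) = #((goldbachPairs N).image Prod.fst) := (card_image_of_injOn hinj).symm
    _ ≤ #S + #(range (D + 1) ∪ (range (D + 1)).image (N - ·)) :=
        (card_le_card hcover).trans (card_union_le _ _)
    _ ≤ #S + (#(range (D + 1)) + #(range (D + 1))) := by
        gcongr
        exact (card_union_le _ _).trans (Nat.add_le_add_left card_image_le _)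
    _ = #S + 2 * (D + 1) := by rw [card_range, two_mul]

theorem sieveMass_congr {h h' : ℕ → ℝ} (hh : ∀ p, p.Prime → h p = h' p) (D : ℕ) :
    sieveMass h D = sieveMass h' D :=
  sum_congr rfl fun _ _ => prod_congr rfl fun p hp => hh p (Nat.prime_of_mem_primeFactors hp)

theorem one_le_div_totient {N : ℕ} (hN : N ≠ 0) : (1 : ℝ) ≤ N / N.totient :=
  (one_le_div (Nat.cast_pos.2 (Nat.totient_pos.2 (Nat.pos_of_ne_zero hN)))).2
    (Nat.cast_le.2 N.totient_le)

theorem two_mul_div_totient_le (N : ℕ) :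
    ((2 * N : ℕ) / (2 * N).totient : ℝ) ≤ 2 * (N / N.totient) := by
  obtain rfl | hN := N.eq_zero_or_pos
  · simp
  have hle : N.totient ≤ (2 * N).totient :=
    Nat.le_of_dvd (Nat.totient_pos.2 (by lia)) (Nat.totient_dvd_of_dvd (dvd_mul_left N 2))
  rw [← mul_div_assoc, Nat.cast_mul, Nat.cast_ofNat]
  gcongr

theorem card_goldbachPairs_le {N A : ℕ} (hN : N ≠ 0) (hA : 2 ≤ A) :
    (#(goldbachPairs N) : ℝ) ≤
      ((2 * N : ℕ) / (2 * N).totient : ℝ) ^ 2 * ((N + 1) / Real.log A ^ 2 + 6 * (A : ℝ) ^ 12) := by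
  have hA1 : (1 : ℝ) < A := Nat.one_lt_cast.2 hA
  have hD : 1 ≤ A ^ 2 := Nat.one_le_pow _ _ (by lia)
  have hlog : 0 < Real.log A := Real.log_pos hA1
  have hK := one_le_div_totient (mul_ne_zero two_ne_zero hN)
  set K : ℝ := (2 * N : ℕ) / (2 * N).totient
  set G := sieveMass (fun p => sieveWeight (goldbachResidues N p)) (A ^ 2) with hG
  have hG1 : 1 ≤ G :=
    one_le_sieveMass (fun p hp => sieveWeight_nonneg (card_goldbachResidues_lt N hp)) hD
  have hmass : Real.log A ^ 2 ≤ K ^ 2 * G := by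
    rw [hG, sieveMass_congr fun p => sieveWeight_goldbachResidues N]
    exact log_sq_le_mul_sieveMass (mul_ne_zero two_ne_zero hN) (even_two_mul N) A
  have hmain : ((N + 1 : ℕ) : ℝ) / G ≤ K ^ 2 * ((N + 1) / Real.log A ^ 2) := by
    rw [← mul_div_assoc, div_le_div_iff₀ (by linarith) (by positivity), Nat.cast_succ,
      mul_right_comm, mul_comm]
    gcongr
  have herror : 2 * ((A ^ 2 : ℕ) : ℝ) ^ 6 + 2 * ((A ^ 2 : ℕ) + 1) ≤ K ^ 2 * (6 * (A : ℝ) ^ 12) := by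
    calc _ = 2 * (A : ℝ) ^ 12 + 2 * ((A : ℝ) ^ 2 + 1) := by push_cast; ring
      _ ≤ 2 * (A : ℝ) ^ 12 + 2 * ((A : ℝ) ^ 12 + (A : ℝ) ^ 12) := by
          gcongr
          · exact hA1.le
          · norm_num
          · exact one_le_pow₀ hA1.le
      _ = 6 * (A : ℝ) ^ 12 := by ring
      _ ≤ _ := le_mul_of_one_le_left (by positivity) (one_le_pow₀ hK)
  have hcard := (Nat.cast_le (α := ℝ)).2 (card_goldbachPairs_le_card_sifted N (A ^ 2))
  rw [Nat.cast_add] at hcard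
  calc _ ≤ _ := hcard
    _ ≤ ((N + 1 : ℕ) / G + 2 * ((A ^ 2 : ℕ) : ℝ) ^ 6) + (2 * (A ^ 2 + 1) : ℕ) :=
        add_le_add_left (selberg_sieve (fun p => card_goldbachResidues_lt N) hD (N + 1)) _
    _ ≤ K ^ 2 * ((N + 1) / Real.log A ^ 2) + K ^ 2 * (6 * (A : ℝ) ^ 12) := by
        rw [add_assoc]
        exact add_le_add hmain (by simpa using herror)
    _ = _ := (mul_add _ _ _).symm

theorem log_le_two_mul_log_nthRoot {k x : ℕ} (hk : k ≠ 0) (hx : 2 ^ k ≤ x) :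
    Real.log x ≤ 2 * k * Real.log (k.nthRoot x) := by
  set A := k.nthRoot x
  have hA : 2 ≤ A := (Nat.le_nthRoot_iff hk).2 hx
  have hx0 : 0 < x := (Nat.two_pow_pos k).trans_le hx
  have hle : x ≤ A ^ (2 * k) := by
    calc x ≤ (A + 1) ^ k := (Nat.lt_pow_nthRoot_add_one hk x).le
      _ ≤ (A ^ 2) ^ k := Nat.pow_le_pow_left (by nlinarith) k
      _ = A ^ (2 * k) := (pow_mul A 2 k).symm
  calc Real.log x ≤ Real.log (A ^ (2 * k) : ℕ) :=
        Real.log_le_log (Nat.cast_pos.2 hx0) (Nat.cast_le.2 hle)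
    _ = _ := by rw [Nat.cast_pow, Real.log_pow, Nat.cast_mul, Nat.cast_ofNat]

/-- The sieve is applied with `A = ⌊x ^ (1 / 24)⌋`, so that its error term is negligible even after
multiplication by `log ^ 2 x`. -/
theorem card_goldbachPairs_le_div_log_sq {N x : ℕ} (hx : 2 ^ 24 ≤ x) (hN : 0 < N) (hNx : N ≤ x) :
    (#(goldbachPairs N) : ℝ) ≤ 73728 * (x / Real.log x ^ 2) * (N / N.totient : ℝ) ^ 2 := by
  set A := Nat.nthRoot 24 x
  have hA : 2 ≤ A := (Nat.le_nthRoot_iff (by norm_num)).2 hx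
  have hA1 : (1 : ℝ) < A := Nat.one_lt_cast.2 hA
  have hAx : (A : ℝ) ^ 24 ≤ x := by
    exact_mod_cast Nat.pow_nthRoot_le_iff.2 (.inl (by norm_num : 24 ≠ 0))
  have hNx' : (N : ℝ) + 1 ≤ 2 * x := by
    have : N + 1 ≤ 2 * x := by lia
    exact_mod_cast this
  have hLx : 0 < Real.log x := Real.log_pos ((one_lt_pow₀ hA1 (by norm_num)).trans_le hAx)
  have hLA : 0 < Real.log A := Real.log_pos hA1
  have hlog : Real.log x ^ 2 ≤ 2304 * Real.log A ^ 2 := by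
    calc Real.log x ^ 2 ≤ (2 * (24 : ℕ) * Real.log A) ^ 2 := by
          gcongr
          exact log_le_two_mul_log_nthRoot (by norm_num) hx
      _ = _ := by push_cast; ring
  have hmain : ((N : ℝ) + 1) / Real.log A ^ 2 ≤ 4608 * (x / Real.log x ^ 2) := by
    rw [← mul_div_assoc, div_le_div_iff₀ (by positivity) (by positivity)]
    calc ((N : ℝ) + 1) * Real.log x ^ 2 ≤ (2 * x) * (2304 * Real.log A ^ 2) := by gcongr
      _ = _ := by ring
  have herror : 6 * (A : ℝ) ^ 12 ≤ 13824 * (x / Real.log x ^ 2) := by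
    rw [← mul_div_assoc, le_div_iff₀ (by positivity)]
    calc 6 * (A : ℝ) ^ 12 * Real.log x ^ 2 ≤ 6 * (A : ℝ) ^ 12 * (2304 * (A : ℝ) ^ 2) := by
          gcongr
          exact hlog.trans (by gcongr; exact Real.log_le_self A.cast_nonneg)
      _ = 13824 * (A : ℝ) ^ 14 := by ring
      _ ≤ 13824 * (A : ℝ) ^ 24 := by
          gcongr
          · exact hA1.le
          · norm_num
      _ ≤ 13824 * x := by gcongr
  calc (#(goldbachPairs N) : ℝ)
      ≤ ((2 * N : ℕ) / (2 * N).totient : ℝ) ^ 2 *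
          ((N + 1) / Real.log A ^ 2 + 6 * (A : ℝ) ^ 12) := card_goldbachPairs_le hN.ne' hA
    _ ≤ (2 * (N / N.totient)) ^ 2 *
          (4608 * (x / Real.log x ^ 2) + 13824 * (x / Real.log x ^ 2)) := by
        gcongr
        exact two_mul_div_totient_le N
    _ = _ := by ring

theorem eventually_div_two_mul_log_le_primeCounting :
    ∀ᶠ n : ℕ in Filter.atTop, (n : ℝ) / (2 * Real.log n) ≤ Nat.primeCounting n := by
  have hlog := Real.isLittleO_log_id_atTop.def (show (0 : ℝ) < 1 / 10 by norm_num)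
  have htendsto := (tendsto_natCast_atTop_atTop (R := ℝ)).comp (Filter.tendsto_add_atTop_nat 1)
  filter_upwards [htendsto.eventually hlog, Filter.eventually_ge_atTop 2] with n hn hn2
  have hn2' : (2 : ℝ) ≤ n := Nat.ofNat_le_cast.2 hn2
  have hsucc : Real.log (n + 1) ≤ 1 / 10 * (n + 1) := by
    have h := (le_abs_self _).trans hn
    simpa [abs_of_nonneg (show (0 : ℝ) ≤ n + 1 by linarith)] using h
  refine le_trans ?_ (Chebyshev.pi_ge n)
  rw [← div_div]
  have := Real.log_pos (show (1 : ℝ) < n by linarith)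
  gcongr
  nlinarith [Real.log_two_gt_d9]

theorem eventually_div_six_mul_log_le_primeCounting_half :
    ∀ᶠ x : ℕ in Filter.atTop, (x : ℝ) / (6 * Real.log x) ≤ Nat.primeCounting (x / 2) := by
  filter_upwards [(Nat.tendsto_div_const_atTop two_ne_zero).eventually
    eventually_div_two_mul_log_le_primeCounting, Filter.eventually_ge_atTop 4] with x hx hx4
  have hhalf : (2 : ℝ) ≤ (x / 2 : ℕ) := Nat.ofNat_le_cast.2 (by lia)
  have hthird : (x : ℝ) / 3 ≤ (x / 2 : ℕ) := by
    rw [div_le_iff₀ three_pos]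
    exact_mod_cast (by lia : x ≤ x / 2 * 3)
  have hlog : 0 < Real.log (x / 2 : ℕ) := Real.log_pos (by linarith)
  have hlog_le : Real.log (x / 2 : ℕ) ≤ Real.log x :=
    Real.log_le_log (by linarith) (Nat.cast_le.2 (Nat.div_le_self x 2))
  calc (x : ℝ) / (6 * Real.log x) = x / 3 / (2 * Real.log x) := by rw [div_div]; ring_nf
    _ ≤ (x / 2 : ℕ) / (2 * Real.log (x / 2 : ℕ)) := by gcongr
    _ ≤ _ := hx

theorem sq_primeCounting_half_le_sum_card_goldbachPairs (x : ℕ) :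
    Nat.primeCounting (x / 2) ^ 2 ≤
      ∑ N ∈ Ioc 0 x with (goldbachPairs N).Nonempty, #(goldbachPairs N) := by
  have hmem : ∀ y ∈ Nat.primesLE (x / 2) ×ˢ Nat.primesLE (x / 2),
      y ∈ goldbachPairs (y.1 + y.2) := fun y hy =>
    mem_goldbachPairs.2 ⟨rfl, Nat.prime_of_mem_primesLE (mem_product.1 hy).1,
      Nat.prime_of_mem_primesLE (mem_product.1 hy).2⟩
  have hmaps : ∀ y ∈ Nat.primesLE (x / 2) ×ˢ Nat.primesLE (x / 2),
      y.1 + y.2 ∈ {N ∈ Ioc 0 x | (goldbachPairs N).Nonempty} := by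
    refine fun y hy => mem_filter.2 ⟨mem_Ioc.2 ?_, y, hmem y hy⟩
    obtain ⟨h1, h2⟩ := mem_product.1 hy
    have := (Nat.prime_of_mem_primesLE h1).pos
    have := Nat.le_of_mem_primesLE h1
    have := Nat.le_of_mem_primesLE h2
    lia
  rw [← Nat.primesLE_card_eq_primeCounting, sq, ← card_product,
    card_eq_sum_card_fiberwise (f := fun y : ℕ × ℕ => y.1 + y.2) hmaps]
  refine sum_le_sum fun N _ => card_le_card fun y hy => ?_
  obtain ⟨hyP, rfl⟩ := mem_filter.1 hy
  exact hmem y hyP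

theorem eventually_le_mul_sum_div_totient_sq :
    ∀ᶠ x : ℕ in Filter.atTop, (x : ℝ) ≤
      2654208 * ∑ N ∈ Ioc 0 x with (goldbachPairs N).Nonempty, (N / N.totient : ℝ) ^ 2 := by
  filter_upwards [eventually_div_six_mul_log_le_primeCounting_half,
    Filter.eventually_ge_atTop (2 ^ 24)] with x hpi hx
  set B := {N ∈ Ioc 0 x | (goldbachPairs N).Nonempty}
  have hx1 : (1 : ℝ) < x := Nat.one_lt_cast.2 (lt_of_lt_of_le (by norm_num) hx)
  have hlog : 0 < Real.log x := Real.log_pos hx1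
  have hpairs : ((x : ℝ) / (6 * Real.log x)) ^ 2 ≤
      73728 * (x / Real.log x ^ 2) * ∑ N ∈ B, (N / N.totient : ℝ) ^ 2 := by
    calc _ ≤ (Nat.primeCounting (x / 2) : ℝ) ^ 2 := by gcongr
      _ ≤ ∑ N ∈ B, (#(goldbachPairs N) : ℝ) := by
          exact_mod_cast sq_primeCounting_half_le_sum_card_goldbachPairs x
      _ ≤ _ := by
          rw [mul_sum]
          refine sum_le_sum fun N hN => ?_
          obtain ⟨hN0, hNx⟩ := mem_Ioc.1 (mem_filter.1 hN).1
          exact card_goldbachPairs_le_div_log_sq hx hN0 hNx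
  refine le_of_mul_le_mul_left ?_ (show 0 < x / (36 * Real.log x ^ 2) by positivity)
  calc x / (36 * Real.log x ^ 2) * x = (x / (6 * Real.log x)) ^ 2 := by field_simp; norm_num
    _ ≤ _ := hpairs
    _ = _ := by
        generalize ∑ N ∈ B, (N / N.totient : ℝ) ^ 2 = S
        field_simp
        ring

/-- Cauchy-Schwarz bounds the second moment of `N / φ(N)` over the sums of two primes by their
number and the fourth moment of `N / φ(N)`. -/
theorem exists_mul_le_card_goldbachPairs_nonempty :
    ∃ c > 0, ∀ᶠ x : ℕ in Filter.atTop,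
      c * (x : ℝ) ≤ #{N ∈ Ioc 0 x | (goldbachPairs N).Nonempty} := by
  obtain ⟨C, hC, hmoment⟩ := exists_sum_div_totient_pow_le 4
  refine ⟨(2654208 ^ 2 * C)⁻¹, by positivity, ?_⟩
  filter_upwards [eventually_le_mul_sum_div_totient_sq, Filter.eventually_gt_atTop 0] with x hx hx0
  set B := {N ∈ Ioc 0 x | (goldbachPairs N).Nonempty}
  have hfourth : ∑ N ∈ B, ((N / N.totient : ℝ) ^ 2) ^ 2 ≤ C * x := by
    simp only [← pow_mul]
    exact (sum_le_sum_of_subset_of_nonneg (filter_subset _ _)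
      fun _ _ _ => by positivity).trans (hmoment x)
  rw [inv_mul_le_iff₀ (by positivity)]
  refine le_of_mul_le_mul_left ?_ (show (0 : ℝ) < x from Nat.cast_pos.2 hx0)
  calc (x : ℝ) * x = x ^ 2 := (sq _).symm
    _ ≤ (2654208 * ∑ N ∈ B, (N / N.totient : ℝ) ^ 2) ^ 2 := by gcongr
    _ = 2654208 ^ 2 * (∑ N ∈ B, (N / N.totient : ℝ) ^ 2) ^ 2 := mul_pow _ _ _
    _ ≤ 2654208 ^ 2 * (#B * (C * x)) := by
        gcongr
        exact sq_sum_le_card_mul_sum_sq.trans (by gcongr)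
    _ = x * (2654208 ^ 2 * C * #B) := by ring

/-! ### Sums of a fixed number of primes -/

theorem mem_nsmul_setOf_prime {j m : ℕ} (h2 : 2 * j ≤ m) (h3 : m ≤ 3 * j) :
    m ∈ j • {p : ℕ | p.Prime} := by
  obtain ⟨b, rfl⟩ := Nat.exists_eq_add_of_le h2
  obtain ⟨c, rfl⟩ := Nat.exists_eq_add_of_le (show b ≤ j by lia)
  rw [add_nsmul, show 2 * (b + c) + b = b • 3 + c • 2 by simp only [smul_eq_mul]; ring]
  exact Set.add_mem_add (Set.nsmul_mem_nsmul Nat.prime_three) (Set.nsmul_mem_nsmul Nat.prime_two)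

/-- The sums of two primes, enlarged to a basis of `ℕ`: Shnirel'man's inequality requires `0`, and a
set without `1` has Schnirelmann density zero. -/
def primeSumBasis : Set ℕ := {0, 1} ∪ {N | (goldbachPairs N).Nonempty}

theorem exists_nsmul_primeSumBasis_eq_univ : ∃ k : ℕ, k • primeSumBasis = Set.univ := by
  classical
  obtain ⟨c, hc, hcount⟩ := exists_mul_le_card_goldbachPairs_nonempty
  refine exists_nsmul_eq_univ (by simp [primeSumBasis])
    (schnirelmannDensity_pos_of_eventually hc (by simp [primeSumBasis])
      (hcount.mono fun x hx => hx.trans (Nat.cast_le.2 (card_le_card ?_))))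
  exact monotone_filter_right _ fun N _ hN => Or.inr hN

theorem exists_mem_nsmul_setOf_prime_of_mem_nsmul_primeSumBasis {k t : ℕ}
    (ht : t ∈ k • primeSumBasis) :
    ∃ a ≤ 2 * k, ∃ i ≤ k, ∃ u ∈ a • {p : ℕ | p.Prime}, t = u + i := by
  induction k generalizing t with
  | zero => exact ⟨0, le_rfl, 0, le_rfl, 0, by simp, by simpa using ht⟩
  | succ k ih =>
    rw [succ_nsmul] at ht
    obtain ⟨t', ht', y, hy, rfl⟩ := Set.mem_add.1 ht
    obtain ⟨a, ha, i, hi, u, hu, rfl⟩ := ih ht'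
    rcases hy with (rfl | rfl) | ⟨x, hx⟩
    · exact ⟨a, by lia, i, by lia, u, hu, rfl⟩
    · exact ⟨a, by lia, i + 1, by lia, u, hu, rfl⟩
    · obtain ⟨rfl, hp, hq⟩ := mem_goldbachPairs.1 hx
      refine ⟨a + 2, by lia, i, by lia, u + (x.1 + x.2), ?_, by lia⟩
      rw [add_nsmul, two_nsmul]
      exact Set.add_mem_add hu (Set.add_mem_add hp hq)

/-- Reserving `2 s` before applying the basis leaves room to trade the ones for primes `2` and `3`
so that exactly `s` primes are used. -/
theorem exists_shnirelman_basis_general :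
    ∃ k : ℕ, ∀ s ≥ k, ∀ n ≥ 2 * s, ∃ p : Fin s → ℕ, (∀ i, (p i).Prime) ∧ n = ∑ i, p i := by
  obtain ⟨k, hk⟩ := exists_nsmul_primeSumBasis_eq_univ
  refine ⟨7 * k, fun s hs n hn => ?_⟩
  obtain ⟨a, ha, i, hi, u, hu, ht⟩ := exists_mem_nsmul_setOf_prime_of_mem_nsmul_primeSumBasis
    (hk ▸ Set.mem_univ (n - 2 * s))
  have hrest : i + 2 * s ∈ (s - a) • {p : ℕ | p.Prime} :=
    mem_nsmul_setOf_prime (by lia) (by lia)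
  have hmem : n ∈ s • {p : ℕ | p.Prime} := by
    rw [show s = a + (s - a) by lia, add_nsmul, show n = u + (i + 2 * s) by lia]
    exact Set.add_mem_add hu hrest
  obtain ⟨p, hp, hsum⟩ := Set.mem_nsmul_iff_sum.1 hmem
  exact ⟨p, hp, hsum.symm⟩

/-- There is a positive integer `s` such that every sufficiently large integer `n` can
be written as `p₁ + ⋯ + p_s + 2^(m₁²) + ⋯ + 2^(m_{2s}²)` with all `pᵢ` prime and
`mⱼ` natural numbers. -/
theorem exists_shnirelman_basis :
    ∃ s : ℕ, 0 < s ∧ ∃ N : ℕ, ∀ n : ℕ, N ≤ n →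
      ∃ (p : Fin s → ℕ) (m : Fin (2 * s) → ℕ),
        (∀ i, (p i).Prime) ∧ n = (∑ i, p i) + ∑ j, 2 ^ (m j ^ 2) := by
  obtain ⟨k, hk⟩ := exists_shnirelman_basis_general
  refine ⟨k + 1, k.succ_pos, 6 * (k + 1), fun n hn => ?_⟩
  obtain ⟨p, hp, hsum⟩ := hk (k + 1) k.le_succ (n - 4 * (k + 1)) (by lia)
  refine ⟨p, fun _ => 1, hp, ?_⟩
  rw [← hsum, sum_const, card_univ, Fintype.card_fin, smul_eq_mul]
  lia
end

section
/- For every positive integer m and every integer a, the number of residue classes z modulo m satisfying the congruence z² ≡ a (mod m) is at most 4√m. -/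
/-!
Write `N(m)` for the number of solutions of `z² ≡ a (mod m)`. By the Chinese remainder theorem
`N(m n) ≤ N(m) N(n)` for coprime `m, n`, so it suffices to show `N(p ^ k)² ≤ p ^ k` for primes
`p > 3` and `N(p ^ k)² ≤ 4 p ^ k` for `p = 2, 3`; this loses at most a factor `16` in `N(m)² ≤ m`.

Two solutions `z, w` modulo `p ^ k` satisfy `p ^ k ∣ (z - w) (z + w)`, so one of the two factors is
divisible by `p ^ ⌈k / 2⌉`. Hence the solutions lie in at most two residue classes modulo
`p ^ ⌈k / 2⌉`, and `N(p ^ k) ≤ 2 p ^ ⌊k / 2⌋`. When `k` is odd and `p > 3` this is enough. When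
`k = 2 j` and `p` is odd, either `p ^ j` divides every solution, or the two classes are determined
modulo `p ^ (j + 1)`; both cases give `N(p ^ (2 j)) ≤ p ^ j`.
-/

lemma pow_dvd_or_pow_dvd_of_pow_dvd_mul {R : Type*} [CommMonoidWithZero R] [IsCancelMulZero R]
    {p x y : R} {n i j : ℕ} (hp : Prime p) (h : p ^ n ∣ x * y) (hij : i + j ≤ n + 1) :
    p ^ i ∣ x ∨ p ^ j ∣ y := by
  obtain ⟨a, ha⟩ := h
  obtain ⟨r, s, b, c, hrs, -, rfl, rfl⟩ := mul_eq_mul_prime_pow hp (ha.trans (mul_comm _ _))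
  rcases (by omega : i ≤ r ∨ j ≤ s) with hi | hj
  · exact .inl ((pow_dvd_pow p hi).mul_left b)
  · exact .inr ((pow_dvd_pow p hj).mul_left c)

lemma pow_succ_dvd_sub_or_pow_succ_dvd_add {R : Type*} [CommRing R] [IsDomain R] {p x y : R}
    {j : ℕ} (hp : Prime p) (hp2 : ¬ p ∣ 2) (h : p ^ (2 * j) ∣ (x - y) * (x + y))
    (hy : ¬ p ^ j ∣ y) : p ^ (j + 1) ∣ x - y ∨ p ^ (j + 1) ∣ x + y := by
  -- otherwise `p ^ j` divides both factors, hence also their difference `2 * y`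
  by_contra! ⟨hsub, hadd⟩
  have hadd' : p ^ j ∣ x + y :=
    (pow_dvd_or_pow_dvd_of_pow_dvd_mul hp h (by omega)).resolve_left hsub
  have hsub' : p ^ j ∣ x - y :=
    (pow_dvd_or_pow_dvd_of_pow_dvd_mul hp h (by omega)).resolve_right hadd
  have htwo : p ^ j ∣ 2 * y := by
    convert dvd_sub hadd' hsub' using 1
    ring
  exact hy (hp.pow_dvd_of_dvd_mul_left j hp2 htwo)

lemma card_range_mul_filter_modEq {d : ℕ} (hd : 0 < d) (e : ℕ) (v : ℤ) :
    ((Finset.range (d * e)).filter (fun z : ℕ => (z : ℤ) ≡ v [ZMOD d])).card = e := by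
  obtain ⟨r, hr⟩ : ∃ r : ℕ, (r : ℤ) ≡ v [ZMOD d] :=
    (Int.existsUnique_equiv_nat v (by exact_mod_cast hd)).imp fun _ h => h.2
  have hclass (z : ℕ) : (z : ℤ) ≡ v [ZMOD d] ↔ z ≡ r [MOD d] :=
    ⟨fun h => Int.natCast_modEq_iff.1 (h.trans hr.symm),
      fun h => (Int.natCast_modEq_iff.2 h).trans hr⟩
  simp only [hclass]
  rw [← Nat.count_eq_card_filter_range, Nat.count_modEq_card _ hd]
  simp [hd]

lemma card_le_two_mul_of_modEq_or_modEq {d e : ℕ} (hd : 0 < d) {s : Finset ℕ}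
    (hs : s ⊆ Finset.range (d * e)) {v w : ℤ}
    (h : ∀ z ∈ s, (z : ℤ) ≡ v [ZMOD d] ∨ (z : ℤ) ≡ w [ZMOD d]) : s.card ≤ 2 * e := by
  calc s.card
      ≤ ((Finset.range (d * e)).filter
          (fun z : ℕ => (z : ℤ) ≡ v [ZMOD d] ∨ (z : ℤ) ≡ w [ZMOD d])).card :=
        Finset.card_le_card fun z hz => Finset.mem_filter.2 ⟨hs hz, h z hz⟩
    _ ≤ e + e := by
        rw [Finset.filter_or]
        exact (Finset.card_union_le _ _).trans_eq <| by
          rw [card_range_mul_filter_modEq hd, card_range_mul_filter_modEq hd]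
    _ = 2 * e := (two_mul e).symm

/-- The square roots of `a` modulo `m`, each residue class being represented by its element of
`[0, m)`. -/
def sqrtsMod (m : ℕ) (a : ℤ) : Finset ℕ :=
  (Finset.range m).filter (fun z : ℕ => (m : ℤ) ∣ (z : ℤ) ^ 2 - a)

section sqrtsMod

variable {m n p : ℕ} {a : ℤ} {z w : ℕ}

lemma mem_sqrtsMod : z ∈ sqrtsMod m a ↔ z < m ∧ (m : ℤ) ∣ (z : ℤ) ^ 2 - a := by
  rw [sqrtsMod, Finset.mem_filter, Finset.mem_range]

lemma sqrtsMod_subset_range : sqrtsMod m a ⊆ Finset.range m :=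
  Finset.filter_subset _ _

lemma mod_mem_sqrtsMod_of_dvd (hnm : n ∣ m) (hz : z ∈ sqrtsMod m a) : z % n ∈ sqrtsMod n a := by
  obtain ⟨hlt, hdvd⟩ := mem_sqrtsMod.1 hz
  have hsq : ((z % n : ℕ) : ℤ) ^ 2 ≡ (z : ℤ) ^ 2 [ZMOD n] := by
    rw [Int.natCast_mod]
    exact (Int.mod_modEq _ _).pow 2
  have ha : a ≡ (z : ℤ) ^ 2 [ZMOD n] :=
    Int.modEq_iff_dvd.2 ((Int.natCast_dvd_natCast.2 hnm).trans hdvd)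
  exact mem_sqrtsMod.2 ⟨Nat.mod_lt _ (Nat.pos_of_dvd_of_pos hnm (Nat.zero_lt_of_lt hlt)),
    Int.modEq_iff_dvd.1 (ha.trans hsq.symm)⟩

lemma card_sqrtsMod_mul_le (hmn : m.Coprime n) (a : ℤ) :
    (sqrtsMod (m * n) a).card ≤ (sqrtsMod m a).card * (sqrtsMod n a).card := by
  rw [← Finset.card_product]
  refine Finset.card_le_card_of_injOn (fun z => (z % m, z % n)) (fun z hz => ?_) ?_
  · exact Finset.mem_product.2 ⟨mod_mem_sqrtsMod_of_dvd (dvd_mul_right m n) hz,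
      mod_mem_sqrtsMod_of_dvd (dvd_mul_left n m) hz⟩
  · intro z hz w hw hzw
    have hmod : z ≡ w [MOD m * n] :=
      (Nat.modEq_and_modEq_iff_modEq_mul hmn).1 (Prod.mk.inj hzw)
    exact hmod.eq_of_lt_of_lt (mem_sqrtsMod.1 hz).1 (mem_sqrtsMod.1 hw).1

lemma dvd_sub_mul_add_of_mem_sqrtsMod (hz : z ∈ sqrtsMod m a) (hw : w ∈ sqrtsMod m a) :
    (m : ℤ) ∣ ((z : ℤ) - w) * (z + w) := by
  have h := dvd_sub (mem_sqrtsMod.1 hz).2 (mem_sqrtsMod.1 hw).2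
  rwa [sub_sub_sub_cancel_right, sq_sub_sq, mul_comm] at h

lemma card_sqrtsMod_mul_le_of_dvd_sub_or_dvd_add {d e : ℕ} (hd : 0 < d) {w : ℤ}
    (h : ∀ z ∈ sqrtsMod (d * e) a, (d : ℤ) ∣ z - w ∨ (d : ℤ) ∣ z + w) :
    (sqrtsMod (d * e) a).card ≤ 2 * e := by
  refine card_le_two_mul_of_modEq_or_modEq hd sqrtsMod_subset_range (v := w) (w := -w)
    fun z hz => (h z hz).imp (fun hsub => (Int.modEq_iff_dvd.2 hsub).symm) fun hadd => ?_
  exact (Int.modEq_iff_dvd.2 (by rwa [sub_neg_eq_add])).symm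

lemma card_sqrtsMod_prime_pow_add_le (hp : p.Prime) {i l : ℕ} (hil : i ≤ l + 1) (a : ℤ) :
    (sqrtsMod (p ^ (i + l)) a).card ≤ 2 * p ^ l := by
  rcases (sqrtsMod (p ^ (i + l)) a).eq_empty_or_nonempty with hempty | ⟨w, hw⟩
  · simp [hempty]
  rw [pow_add] at hw ⊢
  refine card_sqrtsMod_mul_le_of_dvd_sub_or_dvd_add (pow_pos hp.pos i) (w := w) fun z hz => ?_
  have hmul := dvd_sub_mul_add_of_mem_sqrtsMod hz hw
  rw [← pow_add, Nat.cast_pow] at hmul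
  rw [Nat.cast_pow]
  exact pow_dvd_or_pow_dvd_of_pow_dvd_mul (Nat.prime_iff_prime_int.1 hp) hmul (by omega)

lemma card_sqrtsMod_prime_pow_two_mul_le (hp : p.Prime) (hp2 : p ≠ 2) (j : ℕ) (a : ℤ) :
    (sqrtsMod (p ^ (2 * j)) a).card ≤ p ^ j := by
  by_cases hall : ∀ z ∈ sqrtsMod (p ^ (2 * j)) a, p ^ j ∣ z
  · rw [← card_range_mul_filter_modEq (pow_pos hp.pos j) (p ^ j) 0, ← pow_add, ← two_mul]
    refine Finset.card_le_card fun z hz => Finset.mem_filter.2 ⟨sqrtsMod_subset_range hz, ?_⟩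
    exact Int.modEq_zero_iff_dvd.2 (Int.natCast_dvd_natCast.2 (hall z hz))
  · push Not at hall
    obtain ⟨w, hw, hpw⟩ := hall
    obtain ⟨l, rfl⟩ : ∃ l, j = l + 1 :=
      Nat.exists_eq_succ_of_ne_zero fun hj => hpw (by simp [hj])
    have hp2' : ¬ (p : ℤ) ∣ 2 := fun h =>
      hp2 ((Nat.prime_dvd_prime_iff_eq hp Nat.prime_two).1 (by exact_mod_cast h))
    have hpow : p ^ (2 * (l + 1)) = p ^ (l + 2) * p ^ l := by ring
    calc (sqrtsMod (p ^ (2 * (l + 1))) a).card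
        ≤ 2 * p ^ l := by
          rw [hpow] at hw ⊢
          refine card_sqrtsMod_mul_le_of_dvd_sub_or_dvd_add (pow_pos hp.pos _) (w := w)
            fun z hz => ?_
          have hmul := dvd_sub_mul_add_of_mem_sqrtsMod hz hw
          rw [← hpow, Nat.cast_pow] at hmul
          rw [Nat.cast_pow]
          exact pow_succ_dvd_sub_or_pow_succ_dvd_add (Nat.prime_iff_prime_int.1 hp) hp2' hmul
            (by exact_mod_cast hpw)
      _ ≤ p * p ^ l := Nat.mul_le_mul_right _ hp.two_le
      _ = p ^ (l + 1) := (pow_succ' p l).symm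

lemma sq_card_sqrtsMod_prime_pow_le_four_mul (hp : p.Prime) (k : ℕ) (a : ℤ) :
    (sqrtsMod (p ^ k) a).card ^ 2 ≤ 4 * p ^ k := by
  obtain ⟨i, l, rfl, hli, hil⟩ : ∃ i l, k = i + l ∧ l ≤ i ∧ i ≤ l + 1 :=
    ⟨k - k / 2, k / 2, by omega, by omega, by omega⟩
  calc (sqrtsMod (p ^ (i + l)) a).card ^ 2
      ≤ (2 * p ^ l) ^ 2 := Nat.pow_le_pow_left (card_sqrtsMod_prime_pow_add_le hp hil a) 2
    _ = 4 * p ^ (l + l) := by ring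
    _ ≤ 4 * p ^ (i + l) :=
        Nat.mul_le_mul_left 4 (Nat.pow_le_pow_right hp.pos (Nat.add_le_add_right hli l))

lemma sq_card_sqrtsMod_prime_pow_le (hp : p.Prime) (hp3 : 3 < p) (k : ℕ) (a : ℤ) :
    (sqrtsMod (p ^ k) a).card ^ 2 ≤ p ^ k := by
  obtain ⟨j, rfl | rfl⟩ := Nat.even_or_odd' k
  · calc (sqrtsMod (p ^ (2 * j)) a).card ^ 2
        ≤ (p ^ j) ^ 2 :=
          Nat.pow_le_pow_left (card_sqrtsMod_prime_pow_two_mul_le hp (by omega) j a) 2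
      _ = p ^ (2 * j) := by rw [← pow_mul, mul_comm]
  · have hexp : 2 * j + 1 = (j + 1) + j := by ring
    calc (sqrtsMod (p ^ (2 * j + 1)) a).card ^ 2
        ≤ (2 * p ^ j) ^ 2 := by
          rw [hexp]
          exact Nat.pow_le_pow_left (card_sqrtsMod_prime_pow_add_le hp le_rfl a) 2
      _ = 4 * p ^ (2 * j) := by ring
      _ ≤ p * p ^ (2 * j) := Nat.mul_le_mul_right _ hp3
      _ = p ^ (2 * j + 1) := (pow_succ' p (2 * j)).symm

lemma sq_card_sqrtsMod_mul_le {B C : ℕ} (hmn : m.Coprime n)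
    (hm : (sqrtsMod m a).card ^ 2 ≤ B) (hn : (sqrtsMod n a).card ^ 2 ≤ C) :
    (sqrtsMod (m * n) a).card ^ 2 ≤ B * C :=
  calc (sqrtsMod (m * n) a).card ^ 2
      ≤ ((sqrtsMod m a).card * (sqrtsMod n a).card) ^ 2 :=
        Nat.pow_le_pow_left (card_sqrtsMod_mul_le hmn a) 2
    _ = (sqrtsMod m a).card ^ 2 * (sqrtsMod n a).card ^ 2 := mul_pow _ _ 2
    _ ≤ B * C := Nat.mul_le_mul hm hn

lemma sq_card_sqrtsMod_le_of_coprime_six (hn : n.Coprime 6) (a : ℤ) :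
    (sqrtsMod n a).card ^ 2 ≤ n := by
  induction n using Nat.recOnPosPrimePosCoprime with
  | zero => simp [sqrtsMod]
  | one => simp [sqrtsMod]
  | prime_pow p k hp hk =>
    have hp6 : p.Coprime 6 := (Nat.coprime_pow_left_iff hk p 6).1 hn
    have hp3 : 3 < p := by
      by_contra! hle
      have := hp.two_le
      interval_cases p <;> norm_num at hp6
    exact sq_card_sqrtsMod_prime_pow_le hp hp3 k a
  | coprime x y _ _ hxy ihx ihy =>
    exact sq_card_sqrtsMod_mul_le hxy (ihx hn.coprime_mul_right) (ihy hn.coprime_mul_left)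

lemma sq_card_sqrtsMod_le (m : ℕ) (a : ℤ) : (sqrtsMod m a).card ^ 2 ≤ 16 * m := by
  rcases eq_or_ne m 0 with rfl | hm
  · simp [sqrtsMod]
  obtain ⟨i, m, h2, rfl⟩ := Nat.exists_eq_pow_mul_and_not_dvd hm 2 (by norm_num)
  obtain ⟨j, n, h3, rfl⟩ :=
    Nat.exists_eq_pow_mul_and_not_dvd (right_ne_zero_of_mul hm) 3 (by norm_num)
  have hm2 : Nat.Coprime 2 (3 ^ j * n) := Nat.prime_two.coprime_iff_not_dvd.2 h2
  have hn3 : Nat.Coprime 3 n := Nat.prime_three.coprime_iff_not_dvd.2 h3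
  have hn6 : n.Coprime 6 := (Nat.Coprime.mul_left hm2.coprime_mul_left_right hn3).symm
  calc (sqrtsMod (2 ^ i * (3 ^ j * n)) a).card ^ 2
      ≤ 4 * 2 ^ i * (4 * 3 ^ j * n) :=
        sq_card_sqrtsMod_mul_le (hm2.pow_left i)
          (sq_card_sqrtsMod_prime_pow_le_four_mul Nat.prime_two i a)
          (sq_card_sqrtsMod_mul_le (hn3.pow_left j)
            (sq_card_sqrtsMod_prime_pow_le_four_mul Nat.prime_three j a)
            (sq_card_sqrtsMod_le_of_coprime_six hn6 a))
    _ = 16 * (2 ^ i * (3 ^ j * n)) := by ring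

end sqrtsMod

/-- For every positive integer `m` and every integer `a`, the number of residues
`z` modulo `m` with `z² ≡ a (mod m)` is at most `4√m`. -/
theorem sq_congruence_solutions_le (m : ℕ) (hm : 0 < m) (a : ℤ) :
    (((Finset.range m).filter (fun z : ℕ => (m : ℤ) ∣ (z : ℤ) ^ 2 - a)).card : ℝ) ≤
      4 * Real.sqrt m := by
  change ((sqrtsMod m a).card : ℝ) ≤ 4 * √m
  calc ((sqrtsMod m a).card : ℝ)
      ≤ √(16 * m) := Real.le_sqrt_of_sq_le (by exact_mod_cast sq_card_sqrtsMod_le m a)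
    _ = 4 * √m := by
        rw [Real.sqrt_mul (by norm_num), show (16 : ℝ) = 4 ^ 2 by norm_num,
          Real.sqrt_sq (by norm_num)]
end

section
/- There is an absolute constant C such that the following holds: for all integers m and a and every real number y with 2 ≤ y ≤ m, the number N(y, m; a) of integers z with 1 ≤ z ≤ y satisfying z² ≡ a (mod m) is at most C·y^(2/3). -/
/-!
If `z` and `z + h` both solve `z² ≡ a (mod m)`, then `m` divides their difference of squares
`h (2 z + h)`, and the quotient `h (2 z + h) / m` determines `z`. When `z + h ≤ Y ≤ m` the quotient
is at most `2 h`, so each shift `h` is realised by at most `2 h + 1` solutions. The solutions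
with no other solution among the next `H` integers number at most `Y / (H + 1) + 1`, so
there are `O(Y / H + H²)` solutions in all, and `H = ⌊Y^(1/3)⌋` balances the two terms.
-/

open Finset

section Gaps

variable {S : Finset ℕ} {Y : ℕ}

lemma card_le_div_add_one_of_add_le {d : ℕ} (hd : 0 < d) (hY : ∀ z ∈ S, z ≤ Y)
    (hsep : ∀ u ∈ S, ∀ v ∈ S, u < v → u + d ≤ v) : #S ≤ Y / d + 1 := by
  have hmaps : Set.MapsTo (· / d) (S : Set ℕ) (range (Y / d + 1) : Finset ℕ) := fun z hz ↦
    mem_coe.2 <| mem_range_succ_iff.2 <| Nat.div_le_div_right (hY z hz)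
  have hmono : StrictMonoOn (· / d) (S : Set ℕ) := fun u hu v hv huv ↦
    calc u / d < u / d + 1 := Nat.lt_succ_self _
      _ = (u + d) / d := (Nat.add_div_right u hd).symm
      _ ≤ v / d := Nat.div_le_div_right (hsep u hu v hv huv)
  simpa using card_le_card_of_injOn _ hmaps hmono.injOn

lemma card_le_div_add_sum_card_filter_add_mem (H : ℕ) (hY : ∀ z ∈ S, z ≤ Y) :
    #S ≤ Y / (H + 1) + 1 + ∑ h ∈ Icc 1 H, #{z ∈ S | z + h ∈ S} := by
  have hisolated : #{z ∈ S | ∀ h ∈ Icc 1 H, z + h ∉ S} ≤ Y / (H + 1) + 1 := by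
    refine card_le_div_add_one_of_add_le H.succ_pos (fun z hz ↦ hY z (mem_filter.1 hz).1) ?_
    intro u hu v hv huv
    by_contra! hclose
    refine (mem_filter.1 hu).2 (v - u) (mem_Icc.2 ⟨by lia, by lia⟩) ?_
    rw [Nat.add_sub_cancel' huv.le]
    exact (mem_filter.1 hv).1
  have hcover : {z ∈ S | ¬∀ h ∈ Icc 1 H, z + h ∉ S} ⊆
      (Icc 1 H).biUnion fun h ↦ {z ∈ S | z + h ∈ S} := by
    intro z hz
    simp only [mem_filter, mem_biUnion] at hz ⊢
    push Not at hz
    obtain ⟨hzS, h, hh, hzh⟩ := hz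
    exact ⟨h, hh, hzS, hzh⟩
  rw [← card_filter_add_card_filter_not (s := S) fun z ↦ ∀ h ∈ Icc 1 H, z + h ∉ S]
  exact add_le_add hisolated ((card_le_card hcover).trans card_biUnion_le)

end Gaps

lemma dvd_mul_two_mul_add_of_dvd_sq_sub {R : Type*} [CommRing R] {m a z h : R}
    (hz : m ∣ z ^ 2 - a) (hzh : m ∣ (z + h) ^ 2 - a) : m ∣ h * (2 * z + h) := by
  convert dvd_sub hzh hz using 1
  ring

section SquareCongruence

variable {m : ℕ} {a : ℤ} {S : Finset ℕ} {Y : ℕ}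

lemma card_filter_add_mem_le_of_dvd_sq_sub (hS : ∀ z ∈ S, (m : ℤ) ∣ (z : ℤ) ^ 2 - a)
    (hY : ∀ z ∈ S, z ≤ Y) {h : ℕ} (hh : 0 < h) :
    #{z ∈ S | z + h ∈ S} ≤ h * (2 * Y) / m + 1 := by
  have hdvd : ∀ z ∈ ({z ∈ S | z + h ∈ S} : Finset ℕ), m ∣ h * (2 * z + h) := by
    intro z hz
    obtain ⟨hzS, hzhS⟩ := mem_filter.1 hz
    have hzh : (m : ℤ) ∣ ((z : ℤ) + h) ^ 2 - a := mod_cast hS (z + h) hzhS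
    exact_mod_cast dvd_mul_two_mul_add_of_dvd_sq_sub (hS z hzS) hzh
  have hmaps : Set.MapsTo (fun z ↦ h * (2 * z + h) / m) ({z ∈ S | z + h ∈ S} : Finset ℕ)
      (range (h * (2 * Y) / m + 1) : Finset ℕ) := by
    intro z hz
    have hzY : 2 * z + h ≤ 2 * Y := by linarith [hY (z + h) (mem_filter.1 hz).2]
    exact mem_coe.2 <| mem_range_succ_iff.2 <| Nat.div_le_div_right <| Nat.mul_le_mul_left h hzY
  have hinj : Set.InjOn (fun z ↦ h * (2 * z + h) / m) ({z ∈ S | z + h ∈ S} : Finset ℕ) := by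
    intro u hu v hv huv
    have hprod := (Nat.div_left_inj (hdvd u hu) (hdvd v hv)).1 huv
    have := Nat.eq_of_mul_eq_mul_left hh hprod
    lia
  simpa using card_le_card_of_injOn _ hmaps hinj

lemma card_le_of_dvd_sq_sub (hS : ∀ z ∈ S, (m : ℤ) ∣ (z : ℤ) ^ 2 - a) (hY : ∀ z ∈ S, z ≤ Y)
    (H : ℕ) : #S ≤ Y / (H + 1) + 1 + H * (H * (2 * Y) / m + 1) := by
  refine (card_le_div_add_sum_card_filter_add_mem H hY).trans (Nat.add_le_add_left ?_ _)
  calc ∑ h ∈ Icc 1 H, #{z ∈ S | z + h ∈ S}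
      ≤ ∑ _h ∈ Icc 1 H, (H * (2 * Y) / m + 1) := sum_le_sum fun h hh ↦ by
        obtain ⟨hpos, hle⟩ := mem_Icc.1 hh
        exact (card_filter_add_mem_le_of_dvd_sq_sub hS hY hpos).trans (by gcongr)
    _ = H * (H * (2 * Y) / m + 1) := by simp

lemma card_le_of_dvd_sq_sub_of_le (hS : ∀ z ∈ S, (m : ℤ) ∣ (z : ℤ) ^ 2 - a)
    (hY : ∀ z ∈ S, z ≤ Y) (hYm : Y ≤ m) (H : ℕ) :
    #S ≤ Y / (H + 1) + 1 + H * (2 * H + 1) := by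
  have hquot : H * (2 * Y) / m ≤ 2 * H := Nat.div_le_of_le_mul <|
    calc H * (2 * Y) ≤ H * (2 * m) := by gcongr
      _ = m * (2 * H) := by ring
  exact (card_le_of_dvd_sq_sub hS hY H).trans (by gcongr)

end SquareCongruence

lemma floor_pow_three_div_add_le {x : ℝ} (hx : 1 ≤ x) :
    ((⌊x ^ 3⌋₊ / (⌊x⌋₊ + 1) + 1 + ⌊x⌋₊ * (2 * ⌊x⌋₊ + 1) : ℕ) : ℝ) ≤ 5 * x ^ 2 := by
  have hx0 : 0 < x := by linarith
  have hfloor : (⌊x⌋₊ : ℝ) ≤ x := Nat.floor_le hx0.le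
  have hdiv : ((⌊x ^ 3⌋₊ / (⌊x⌋₊ + 1) : ℕ) : ℝ) ≤ x ^ 2 :=
    calc ((⌊x ^ 3⌋₊ / (⌊x⌋₊ + 1) : ℕ) : ℝ) ≤ ⌊x ^ 3⌋₊ / (⌊x⌋₊ + 1 : ℕ) := Nat.cast_div_le
      _ ≤ x ^ 3 / x := by
        gcongr
        · exact Nat.floor_le (by positivity)
        · exact_mod_cast (Nat.lt_floor_add_one x).le
      _ = x ^ 2 := by field_simp
  push_cast
  calc ((⌊x ^ 3⌋₊ / (⌊x⌋₊ + 1) : ℕ) : ℝ) + 1 + ⌊x⌋₊ * (2 * ⌊x⌋₊ + 1)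
      ≤ x ^ 2 + 1 + x * (2 * x + 1) := by gcongr
    _ ≤ 5 * x ^ 2 := by nlinarith

/-- There is an absolute constant `C` such that for every modulus `m`, every integer `a`
and every real `2 ≤ y ≤ m`, the number of integers `1 ≤ z ≤ y` with `z² ≡ a (mod m)` is
at most `C·y^(2/3)`. -/
theorem sq_congruence_short_interval :
    ∃ C : ℝ, ∀ (m : ℕ) (a : ℤ) (y : ℝ), 2 ≤ y → y ≤ m →
      (((Finset.Icc 1 ⌊y⌋₊).filter (fun z : ℕ => (m : ℤ) ∣ (z : ℤ) ^ 2 - a)).card : ℝ) ≤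
        C * y ^ ((2 : ℝ) / 3) := by
  refine ⟨5, fun m a y hy hym ↦ ?_⟩
  have hy0 : 0 ≤ y := by linarith
  obtain ⟨x, hx, rfl⟩ : ∃ x : ℝ, 1 ≤ x ∧ x ^ 3 = y :=
    ⟨y ^ ((1 : ℝ) / 3), Real.one_le_rpow (by linarith) (by norm_num), by
      rw [← Real.rpow_mul_natCast hy0]; norm_num⟩
  have hpow : (x ^ 3) ^ ((2 : ℝ) / 3) = x ^ 2 := by
    rw [← Real.rpow_natCast_mul (by linarith)]; norm_num
  have hcard := card_le_of_dvd_sq_sub_of_le (S := {z ∈ Icc 1 ⌊x ^ 3⌋₊ | (m : ℤ) ∣ (z : ℤ) ^ 2 - a})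
    (fun z hz ↦ (mem_filter.1 hz).2) (fun z hz ↦ (mem_Icc.1 (mem_filter.1 hz).1).2)
    (Nat.floor_le_of_le hym) ⌊x⌋₊
  rw [hpow]
  exact (Nat.cast_le.2 hcard).trans (floor_pow_three_div_add_le hx)
end
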